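/- arXiv:alg-geom/9510002 — 8 statements merged into one kernel-verified Lean document; each statement's English description precedes it below -/
import Mathlib

section
/- Let p be a prime, t ≥ 1 and n = p^t, and let H be a subgroup of Sp(4, ℤ/nℤ) containing −1. Let ψ₀ ∈ Sp(4, ℤ/nℤ) be the involution with matrix rows (0,1,0,0), (1,0,0,0), (0,0,0,1), (0,0,1,0). If ε > 0 and the number of elements g ∈ Sp(4, ℤ/nℤ) with g·ψ₀·g⁻¹ ∈ H is at least ε·|Sp(4, ℤ/nℤ)|, then the index of H in Sp(4, ℤ/nℤ) is at most 2¹³·ε⁻²·[2¹⁷²²·ε⁻⁷⁰²]_p. -/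
/-!
Write `G = Sp(4, ℤ/p^t)`, `K_g = g⁻¹ H g`, and let `r = p ^ b` be the largest power of `p` that is
at most `16 / ε`. The hypothesis says that `ψ ∈ K_g` for a proportion at least `ε` of all `g ∈ G`.

The engine is `dense_step`. If a property holds for a proportion `δ` of `g ∈ G`, and `v s` is any
family in `G` indexed by `s ∈ ℤ/p^t`, then for a proportion at least `δ / 2` of the `g` the property
holds at `g * v s` for a proportion at least `δ / 2` of the `s` (`avg`); as soon as
`δ p^(b+1) > 4`, three of these `s` have pairwise differences dividing `r` (`select`). Passing from
`K_g` to `K_(g * v s)` is conjugation by `v s`, so for such `g` three conjugates of known elements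
lie in the single group `K_g`. This is applied three times in `exists_containsLevel`.

* With `v s = upperU s 0 0`, quotients of the conjugates of `ψ` put `upperU x 0 (-x)` in `K_g`
  for all `x ∈ (r)`.
* With `v s = leviU s`, the conjugates of these elements depend quadratically on `s`. Lagrange
  interpolation at the three parameters (`exists_weighted`) separates the coefficients, and puts the
  upper unipotent radical at level `r ^ 4` in `K_g`.
* With `v s = lowerU 0 s 0`, the conjugates of `upperU a 0 0` and `upperU 0 0 a` run in two abelian
  unipotent groups (`mixU`, `mixL`), again quadratically in `s`, and interpolation yields the
  diagonal lower root groups and the root groups of the Levi factor at level `r ^ 7`.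

Some conjugate of `H` therefore contains all root groups, and then torus elements, at level
`r ^ 14`. If `p ∣ r`, Gaussian elimination shows that it contains every `g ≡ 1 mod r ^ 14`, so the
index is at most `(r ^ 14) ^ 16 = r ^ 224`. If `r = 1`, elimination over the local ring `ℤ/p^t`
shows that `H` is the whole group. When `b ≥ t` the bound `r ^ 224` holds because the principal
congruence subgroup of level `r ^ 14` is trivial. Finally, if `p ∣ r` then
`index * p ≤ (16 / ε) ^ 225 ≤ 2 ^ 13 ε⁻² X` with `X = 2 ^ 1722 ε⁻⁷⁰²`, while `X < [X]_p p`.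
-/

open Matrix

/-- `Sp(4, ℤ/nℤ)`, acting on `(ℤ/nℤ)⁴` with coordinates indexed so that
`Sum.inl 0, Sum.inl 1, Sum.inr 0, Sum.inr 1` correspond to `x₁, x₂, x₃, x₄`. -/
abbrev Sp4 (n : ℕ) := Matrix.symplecticGroup (Fin 2) (ZMod n)

/-- `[x]_p`: the largest power `p^j ≤ x` (for `p` prime and `x ≥ 1`). -/
noncomputable def bracketP (p : ℕ) (x : ℝ) : ℝ := (p : ℝ) ^ (Nat.log p ⌊x⌋₊)

/-! ### Interpolation and averaging -/

/-- Quadratic Lagrange interpolation, with bounded denominators, for an additively closed relation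
`P`: if `P` contains the multiples by `(q)` of the vectors `(1, s, s²)` at three parameters whose
pairwise differences divide `r`, then it contains every vector with coordinates in `(q r³)`. -/
theorem exists_weighted (R : Type*) [CommRing R] (P : R → R → R → Prop)
    (hadd : ∀ a b c a' b' c', P a b c → P a' b' c' → P (a + a') (b + b') (c + c'))
    (q r s₀ s₁ s₂ : R) (h₀₁ : s₀ - s₁ ∣ r) (h₀₂ : s₀ - s₂ ∣ r) (h₁₂ : s₁ - s₂ ∣ r)
    (h₀ : ∀ w, P (q * w) (s₀ * (q * w)) (s₀ ^ 2 * (q * w)))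
    (h₁ : ∀ w, P (q * w) (s₁ * (q * w)) (s₁ ^ 2 * (q * w)))
    (h₂ : ∀ w, P (q * w) (s₂ * (q * w)) (s₂ ^ 2 * (q * w))) (a b c : R) :
    P (q * r ^ 3 * a) (q * r ^ 3 * b) (q * r ^ 3 * c) := by
  obtain ⟨u, hu⟩ : (s₀ - s₁) * (s₀ - s₂) * (s₁ - s₂) ∣ r ^ 3 := by
    have := mul_dvd_mul (mul_dvd_mul h₀₁ h₀₂) h₁₂
    rwa [show r * r * r = r ^ 3 by ring] at this
  have key := hadd _ _ _ _ _ _ (hadd _ _ _ _ _ _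
    (h₀ (u * (s₁ - s₂) * (c - (s₁ + s₂) * b + s₁ * s₂ * a)))
    (h₁ (-u * (s₀ - s₂) * (c - (s₀ + s₂) * b + s₀ * s₂ * a))))
    (h₂ (u * (s₀ - s₁) * (c - (s₀ + s₁) * b + s₀ * s₁ * a)))
  rw [hu]
  convert key using 1 <;> ring

/-- If `S` has density at least `δ` in `G`, then for a proportion at least `δ / 2` of the `g`, the
translate `g * v i` lies in `S` for a proportion at least `δ / 2` of the indices `i`. The reason is
that `g * v i` is uniformly distributed for each fixed `i`. -/
theorem avg {G ι : Type*} [Group G] [Fintype G] [Fintype ι] [Nonempty ι]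
    (S : G → Prop) (v : ι → G) (δ : ℝ) (hδ : 0 ≤ δ)
    (h : δ * Nat.card G ≤ Nat.card {g // S g}) :
    δ / 2 * Nat.card G ≤
      Nat.card {g // δ / 2 * Nat.card ι ≤ Nat.card {i // S (g * v i)}} := by
  classical
  have hι : (0 : ℝ) < Fintype.card ι := by exact_mod_cast Fintype.card_pos
  simp only [Nat.card_eq_fintype_card, Fintype.card_subtype] at h ⊢
  set good := Finset.univ.filter fun g : G =>
    δ / 2 * (Fintype.card ι : ℝ) ≤ ((Finset.univ.filter fun i => S (g * v i)).card : ℝ) with hgood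
  have hcount : ∀ i, ((Finset.univ.filter fun g => S (g * v i)).card : ℝ)
      = ((Finset.univ.filter fun g => S g).card : ℝ) := by
    intro i
    norm_cast
    refine Finset.card_bij (fun g _ => g * v i) (by simp) (by simp) ?_
    intro g hg
    exact ⟨g * (v i)⁻¹, by simpa using hg, by simp⟩
  have hsum : ∑ g : G, ((Finset.univ.filter fun i => S (g * v i)).card : ℝ)
      = Fintype.card ι * ((Finset.univ.filter fun g => S g).card : ℝ) := by
    have hswap : ∑ g : G, ((Finset.univ.filter fun i => S (g * v i)).card : ℝ)
        = ∑ i : ι, ((Finset.univ.filter fun g => S (g * v i)).card : ℝ) := by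
      simp only [Finset.card_filter, Nat.cast_sum]
      exact Finset.sum_comm
    rw [hswap, Finset.sum_congr rfl fun i _ => hcount i]
    simp
  have hle : ∀ g : G, ((Finset.univ.filter fun i => S (g * v i)).card : ℝ)
      ≤ (if g ∈ good then (Fintype.card ι : ℝ) else 0) + δ / 2 * Fintype.card ι := by
    intro g
    have hnn : 0 ≤ δ / 2 * Fintype.card ι := by positivity
    split_ifs with hg
    · have : ((Finset.univ.filter fun i => S (g * v i)).card : ℝ) ≤ Fintype.card ι := by
        exact_mod_cast Finset.card_le_univ _
      linarith
    · simp only [hgood, Finset.mem_filter, Finset.mem_univ, true_and, not_le] at hg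
      linarith
  have htotal := Finset.sum_le_sum fun g (_ : g ∈ Finset.univ) => hle g
  rw [hsum, Finset.sum_add_distrib] at htotal
  simp only [Finset.sum_ite_mem, Finset.univ_inter, Finset.sum_const, nsmul_eq_mul,
    Finset.card_univ] at htotal
  have hmul := mul_le_mul_of_nonneg_left h hι.le
  refine le_of_mul_le_mul_left ?_ hι
  linarith

/-- A subset of `ℤ/p^t` of density `δ > 2 / p^(b+1)` meets at least three residue classes modulo
`p^(b+1)`, and the difference of elements in distinct classes divides `p^b`. -/
theorem select (p t b : ℕ) (hp : p.Prime) (hb : b + 1 ≤ t) (δ : ℝ) (hδ : 2 < δ * (p : ℝ) ^ (b + 1))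
    (S : ZMod (p ^ t) → Prop)
    (hS : δ * Nat.card (ZMod (p ^ t)) ≤ Nat.card {s // S s}) :
    ∃ s₀ s₁ s₂, S s₀ ∧ S s₁ ∧ S s₂ ∧ s₀ - s₁ ∣ (p : ZMod (p ^ t)) ^ b ∧
      s₀ - s₂ ∣ (p : ZMod (p ^ t)) ^ b ∧ s₁ - s₂ ∣ (p : ZMod (p ^ t)) ^ b := by
  classical
  have : NeZero (p ^ t) := ⟨(pow_pos hp.pos t).ne'⟩
  set P := p ^ (b + 1) with hP
  have hPpos : 0 < P := pow_pos hp.pos _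
  have hsplit : p ^ t = p ^ (t - (b + 1)) * P := by rw [hP, ← pow_add]; congr 1; omega
  set B := Finset.univ.filter S
  simp only [Nat.card_eq_fintype_card, Fintype.card_subtype, ZMod.card] at hS
  have hdvd : ∀ x y : ZMod (p ^ t), x.val % P ≠ y.val % P → x - y ∣ (p : ZMod (p ^ t)) ^ b := by
    intro x y hxy
    set d : ℤ := (x.val : ℤ) - y.val with hd
    have hcast : ((d : ℤ) : ZMod (p ^ t)) = x - y := by simp [hd]
    obtain ⟨i, -, hi⟩ := (Nat.dvd_prime_pow hp).1
      (show Int.gcd d ((p ^ t : ℕ) : ℤ) ∣ p ^ t from by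
        exact_mod_cast Int.gcd_dvd_right d ((p ^ t : ℕ) : ℤ))
    have hib : i ≤ b := by
      by_contra hcon
      apply hxy
      have h1 : (P : ℤ) ∣ d := by
        refine dvd_trans ?_ (Int.gcd_dvd_left d ((p ^ t : ℕ) : ℤ))
        rw [hi, hP]
        exact_mod_cast pow_dvd_pow p (by omega)
      exact ((Nat.modEq_iff_dvd).2 h1).symm
    have hbez := Int.gcd_eq_gcd_ab d ((p ^ t : ℕ) : ℤ)
    have hbez' := congrArg (Int.cast : ℤ → ZMod (p ^ t)) hbez
    rw [hi] at hbez'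
    push_cast at hbez'
    have hz : (p : ZMod (p ^ t)) ^ t = 0 := by exact_mod_cast ZMod.natCast_self (p ^ t)
    rw [hz, zero_mul, add_zero, hcast] at hbez'
    exact (Dvd.intro _ hbez'.symm).trans (pow_dvd_pow _ hib)
  have hcard : B.card ≤ p ^ (t - (b + 1)) * (B.image fun x => x.val % P).card := by
    apply Finset.card_le_mul_card_image
    intro a _
    rw [← Finset.card_range (p ^ (t - (b + 1)))]
    refine Finset.card_le_card_of_injOn (fun x => x.val / P) ?_ ?_
    · intro x _
      have := ZMod.val_lt x
      simp only [Finset.coe_range, Set.mem_Iio]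
      rw [Nat.div_lt_iff_lt_mul hPpos, ← hsplit]
      exact this
    · intro x hx y hy hxy
      simp only [Finset.coe_filter, Set.mem_ofPred_eq] at hx hy
      apply ZMod.val_injective
      have h1 := Nat.div_add_mod x.val P
      have h2 := Nat.div_add_mod y.val P
      simp only at hxy
      rw [← h1, ← h2, hxy, hx.2, hy.2]
  have h3 : 2 < (B.image fun x => x.val % P).card := by
    by_contra hcon
    push Not at hcon
    have h4 : (B.card : ℝ) ≤ (p : ℝ) ^ (t - (b + 1)) * 2 := by
      have := hcard.trans (Nat.mul_le_mul_left _ hcon)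
      exact_mod_cast this
    have h5 : ((p ^ t : ℕ) : ℝ) = (p : ℝ) ^ (t - (b + 1)) * (p : ℝ) ^ (b + 1) := by
      rw [hsplit, hP]; push_cast; ring
    have hpos : (0 : ℝ) < (p : ℝ) ^ (t - (b + 1)) := pow_pos (by exact_mod_cast hp.pos) _
    rw [h5] at hS
    nlinarith [mul_lt_mul_of_pos_left hδ hpos]
  obtain ⟨a₀, m₀, a₁, m₁, a₂, m₂, n₁, n₂, n₃⟩ := Finset.two_lt_card.1 h3
  simp only [Finset.mem_image] at m₀ m₁ m₂
  obtain ⟨x, hx, rfl⟩ := m₀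
  obtain ⟨y, hy, rfl⟩ := m₁
  obtain ⟨z, hz, rfl⟩ := m₂
  refine ⟨x, y, z, (Finset.mem_filter.1 hx).2, (Finset.mem_filter.1 hy).2,
    (Finset.mem_filter.1 hz).2, hdvd _ _ n₁, hdvd _ _ n₂, hdvd _ _ n₃⟩

/-! ### Root elements of `Sp(4)` -/

section elems
variable {R : Type*} [CommRing R]

/-- The element of the unipotent radical of the Siegel parabolic whose upper right block is the
symmetric matrix with rows `(a, b)`, `(b, c)`. -/
def upperU (a b c : R) : symplecticGroup (Fin 2) R :=
  ⟨fromBlocks 1 !![a, b; b, c] 0 1, by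
    rw [SymplecticGroup.fromBlocks_mem_iff]
    refine ⟨by simp, ?_, by simp⟩
    ext i j; fin_cases i <;> fin_cases j <;> simp⟩

/-- The element of the opposite unipotent radical whose lower left block is the symmetric matrix
with rows `(a, b)`, `(b, c)`. -/
def lowerU (a b c : R) : symplecticGroup (Fin 2) R :=
  ⟨fromBlocks 1 0 !![a, b; b, c] 1, by
    rw [SymplecticGroup.fromBlocks_mem_iff]
    refine ⟨?_, by simp, by simp⟩
    ext i j; fin_cases i <;> fin_cases j <;> simp⟩

/-- The Levi element with upper left block the upper unitriangular matrix of entry `s`; its lower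
right block is the inverse transpose. -/
def leviU (s : R) : symplecticGroup (Fin 2) R :=
  ⟨fromBlocks !![1, s; 0, 1] 0 0 !![1, 0; -s, 1], by
    rw [SymplecticGroup.fromBlocks_mem_iff]
    refine ⟨by simp, by simp, ?_⟩
    ext i j; fin_cases i <;> fin_cases j <;> simp [mul_apply]⟩

/-- The Levi element with upper left block the lower unitriangular matrix of entry `s`; its lower
right block is the inverse transpose. -/
def leviL (s : R) : symplecticGroup (Fin 2) R :=
  ⟨fromBlocks !![1, 0; s, 1] 0 0 !![1, -s; 0, 1], by
    rw [SymplecticGroup.fromBlocks_mem_iff]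
    refine ⟨by simp, by simp, ?_⟩
    ext i j; fin_cases i <;> fin_cases j <;> simp [mul_apply]⟩

/-- The diagonal symplectic matrix with entries `a, d, α, β`, where `α = a⁻¹` and `β = d⁻¹` are given
explicitly. -/
def torus (a α d β : R) (ha : a * α = 1) (hd : d * β = 1) : symplecticGroup (Fin 2) R :=
  ⟨fromBlocks !![a, 0; 0, d] 0 0 !![α, 0; 0, β], by
    rw [SymplecticGroup.fromBlocks_mem_iff]
    refine ⟨by simp, by simp, ?_⟩
    ext i j; fin_cases i <;> fin_cases j <;> simp [mul_apply, ha, hd]⟩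

theorem upperU_mul (a b c a' b' c' : R) :
    upperU a b c * upperU a' b' c' = upperU (a + a') (b + b') (c + c') := by
  apply Subtype.ext
  simp [upperU, fromBlocks_multiply, add_comm]

theorem lowerU_mul (a b c a' b' c' : R) :
    lowerU a b c * lowerU a' b' c' = lowerU (a + a') (b + b') (c + c') := by
  apply Subtype.ext
  simp [lowerU, fromBlocks_multiply]

theorem upperU_inv (a b c : R) : (upperU a b c)⁻¹ = upperU (-a) (-b) (-c) := by
  rw [inv_eq_iff_mul_eq_one, upperU_mul]
  apply Subtype.ext
  simp [upperU, ← fromBlocks_one, one_fin_two]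
  ext i j; fin_cases i <;> fin_cases j <;> simp

theorem lowerU_inv (a b c : R) : (lowerU a b c)⁻¹ = lowerU (-a) (-b) (-c) := by
  rw [inv_eq_iff_mul_eq_one, lowerU_mul]
  apply Subtype.ext
  simp [lowerU, ← fromBlocks_one]
  ext i j; fin_cases i <;> fin_cases j <;> simp

theorem leviU_conj_upperU (s a b c : R) :
    leviU s * upperU a b c * (leviU s)⁻¹ =
      upperU (a + 2 * s * b + s ^ 2 * c) (b + s * c) c := by
  rw [mul_inv_eq_iff_eq_mul]
  apply Subtype.ext
  simp only [upperU, leviU, Submonoid.coe_mul, fromBlocks_multiply, fromBlocks_inj, one_fin_two]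
  refine ⟨?_, ?_, ?_, ?_⟩ <;> ext i j <;> fin_cases i <;> fin_cases j <;> simp <;> ring

theorem leviU_conj_lowerU (s a : R) :
    leviU s * lowerU a 0 0 * (leviU s)⁻¹ = lowerU a (-(s * a)) (s ^ 2 * a) := by
  rw [mul_inv_eq_iff_eq_mul]
  apply Subtype.ext
  simp only [lowerU, leviU, Submonoid.coe_mul, fromBlocks_multiply, fromBlocks_inj, one_fin_two]
  refine ⟨?_, ?_, ?_, ?_⟩ <;> ext i j <;> fin_cases i <;> fin_cases j <;> simp <;> ring

/-- An abelian three-parameter unipotent group containing the conjugates of `upperU a 0 0` by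
`lowerU 0 s 0`. -/
def mixU (a b c : R) : symplecticGroup (Fin 2) R := upperU a 0 0 * leviU b * lowerU 0 0 c

/-- An abelian three-parameter unipotent group containing the conjugates of `upperU 0 0 a` by
`lowerU 0 s 0`. -/
def mixL (a b c : R) : symplecticGroup (Fin 2) R := upperU 0 0 a * leviL b * lowerU c 0 0

theorem mixU_mul (a b c a' b' c' : R) :
    mixU a b c * mixU a' b' c' = mixU (a + a') (b + b') (c + c') := by
  apply Subtype.ext
  simp only [mixU, lowerU, upperU, leviU, Submonoid.coe_mul, fromBlocks_multiply, fromBlocks_inj,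
    one_fin_two]
  refine ⟨?_, ?_, ?_, ?_⟩ <;> ext i j <;> fin_cases i <;> fin_cases j <;> simp <;> ring

theorem mixL_mul (a b c a' b' c' : R) :
    mixL a b c * mixL a' b' c' = mixL (a + a') (b + b') (c + c') := by
  apply Subtype.ext
  simp only [mixL, lowerU, upperU, leviL, Submonoid.coe_mul, fromBlocks_multiply, fromBlocks_inj,
    one_fin_two]
  refine ⟨?_, ?_, ?_, ?_⟩ <;> ext i j <;> fin_cases i <;> fin_cases j <;> simp <;> ring

theorem mixU_zero_zero (c : R) : mixU 0 0 c = lowerU 0 0 c := by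
  apply Subtype.ext
  simp only [mixU, lowerU, upperU, leviU, Submonoid.coe_mul, fromBlocks_multiply, fromBlocks_inj,
    one_fin_two]
  refine ⟨?_, ?_, ?_, ?_⟩ <;> ext i j <;> fin_cases i <;> fin_cases j <;> simp

theorem mixU_zero_right (b : R) : mixU 0 b 0 = leviU b := by
  apply Subtype.ext
  simp only [mixU, lowerU, upperU, leviU, Submonoid.coe_mul, fromBlocks_multiply, fromBlocks_inj,
    one_fin_two]
  refine ⟨?_, ?_, ?_, ?_⟩ <;> ext i j <;> fin_cases i <;> fin_cases j <;> simp

theorem mixL_zero_zero (c : R) : mixL 0 0 c = lowerU c 0 0 := by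
  apply Subtype.ext
  simp only [mixL, lowerU, upperU, leviL, Submonoid.coe_mul, fromBlocks_multiply, fromBlocks_inj,
    one_fin_two]
  refine ⟨?_, ?_, ?_, ?_⟩ <;> ext i j <;> fin_cases i <;> fin_cases j <;> simp

theorem mixL_zero_right (b : R) : mixL 0 b 0 = leviL b := by
  apply Subtype.ext
  simp only [mixL, lowerU, upperU, leviL, Submonoid.coe_mul, fromBlocks_multiply, fromBlocks_inj,
    one_fin_two]
  refine ⟨?_, ?_, ?_, ?_⟩ <;> ext i j <;> fin_cases i <;> fin_cases j <;> simp

theorem lowerU_conj_upperU₁ (s a : R) :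
    lowerU 0 s 0 * upperU a 0 0 * (lowerU 0 s 0)⁻¹ = mixU a (-(s * a)) (-(s ^ 2 * a)) := by
  rw [mul_inv_eq_iff_eq_mul]
  apply Subtype.ext
  simp only [mixU, lowerU, upperU, leviU, Submonoid.coe_mul, fromBlocks_multiply, fromBlocks_inj,
    one_fin_two]
  refine ⟨?_, ?_, ?_, ?_⟩ <;> ext i j <;> fin_cases i <;> fin_cases j <;> simp <;> ring

theorem lowerU_conj_upperU₂ (s a : R) :
    lowerU 0 s 0 * upperU 0 0 a * (lowerU 0 s 0)⁻¹ = mixL a (-(s * a)) (-(s ^ 2 * a)) := by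
  rw [mul_inv_eq_iff_eq_mul]
  apply Subtype.ext
  simp only [mixL, lowerU, upperU, leviL, Submonoid.coe_mul, fromBlocks_multiply, fromBlocks_inj,
    one_fin_two]
  refine ⟨?_, ?_, ?_, ?_⟩ <;> ext i j <;> fin_cases i <;> fin_cases j <;> simp <;> ring

/-- Conjugating the coordinate swap `ψ` by `upperU s 0 0` multiplies it by a commutator in the
unipotent radical. -/
theorem upperU_conj_swap (ψ : symplecticGroup (Fin 2) R)
    (hψ : (ψ : Matrix (Fin 2 ⊕ Fin 2) (Fin 2 ⊕ Fin 2) R) =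
      fromBlocks !![0, 1; 1, 0] 0 0 !![0, 1; 1, 0]) (s : R) :
    upperU s 0 0 * ψ * (upperU s 0 0)⁻¹ = upperU s 0 (-s) * ψ := by
  rw [mul_inv_eq_iff_eq_mul]
  apply Subtype.ext
  simp only [upperU, Submonoid.coe_mul, hψ, fromBlocks_multiply, fromBlocks_inj,
    one_fin_two]
  refine ⟨?_, ?_, ?_, ?_⟩ <;> ext i j <;> fin_cases i <;> fin_cases j <;> simp

/-- A diagonal element of the first `SL₂` as a product of four root elements; the parameters `x`
and `z` are free subject to `a = 1 + x z`. -/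
theorem torus₁_eq (a α x z : R) (h : a * α = 1) (hz : a = 1 + x * z) :
    torus a α 1 1 h (mul_one 1) =
      lowerU (-(z * α)) 0 0 * upperU x 0 0 * lowerU z 0 0 * upperU (-(x * α)) 0 0 := by
  subst hz
  apply Subtype.ext
  simp only [torus, lowerU, upperU, Submonoid.coe_mul, fromBlocks_multiply, fromBlocks_inj,
    one_fin_two]
  refine ⟨?_, ?_, ?_, ?_⟩ <;> ext i j <;> fin_cases i <;> fin_cases j <;> simp <;> grind

/-- The analogue of `torus₁_eq` for the second `SL₂`. -/
theorem torus₂_eq (a α x z : R) (h : a * α = 1) (hz : a = 1 + x * z) :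
    torus 1 1 a α (mul_one 1) h =
      lowerU 0 0 (-(z * α)) * upperU 0 0 x * lowerU 0 0 z * upperU 0 0 (-(x * α)) := by
  subst hz
  apply Subtype.ext
  simp only [torus, lowerU, upperU, Submonoid.coe_mul, fromBlocks_multiply, fromBlocks_inj,
    one_fin_two]
  refine ⟨?_, ?_, ?_, ?_⟩ <;> ext i j <;> fin_cases i <;> fin_cases j <;> simp <;> grind

/-! ### Subgroups containing deep root elements -/

/-- `K` contains the upper unipotent radical at level `r ^ 4`, and the diagonal lower root groups and
both root groups of the Levi factor at level `r ^ 7`. -/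
structure ContainsLevel (K : Subgroup (symplecticGroup (Fin 2) R)) (r : R) : Prop where
  upper : ∀ a b c, upperU (r ^ 4 * a) (r ^ 4 * b) (r ^ 4 * c) ∈ K
  lower₁ : ∀ a, lowerU (r ^ 7 * a) 0 0 ∈ K
  lower₂ : ∀ a, lowerU 0 0 (r ^ 7 * a) ∈ K
  leviUpper : ∀ a, leviU (r ^ 7 * a) ∈ K
  leviLower : ∀ a, leviL (r ^ 7 * a) ∈ K

namespace ContainsLevel
variable {K : Subgroup (symplecticGroup (Fin 2) R)} {r : R}

/-- The remaining lower root group arises at level `r ^ 14 = r ^ 7 * r ^ 7` from conjugating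
`lowerU a 0 0` by `leviU`. -/
theorem lower (hK : ContainsLevel K r) (a b c : R) :
    lowerU (r ^ 14 * a) (r ^ 14 * b) (r ^ 14 * c) ∈ K := by
  have h1 : lowerU 0 (r ^ 14 * b) 0 ∈ K := by
    have h := K.mul_mem (K.mul_mem (hK.leviUpper (-b)) (hK.lower₁ 1))
      (K.inv_mem (hK.leviUpper (-b)))
    rw [leviU_conj_lowerU] at h
    have h' := K.mul_mem (K.mul_mem h (hK.lower₁ (-1))) (hK.lower₂ (-(r ^ 14 * b ^ 2)))
    rw [lowerU_mul, lowerU_mul] at h'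
    convert h' using 2 <;> ring
  have h' := K.mul_mem (K.mul_mem h1 (hK.lower₁ (r ^ 7 * a))) (hK.lower₂ (r ^ 7 * c))
  rw [lowerU_mul, lowerU_mul] at h'
  convert h' using 2 <;> ring

theorem torus_mem (hK : ContainsLevel K r) (a α d β x y : R) (ha : a * α = 1) (hd : d * β = 1)
    (hx : a = 1 + r ^ 14 * x) (hy : d = 1 + r ^ 14 * y) : torus a α d β ha hd ∈ K := by
  have hmul : torus a α d β ha hd =
      torus a α 1 1 ha (mul_one 1) * torus 1 1 d β (mul_one 1) hd := by
    apply Subtype.ext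
    simp only [torus, Submonoid.coe_mul, fromBlocks_multiply, fromBlocks_inj]
    refine ⟨?_, ?_, ?_, ?_⟩ <;> ext i j <;> fin_cases i <;> fin_cases j <;> simp
  have hup₁ : ∀ z, upperU (r ^ 4 * z) 0 0 ∈ K := fun z => by simpa using hK.upper z 0 0
  have hup₂ : ∀ z, upperU 0 0 (r ^ 4 * z) ∈ K := fun z => by simpa using hK.upper 0 0 z
  rw [hmul]
  refine K.mul_mem ?_ ?_
  · rw [torus₁_eq a α (r ^ 4) (r ^ 7 * (r ^ 3 * x)) ha (by rw [hx]; ring)]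
    refine K.mul_mem (K.mul_mem (K.mul_mem ?_ ?_) (hK.lower₁ _)) ?_
    · convert hK.lower₁ (-(r ^ 3 * x * α)) using 2; ring
    · convert hup₁ 1 using 2; ring
    · convert hup₁ (-α) using 2; ring
  · rw [torus₂_eq d β (r ^ 4) (r ^ 7 * (r ^ 3 * y)) hd (by rw [hy]; ring)]
    refine K.mul_mem (K.mul_mem (K.mul_mem ?_ ?_) (hK.lower₂ _)) ?_
    · convert hK.lower₂ (-(r ^ 3 * y * β)) using 2; ring
    · convert hup₂ 1 using 2; ring
    · convert hup₂ (-β) using 2; ring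

/-- A symplectic matrix with upper left block `1` is a product of a lower and an upper unipotent
element. -/
theorem mem_of_block_one (hK : ContainsLevel K r) (g : symplecticGroup (Fin 2) R)
    (B C D : Matrix (Fin 2) (Fin 2) R)
    (hg : (g : Matrix (Fin 2 ⊕ Fin 2) (Fin 2 ⊕ Fin 2) R)
      = fromBlocks 1 (r ^ 14 • B) (r ^ 14 • C) D) : g ∈ K := by
  have hmem := g.2
  rw [hg] at hmem
  obtain ⟨hC, -, hD⟩ := SymplecticGroup.fromBlocks_mem_iff.1 hmem
  have hmem' := SymplecticGroup.transpose_mem hmem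
  rw [fromBlocks_transpose] at hmem'
  obtain ⟨hB, -, -⟩ := SymplecticGroup.fromBlocks_mem_iff.1 hmem'
  have hC' := congrFun (congrFun hC 0) 1
  have hB' := congrFun (congrFun hB 0) 1
  simp at hC' hB'
  have hfac : g = lowerU (r ^ 14 * C 0 0) (r ^ 14 * C 0 1) (r ^ 14 * C 1 1) *
      upperU (r ^ 4 * (r ^ 10 * B 0 0)) (r ^ 4 * (r ^ 10 * B 0 1)) (r ^ 4 * (r ^ 10 * B 1 1)) := by
    have hD' : D = 1 + (r ^ 14 • C)ᵀ * (r ^ 14 • B) := by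
      rw [← hD]; simp
    apply Subtype.ext
    rw [hg, hD']
    simp only [lowerU, upperU, Submonoid.coe_mul, fromBlocks_multiply, fromBlocks_inj,
      one_fin_two]
    refine ⟨?_, ?_, ?_, ?_⟩ <;> ext i j <;> fin_cases i <;> fin_cases j <;>
      simp [mul_apply] <;> grind
  rw [hfac]
  exact K.mul_mem (hK.lower _ _ _) (hK.upper _ _ _)

/-- Gaussian elimination on the upper left block: if that block is `≡ 1` and the off-diagonal blocks
are `≡ 0` modulo `r ^ 14`, and the leading entry and the determinant of that block are units, then
Levi and torus elements of `K` reduce `g` to the case of `mem_of_block_one`. For `r = 1` the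
congruences say nothing. -/
theorem mem_of_isUnit (hK : ContainsLevel K r) (g : symplecticGroup (Fin 2) R)
    (a b c d : R) (B C D : Matrix (Fin 2) (Fin 2) R)
    (hg : (g : Matrix (Fin 2 ⊕ Fin 2) (Fin 2 ⊕ Fin 2) R)
      = fromBlocks !![1 + r ^ 14 * a, r ^ 14 * b; r ^ 14 * c, 1 + r ^ 14 * d]
        (r ^ 14 • B) (r ^ 14 • C) D)
    (ha : IsUnit (1 + r ^ 14 * a))
    (hdet : IsUnit ((1 + r ^ 14 * a) * (1 + r ^ 14 * d) - r ^ 14 * b * (r ^ 14 * c))) :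
    g ∈ K := by
  obtain ⟨α, hα⟩ := ha.exists_right_inv
  obtain ⟨η, hη⟩ := hdet.exists_right_inv
  -- the pivots of the upper left block are `1 + r ^ 14 * a` and `e`, with inverses `α` and `β`
  obtain ⟨e, he⟩ : ∃ e, e = 1 + r ^ 14 * (d - r ^ 14 * (b * c * α)) := ⟨_, rfl⟩
  obtain ⟨β, hβ⟩ : ∃ β, β = η * (1 + r ^ 14 * a) := ⟨_, rfl⟩
  have heβ : e * β = 1 := by
    rw [he, hβ]; linear_combination hη - r ^ 28 * b * c * η * hα
  have ht : torus α (1 + r ^ 14 * a) β e (by rw [mul_comm, hα]) (by rw [mul_comm, heβ]) ∈ K :=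
    hK.torus_mem _ _ _ _ (-(α * a)) (-(β * (d - r ^ 14 * (b * c * α)))) _ _
      (by linear_combination hα) (by linear_combination heβ - β * he)
  have hL : leviL (r ^ 7 * (-(r ^ 7 * c * α))) ∈ K := hK.leviLower _
  have hU : leviU (r ^ 7 * (-(r ^ 7 * b * α))) ∈ K := hK.leviUpper _
  rw [← K.mul_mem_cancel_left hL, ← K.mul_mem_cancel_left ht, ← K.mul_mem_cancel_right hU]
  refine hK.mem_of_block_one _ (!![α, 0; 0, β] * !![1, 0; r ^ 7 * (-(r ^ 7 * c * α)), 1] * B *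
    !![1, 0; -(r ^ 7 * (-(r ^ 7 * b * α))), 1])
    (!![1 + r ^ 14 * a, 0; 0, e] * !![1, -(r ^ 7 * (-(r ^ 7 * c * α))); 0, 1] * C *
    !![1, r ^ 7 * (-(r ^ 7 * b * α)); 0, 1])
    (!![1 + r ^ 14 * a, 0; 0, e] * !![1, -(r ^ 7 * (-(r ^ 7 * c * α))); 0, 1] * D *
    !![1, 0; -(r ^ 7 * (-(r ^ 7 * b * α))), 1]) ?_
  simp only [Submonoid.coe_mul, hg, torus, leviL, leviU, fromBlocks_multiply, fromBlocks_inj,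
    Matrix.mul_zero, Matrix.zero_mul, add_zero, zero_add, Matrix.mul_smul, Matrix.smul_mul,
    Matrix.mul_assoc, smul_zero, and_true]
  ext i j; fin_cases i <;> fin_cases j <;> simp [mul_apply, Fin.sum_univ_two] <;> grind

/-- Over a local ring the elements of level `1` generate everything. By `mem_of_isUnit` it suffices
to make the upper left block `A` of `g` invertible by left multiplication with some upper unipotent,
which replaces `A` by `A + T C` with `T` symmetric. If `det (A + T C)` were never a unit, all `2 × 2`
minors of the first two columns of `g` would lie in the maximal ideal, which contradicts `Aᵀ D - Cᵀ B = 1`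
by the Cauchy–Binet formula. -/
theorem eq_top [IsLocalRing R] (hK : ContainsLevel K 1) : K = ⊤ := by
  rw [eq_top_iff]
  rintro g -
  have hup : ∀ a b c, upperU a b c ∈ K := fun a b c => by simpa using hK.upper a b c
  have hle : ∀ a, leviU a ∈ K := fun a => by simpa using hK.leviUpper a
  -- elements whose upper left block is invertible
  have step : ∀ (g : symplecticGroup (Fin 2) R) (a b c d : R) (B C D : Matrix (Fin 2) (Fin 2) R),
      (g : Matrix (Fin 2 ⊕ Fin 2) (Fin 2 ⊕ Fin 2) R) = fromBlocks !![a, b; c, d] B C D →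
      IsUnit (a * d - b * c) → g ∈ K := by
    have step' : ∀ (g : symplecticGroup (Fin 2) R) (a b c d : R)
        (B C D : Matrix (Fin 2) (Fin 2) R),
        (g : Matrix (Fin 2 ⊕ Fin 2) (Fin 2 ⊕ Fin 2) R) = fromBlocks !![a, b; c, d] B C D →
        IsUnit a → IsUnit (a * d - b * c) → g ∈ K := by
      intro g a b c d B C D hg ha hdet
      refine hK.mem_of_isUnit g (a - 1) b c (d - 1) B C D ?_ ?_ ?_
      · simpa using hg
      · simpa using ha
      · simpa using hdet
    intro g a b c d B C D hg hdet
    by_cases ha : IsUnit a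
    · exact step' g a b c d B C D hg ha hdet
    · have hc : IsUnit c := by
        by_contra hc
        refine (IsLocalRing.mem_maximalIdeal _).1 ?_ hdet
        exact sub_mem (Ideal.mul_mem_right _ _ ((IsLocalRing.mem_maximalIdeal _).2 ha))
          (Ideal.mul_mem_left _ _ ((IsLocalRing.mem_maximalIdeal _).2 hc))
      have hac : IsUnit (a + c) := by
        by_contra hac
        refine (IsLocalRing.mem_maximalIdeal _).1 ?_ hc
        rw [← add_sub_cancel_left a c]
        exact sub_mem ((IsLocalRing.mem_maximalIdeal _).2 hac)
          ((IsLocalRing.mem_maximalIdeal _).2 ha)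
      rw [← K.mul_mem_cancel_left (hle 1)]
      refine step' _ (a + c) (b + d) c d (!![1, 1; 0, 1] * B) (!![1, 0; -1, 1] * C)
        (!![1, 0; -1, 1] * D) ?_ hac (by convert hdet using 1; ring)
      simp [leviU, hg, fromBlocks_multiply]
  obtain ⟨a, b, c, d, hA⟩ : ∃ a b c d, (g.1.toBlocks₁₁) = !![a, b; c, d] :=
    ⟨_, _, _, _, eta_fin_two _⟩
  obtain ⟨x, y, z, w, hC⟩ : ∃ a b c d, (g.1.toBlocks₂₁) = !![a, b; c, d] :=
    ⟨_, _, _, _, eta_fin_two _⟩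
  obtain ⟨b₁, b₂, b₃, b₄, hB⟩ : ∃ a b c d, (g.1.toBlocks₁₂) = !![a, b; c, d] :=
    ⟨_, _, _, _, eta_fin_two _⟩
  obtain ⟨d₁, d₂, d₃, d₄, hD⟩ : ∃ a b c d, (g.1.toBlocks₂₂) = !![a, b; c, d] :=
    ⟨_, _, _, _, eta_fin_two _⟩
  have hg := (fromBlocks_toBlocks g.1).symm
  rw [hA, hB, hC, hD] at hg
  have hmem := g.2
  rw [hg] at hmem
  obtain ⟨hAC, -, hAD⟩ := SymplecticGroup.fromBlocks_mem_iff.1 hmem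
  have hsymm := congrFun (congrFun hAC 0) 1
  have e₁ := congrFun (congrFun hAD 0) 0
  have e₂ := congrFun (congrFun hAD 0) 1
  have e₃ := congrFun (congrFun hAD 1) 0
  have e₄ := congrFun (congrFun hAD 1) 1
  simp [mul_apply] at hsymm e₁ e₂ e₃ e₄
  by_contra hgK
  -- `det (A + T * C)` lies in the maximal ideal for every symmetric `T`
  have hbad : ∀ u v s, (a + (u * x + v * z)) * (d + (v * y + s * w)) -
      (b + (u * y + v * w)) * (c + (v * x + s * z)) ∈ IsLocalRing.maximalIdeal R := by
    intro u v s
    rw [IsLocalRing.mem_maximalIdeal]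
    intro hunit
    apply hgK
    rw [← K.mul_mem_cancel_left (hup u v s)]
    refine step _ _ _ _ _ (!![b₁, b₂; b₃, b₄] + !![u, v; v, s] * !![d₁, d₂; d₃, d₄])
      !![x, y; z, w] !![d₁, d₂; d₃, d₄] ?_ hunit
    rw [Submonoid.coe_mul, hg]
    simp [upperU, fromBlocks_multiply]
  have h0 := hbad 0 0 0
  have h1 := hbad 1 0 0
  have h2 := hbad 0 0 1
  have h3 := hbad 0 1 0
  have h4 := hbad 1 1 1
  set I := IsLocalRing.maximalIdeal R
  have hdetA : a * d - b * c ∈ I := by simpa using h0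
  have hN₁ : x * d - y * c ∈ I := by
    convert sub_mem h1 h0 using 1; ring
  have hN₂ : a * w - b * z ∈ I := by
    convert sub_mem h2 h0 using 1; ring
  have hdetC : x * w - y * z ∈ I := by
    have := sub_mem (sub_mem (sub_mem h4 hN₁) hN₂) h3
    convert this using 1; ring
  -- the minor `a y - b x` is not seen linearly, but by the Plücker relation and the symmetry of
  -- `Aᵀ C` its square is in the ideal
  have hN₃ : a * y - b * x ∈ I := by
    refine (IsLocalRing.maximalIdeal.isMaximal R).isPrime.mem_of_pow_mem 2 ?_
    have := sub_mem (Ideal.mul_mem_left I (x * d - y * c) hN₂)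
      (Ideal.mul_mem_left I (x * w - y * z) hdetA)
    convert this using 1
    linear_combination (a * y - b * x) * hsymm
  -- Cauchy–Binet: `1 = det (Aᵀ D - Cᵀ B)` is a combination of the minors
  have hone : (1 : R) ∈ I := by
    have hcw : c * w - d * z ∈ I := by
      have : c * w - d * z = -(a * y - b * x) := by linear_combination hsymm
      rw [this]; exact neg_mem hN₃
    have := sub_mem (add_mem (add_mem (Ideal.mul_mem_right (d₁ * d₄ - d₂ * d₃) I hdetA)
      (Ideal.mul_mem_right (b₁ * b₄ - b₂ * b₃) I hdetC))
      (Ideal.mul_mem_right (d₃ * b₂ - d₄ * b₁) I hN₁))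
      (add_mem (add_mem (Ideal.mul_mem_right (d₁ * b₂ - d₂ * b₁) I hN₃)
      (Ideal.mul_mem_right (d₁ * b₄ - d₂ * b₃) I hN₂))
      (Ideal.mul_mem_right (d₃ * b₄ - d₄ * b₃) I hcw))
    convert this using 1
    linear_combination -(e₄ * 1) - (b * d₂ + d * d₄ - (y * b₂ + w * b₄)) * e₁
      + (b * d₁ + d * d₃ - (y * b₁ + w * b₃)) * e₂
  exact (IsLocalRing.maximalIdeal.isMaximal R).ne_top ((Ideal.eq_top_iff_one _).2 hone)

end ContainsLevel
end elems

/-! ### The three averaging steps -/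

theorem isLocalRing_zmod_prime_pow (p t : ℕ) (hp : p.Prime) (ht : 1 ≤ t) :
    IsLocalRing (ZMod (p ^ t)) := by
  have : Fact (1 < p ^ t) := ⟨Nat.one_lt_pow (by omega) hp.one_lt⟩
  have : NeZero (p ^ t) := ⟨(pow_pos hp.pos t).ne'⟩
  have hunit : ∀ a : ZMod (p ^ t), ¬ IsUnit a → (p : ZMod (p ^ t)) ∣ a := by
    intro a ha
    rw [← ZMod.natCast_zmod_val a, ZMod.isUnit_iff_coprime] at ha
    rw [← ZMod.natCast_zmod_val a]
    refine Nat.cast_dvd_cast ?_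
    by_contra hcon
    exact ha (Nat.Coprime.pow_right _ ((hp.coprime_iff_not_dvd.2 hcon).symm))
  refine IsLocalRing.of_nonunits_add ?_
  intro a b ha hb hab
  have hdvd : (p : ZMod (p ^ t)) ∣ 1 :=
    (dvd_add (hunit a ha) (hunit b hb)).trans hab.dvd
  have hpu := isUnit_of_dvd_one hdvd
  rw [ZMod.isUnit_iff_coprime] at hpu
  have := Nat.Coprime.eq_one_of_dvd hpu (dvd_pow_self p (by omega))
  exact hp.one_lt.ne' this

/-- If the density of `S` is at least `δ > 4 / p^(b+1)`, and `S' g` follows whenever `S (g * v s)`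
holds at three parameters `s` with pairwise differences dividing `p^b`, then the density of `S'` is
at least `δ / 2`. -/
theorem dense_step {G : Type*} [Group G] [Fintype G] (p t b : ℕ) (hp : p.Prime) (hb : b + 1 ≤ t)
    (δ : ℝ) (hδ : 0 ≤ δ) (hδp : 4 < δ * (p : ℝ) ^ (b + 1))
    (S S' : G → Prop) (v : ZMod (p ^ t) → G)
    (h : δ * Nat.card G ≤ Nat.card {g // S g})
    (hstep : ∀ g s₀ s₁ s₂, S (g * v s₀) → S (g * v s₁) → S (g * v s₂) →
      s₀ - s₁ ∣ (p : ZMod (p ^ t)) ^ b → s₀ - s₂ ∣ (p : ZMod (p ^ t)) ^ b →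
      s₁ - s₂ ∣ (p : ZMod (p ^ t)) ^ b → S' g) :
    δ / 2 * Nat.card G ≤ Nat.card {g // S' g} := by
  have : NeZero (p ^ t) := ⟨(pow_pos hp.pos t).ne'⟩
  refine (avg S v δ hδ h).trans ?_
  have himp : ∀ g, δ / 2 * Nat.card (ZMod (p ^ t)) ≤ Nat.card {s // S (g * v s)} → S' g := by
    intro g hg
    obtain ⟨s₀, s₁, s₂, h₀, h₁, h₂, d₀₁, d₀₂, d₁₂⟩ :=
      select p t b hp hb (δ / 2) (by linarith) (fun s => S (g * v s)) hg
    exact hstep g s₀ s₁ s₂ h₀ h₁ h₂ d₀₁ d₀₂ d₁₂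
  exact_mod_cast Nat.card_le_card_of_injective _ (Subtype.impEmbedding _ _ himp).injective

/-- The conjugate `g⁻¹ H g`. -/
def conjSubgroup {G : Type*} [Group G] (H : Subgroup G) (g : G) : Subgroup G :=
  H.comap (MulAut.conj g).toMonoidHom

theorem mem_conjSubgroup {G : Type*} [Group G] {H : Subgroup G} {g x : G} :
    x ∈ conjSubgroup H g ↔ g * x * g⁻¹ ∈ H := Iff.rfl

theorem mem_conjSubgroup_mul {G : Type*} [Group G] {H : Subgroup G} {g v x : G} :
    x ∈ conjSubgroup H (g * v) ↔ v * x * v⁻¹ ∈ conjSubgroup H g := by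
  simp only [mem_conjSubgroup, _root_.mul_inv_rev, mul_assoc]

theorem index_conjSubgroup {G : Type*} [Group G] (H : Subgroup G) (g : G) :
    (conjSubgroup H g).index = H.index :=
  Subgroup.index_comap_of_surjective _ (MulAut.conj g).surjective

/-- If a proportion `ε > 16 / p^(b+1)` of the conjugates of `H` contain `ψ`, then some conjugate of
`H` contains root elements of bounded level in all directions. -/
theorem exists_containsLevel (p t b : ℕ) (hp : p.Prime) (hb : b + 1 ≤ t)
    (H : Subgroup (symplecticGroup (Fin 2) (ZMod (p ^ t))))
    (ψ : symplecticGroup (Fin 2) (ZMod (p ^ t)))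
    (hψ : (ψ : Matrix (Fin 2 ⊕ Fin 2) (Fin 2 ⊕ Fin 2) (ZMod (p ^ t))) =
      Matrix.fromBlocks !![0, 1; 1, 0] 0 0 !![0, 1; 1, 0])
    (ε : ℝ) (hε : 0 < ε) (hεp : 16 < ε * (p : ℝ) ^ (b + 1))
    (hcount : ε * (Nat.card (symplecticGroup (Fin 2) (ZMod (p ^ t)))) ≤
      Nat.card {g : symplecticGroup (Fin 2) (ZMod (p ^ t)) // g * ψ * g⁻¹ ∈ H}) :
    ∃ g, ContainsLevel (conjSubgroup H g) ((p : ZMod (p ^ t)) ^ b) := by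
  have : NeZero (p ^ t) := ⟨(pow_pos hp.pos t).ne'⟩
  have : Fintype (symplecticGroup (Fin 2) (ZMod (p ^ t))) := Fintype.ofFinite _
  set r := (p : ZMod (p ^ t)) ^ b
  -- step 1: the elements `upperU x 0 (-x)`, as products of one conjugate of `ψ` with the inverse
  -- of another
  have h₁ := dense_step p t b hp hb ε hε.le (by linarith) (fun g => ψ ∈ conjSubgroup H g)
    (fun g => ∀ w, upperU (r * w) 0 (-(r * w)) ∈ conjSubgroup H g) (fun s => upperU s 0 0)
    hcount (by
      intro g s₀ s₁ s₂ m₀ m₁ _ d₀₁ _ _ w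
      rw [mem_conjSubgroup_mul, upperU_conj_swap ψ hψ] at m₀ m₁
      have hΔ : upperU (s₀ - s₁) 0 (-(s₀ - s₁)) ∈ conjSubgroup H g := by
        have := mul_mem m₀ (inv_mem m₁)
        rw [_root_.mul_inv_rev, mul_assoc, mul_inv_cancel_left, upperU_inv, upperU_mul] at this
        convert this using 2 <;> ring
      have hmul : ∀ k : ℕ, upperU ((k : ZMod (p ^ t)) * (s₀ - s₁)) 0
          (-((k : ZMod (p ^ t)) * (s₀ - s₁))) ∈ conjSubgroup H g := by
        intro k
        induction k with
        | zero =>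
          convert (conjSubgroup H g).one_mem
          apply Subtype.ext
          simp [upperU, ← fromBlocks_one]
          ext i j; fin_cases i <;> fin_cases j <;> simp
        | succ k ih =>
          have := mul_mem ih hΔ
          rw [upperU_mul] at this
          convert this using 2 <;> push_cast <;> ring
      obtain ⟨k, hk⟩ := d₀₁
      have := hmul (k * w).val
      rw [ZMod.natCast_zmod_val] at this
      change r = _ at hk
      convert this using 2 <;> rw [hk] <;> ring)
  -- step 2: the upper unipotent radical, by interpolation in the parameter of `leviU`
  have h₂ := dense_step p t b hp hb (ε / 2) (by linarith) (by linarith) _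
    (fun g => ∀ x y z, upperU (r ^ 4 * x) (r ^ 4 * y) (r ^ 4 * z) ∈ conjSubgroup H g) leviU
    h₁ (by
      intro g s₀ s₁ s₂ m₀ m₁ m₂ d₀₁ d₀₂ d₁₂ x y z
      have hconj : ∀ s, (∀ w, upperU (r * w) 0 (-(r * w)) ∈ conjSubgroup H (g * leviU s)) →
          ∀ w, upperU (r * w - s ^ 2 * (r * w)) (-(s * (r * w))) (-(r * w)) ∈
            conjSubgroup H g := by
        intro s hs w
        have := hs w
        rw [mem_conjSubgroup_mul, leviU_conj_upperU] at this
        convert this using 2 <;> ring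
      have := exists_weighted _
        (fun x y z => upperU (x - z) (-y) (-x) ∈ conjSubgroup H g)
        (by
          intro a b c a' b' c' h h'
          have := mul_mem h h'
          rw [upperU_mul] at this
          convert this using 2 <;> ring)
        r r s₀ s₁ s₂ d₀₁ d₀₂ d₁₂ (hconj _ m₀) (hconj _ m₁) (hconj _ m₂) (-z) (-y) (-z - x)
      convert this using 2 <;> ring)
  -- step 3: the lower and Levi root groups; the base point is moved to `g * lowerU 0 s₀ 0`, so that
  -- the three parameters become `0`, `s₁ - s₀`, `s₂ - s₀`
  have h₃ := dense_step p t b hp hb (ε / 2 / 2) (by linarith) (by linarith) _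
    (fun _ => ∃ g', ContainsLevel (conjSubgroup H g') r) (fun s => lowerU 0 s 0)
    h₂ (by
      intro g s₀ s₁ s₂ m₀ m₁ m₂ d₀₁ d₀₂ d₁₂
      refine ⟨g * lowerU 0 s₀ 0, ?_⟩
      set K := conjSubgroup H (g * lowerU 0 s₀ 0) with hK
      have hshift : ∀ s, (∀ x y z, upperU (r ^ 4 * x) (r ^ 4 * y) (r ^ 4 * z) ∈
          conjSubgroup H (g * lowerU 0 s 0)) → ∀ x y z, lowerU 0 (s - s₀) 0 *
            upperU (r ^ 4 * x) (r ^ 4 * y) (r ^ 4 * z) * (lowerU 0 (s - s₀) 0)⁻¹ ∈ K := by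
        intro s hs x y z
        have := hs x y z
        rw [hK, ← mem_conjSubgroup_mul, mul_assoc, lowerU_mul]
        simpa using this
      have hU : ∀ s, (∀ x y z, upperU (r ^ 4 * x) (r ^ 4 * y) (r ^ 4 * z) ∈
          conjSubgroup H (g * lowerU 0 s 0)) → ∀ w, mixU (r ^ 4 * w) (-((s - s₀) * (r ^ 4 * w)))
            (-((s - s₀) ^ 2 * (r ^ 4 * w))) ∈ K := by
        intro s hs w
        have := hshift s hs w 0 0
        rwa [mul_zero, lowerU_conj_upperU₁] at this
      have hL : ∀ s, (∀ x y z, upperU (r ^ 4 * x) (r ^ 4 * y) (r ^ 4 * z) ∈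
          conjSubgroup H (g * lowerU 0 s 0)) → ∀ w, mixL (r ^ 4 * w) (-((s - s₀) * (r ^ 4 * w)))
            (-((s - s₀) ^ 2 * (r ^ 4 * w))) ∈ K := by
        intro s hs w
        have := hshift s hs 0 0 w
        rwa [mul_zero, lowerU_conj_upperU₂] at this
      have hmixU := exists_weighted _ (fun x y z => mixU x (-y) (-z) ∈ K)
        (by
          intro a b c a' b' c' h h'
          have := mul_mem h h'
          rw [mixU_mul] at this
          convert this using 2 <;> ring)
        (r ^ 4) r (s₀ - s₀) (s₁ - s₀) (s₂ - s₀) (by simpa using d₀₁) (by simpa using d₀₂)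
        (by simpa using d₁₂) (hU _ m₀) (hU _ m₁) (hU _ m₂)
      have hmixL := exists_weighted _ (fun x y z => mixL x (-y) (-z) ∈ K)
        (by
          intro a b c a' b' c' h h'
          have := mul_mem h h'
          rw [mixL_mul] at this
          convert this using 2 <;> ring)
        (r ^ 4) r (s₀ - s₀) (s₁ - s₀) (s₂ - s₀) (by simpa using d₀₁) (by simpa using d₀₂)
        (by simpa using d₁₂) (hL _ m₀) (hL _ m₁) (hL _ m₂)
      have hr : r ^ 4 * r ^ 3 = r ^ 7 := by ring
      rw [hr] at hmixU hmixL
      refine ⟨m₀, fun a => ?_, fun a => ?_, fun a => ?_, fun a => ?_⟩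
      · simpa [mixL_zero_zero] using hmixL 0 0 (-a)
      · simpa [mixU_zero_zero] using hmixU 0 0 (-a)
      · simpa [mixU_zero_right] using hmixU 0 (-a) 0
      · simpa [mixL_zero_right] using hmixL 0 (-a) 0)
  have hpos : 0 < ε / 2 / 2 / 2 * (Nat.card (symplecticGroup (Fin 2) (ZMod (p ^ t))) : ℝ) := by
    have : 0 < Nat.card (symplecticGroup (Fin 2) (ZMod (p ^ t))) := Nat.card_pos
    positivity
  have hne : 0 < Nat.card {_g : symplecticGroup (Fin 2) (ZMod (p ^ t)) //
      ∃ g', ContainsLevel (conjSubgroup H g') r} := by exact_mod_cast hpos.trans_le h₃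
  obtain ⟨⟨_, hg⟩⟩ := (Nat.card_pos_iff.1 hne).1
  exact hg

/-! ### The index bound -/

/-- A subgroup containing the principal congruence subgroup of level `Q` has index at most `Q ^ 16`,
the number of `4 × 4` matrices modulo `Q`. Reduction goes through `ZMod.val`, so that `Q ∣ n` is not
needed. -/
theorem index_le_of_congruence (n Q : ℕ) [NeZero n] [NeZero Q]
    (K : Subgroup (symplecticGroup (Fin 2) (ZMod n)))
    (hK : ∀ g : symplecticGroup (Fin 2) (ZMod n),
      (∀ i j, (Q : ZMod n) ∣ ((g : Matrix (Fin 2 ⊕ Fin 2) (Fin 2 ⊕ Fin 2) (ZMod n)) - 1) i j) →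
      g ∈ K) : K.index ≤ Q ^ 16 := by
  let φ : symplecticGroup (Fin 2) (ZMod n) → Matrix (Fin 2 ⊕ Fin 2) (Fin 2 ⊕ Fin 2) (ZMod Q) :=
    fun g => of fun i j => ((g.1 i j).val : ZMod Q)
  have hφ : ∀ g g', φ g = φ g' → g⁻¹ * g' ∈ K := by
    intro g g' h
    apply hK
    have hd : ∀ i j, (Q : ZMod n) ∣ (g'.1 - g.1) i j := by
      intro i j
      have hij : ((g.1 i j).val : ZMod Q) = ((g'.1 i j).val : ZMod Q) := congrFun (congrFun h i) j
      rw [ZMod.natCast_eq_natCast_iff, Nat.modEq_iff_dvd] at hij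
      obtain ⟨k, hk⟩ := hij
      have := congrArg (Int.cast : ℤ → ZMod n) hk
      push_cast at this
      rw [ZMod.natCast_zmod_val, ZMod.natCast_zmod_val] at this
      exact ⟨_, this⟩
    have hsub : (↑(g⁻¹ * g') : Matrix (Fin 2 ⊕ Fin 2) (Fin 2 ⊕ Fin 2) (ZMod n)) - 1
        = g⁻¹.1 * (g'.1 - g.1) := by
      rw [mul_sub, ← Submonoid.coe_mul, ← Submonoid.coe_mul, inv_mul_cancel, Submonoid.coe_one]
    intro i j
    rw [hsub, mul_apply]
    exact Finset.dvd_sum fun k _ => Dvd.dvd.mul_left (hd k j) _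
  have hinj : Function.Injective fun x : symplecticGroup (Fin 2) (ZMod n) ⧸ K => φ x.out := by
    intro x y hxy
    have := QuotientGroup.eq.2 (hφ _ _ hxy)
    simpa using this
  have hcard := Nat.card_le_card_of_injective _ hinj
  rw [Subgroup.index]
  refine hcard.trans_eq ?_
  simp [Nat.card_eq_fintype_card, Matrix, ZMod.card, ← pow_mul]

/-- The index bound in terms of any power `p^b` with `16 / ε < p^(b+1)`. For `b = 0` some conjugate of
`H` is the whole group; for `b ≥ t` the congruence subgroup of level `p^(14 b)` is trivial. -/
theorem index_le (p t b : ℕ) (hp : p.Prime) (ht : 1 ≤ t)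
    (H : Subgroup (symplecticGroup (Fin 2) (ZMod (p ^ t))))
    (ψ : symplecticGroup (Fin 2) (ZMod (p ^ t)))
    (hψ : (ψ : Matrix (Fin 2 ⊕ Fin 2) (Fin 2 ⊕ Fin 2) (ZMod (p ^ t))) =
      Matrix.fromBlocks !![0, 1; 1, 0] 0 0 !![0, 1; 1, 0])
    (ε : ℝ) (hε : 0 < ε) (hεp : 16 < ε * (p : ℝ) ^ (b + 1))
    (hcount : ε * (Nat.card (symplecticGroup (Fin 2) (ZMod (p ^ t)))) ≤
      Nat.card {g : symplecticGroup (Fin 2) (ZMod (p ^ t)) // g * ψ * g⁻¹ ∈ H}) :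
    H.index ≤ (p ^ b) ^ 224 := by
  have : NeZero (p ^ t) := ⟨(pow_pos hp.pos t).ne'⟩
  have : IsLocalRing (ZMod (p ^ t)) := isLocalRing_zmod_prime_pow p t hp ht
  have : NeZero ((p ^ b) ^ 14) := ⟨(pow_pos (pow_pos hp.pos b) 14).ne'⟩
  rw [show (p ^ b) ^ 224 = ((p ^ b) ^ 14) ^ 16 by rw [← pow_mul (p ^ b) 14 16]]
  have hpt : (p : ZMod (p ^ t)) ^ t = 0 := by exact_mod_cast ZMod.natCast_self (p ^ t)
  rcases le_or_gt (b + 1) t with hb | hb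
  · obtain ⟨g, hg⟩ := exists_containsLevel p t b hp hb H ψ hψ ε hε hεp hcount
    rw [← index_conjSubgroup H g]
    rcases Nat.eq_zero_or_pos b with rfl | hb0
    · rw [pow_zero] at hg
      rw [hg.eq_top, Subgroup.index_top]
      simp
    · refine index_le_of_congruence _ _ _ ?_
      intro x hx
      push_cast at hx
      set r := (p : ZMod (p ^ t)) ^ b with hr
      choose M hM using hx
      have hnil : IsNilpotent (r ^ 14) := by
        refine IsNilpotent.pow_of_pos ?_ (by norm_num)
        exact IsNilpotent.pow_of_pos ⟨t, hpt⟩ hb0.ne'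
      have hunit : ∀ y, IsUnit (1 + r ^ 14 * y) := fun y =>
        IsNilpotent.isUnit_one_add ((Commute.all _ _).isNilpotent_mul_right hnil)
      refine hg.mem_of_isUnit x (M (Sum.inl 0) (Sum.inl 0)) (M (Sum.inl 0) (Sum.inl 1))
        (M (Sum.inl 1) (Sum.inl 0)) (M (Sum.inl 1) (Sum.inl 1))
        (of fun i j => M (Sum.inl i) (Sum.inr j)) (of fun i j => M (Sum.inr i) (Sum.inl j))
        x.1.toBlocks₂₂ ?_ (hunit _) ?_
      · have hx1 : ∀ i j, x.1 i j = (1 : Matrix (Fin 2 ⊕ Fin 2) (Fin 2 ⊕ Fin 2)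
            (ZMod (p ^ t))) i j + r ^ 14 * M i j := by
          intro i j
          rw [← hM i j]; simp
        conv_lhs => rw [← fromBlocks_toBlocks x.1]
        rw [fromBlocks_inj]
        refine ⟨?_, ?_, ?_, rfl⟩ <;> ext i j <;>
          simp only [toBlocks₁₁, toBlocks₁₂, toBlocks₂₁, of_apply, hx1, Matrix.smul_apply, smul_eq_mul] <;>
          fin_cases i <;> fin_cases j <;> simp [one_apply]
      · convert hunit (M (Sum.inl 0) (Sum.inl 0) + M (Sum.inl 1) (Sum.inl 1) +
          r ^ 14 * (M (Sum.inl 0) (Sum.inl 0) * M (Sum.inl 1) (Sum.inl 1) -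
          M (Sum.inl 0) (Sum.inl 1) * M (Sum.inl 1) (Sum.inl 0))) using 1
        ring
  · refine index_le_of_congruence _ _ _ ?_
    intro x hx
    have hz : (((p ^ b) ^ 14 : ℕ) : ZMod (p ^ t)) = 0 := by
      push_cast
      rw [← pow_mul]
      exact pow_eq_zero_of_le (by omega) hpt
    rw [hz] at hx
    have : x = 1 := by
      apply Subtype.ext
      rw [Submonoid.coe_one, ← sub_eq_zero]
      ext i j
      exact zero_dvd_iff.1 (hx i j)
    rw [this]
    exact H.one_mem

theorem lt_bracketP_mul (p : ℕ) (hp : p.Prime) (x : ℝ) : x < bracketP p x * p := by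
  have h := Nat.lt_pow_succ_log_self hp.one_lt ⌊x⌋₊
  have h' : ((⌊x⌋₊ + 1 : ℕ) : ℝ) ≤ ((p ^ (Nat.log p ⌊x⌋₊ + 1) : ℕ) : ℝ) := by exact_mod_cast h
  rw [bracketP, ← pow_succ]
  push_cast at h'
  exact (Nat.lt_floor_add_one x).trans_le h'

theorem bracketP_le (p : ℕ) (x : ℝ) (hx : 1 ≤ x) : bracketP p x ≤ x := by
  have h : p ^ Nat.log p ⌊x⌋₊ ≤ ⌊x⌋₊ :=
    Nat.pow_log_le_self p (Nat.floor_pos.2 hx).ne'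
  refine le_trans ?_ (Nat.floor_le (by linarith))
  rw [bracketP]
  exact_mod_cast h

theorem statement3 (p t : ℕ) (hp : p.Prime) (ht : 1 ≤ t) (n : ℕ) (hn : n = p ^ t)
    (H : Subgroup ↥(Sp4 n))
    (hneg : ∃ h ∈ H, (h : Matrix (Fin 2 ⊕ Fin 2) (Fin 2 ⊕ Fin 2) (ZMod n)) = -1)
    (ψ : ↥(Sp4 n))
    (hψ : (ψ : Matrix (Fin 2 ⊕ Fin 2) (Fin 2 ⊕ Fin 2) (ZMod n)) =
      Matrix.fromBlocks !![0, 1; 1, 0] 0 0 !![0, 1; 1, 0])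
    (ε : ℝ) (hε : 0 < ε)
    (hcount : ε * (Nat.card ↥(Sp4 n)) ≤
      Nat.card {g : ↥(Sp4 n) // g * ψ * g⁻¹ ∈ H}) :
    (H.index : ℝ) ≤ 2 ^ 13 * ε⁻¹ ^ 2 * bracketP p (2 ^ 1722 * ε⁻¹ ^ 702) := by
  subst hn
  have : NeZero (p ^ t) := ⟨(pow_pos hp.pos t).ne'⟩
  have hcard : (0 : ℝ) < Nat.card (Sp4 (p ^ t)) := by exact_mod_cast Nat.card_pos
  have hε1 : ε ≤ 1 := by
    have h : (Nat.card {g : Sp4 (p ^ t) // g * ψ * g⁻¹ ∈ H} : ℝ) ≤ Nat.card (Sp4 (p ^ t)) := by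
      exact_mod_cast Nat.card_le_card_of_injective _ Subtype.val_injective
    nlinarith
  obtain ⟨e, he⟩ : ∃ e, e = ε⁻¹ := ⟨_, rfl⟩
  have he1 : 1 ≤ e := by rw [he]; exact (one_le_inv₀ hε).2 hε1
  rw [← he]
  have hp0 : (0 : ℝ) < p := by exact_mod_cast hp.pos
  -- `p ^ b` is the largest power of `p` not exceeding `16 / ε`
  obtain ⟨b, hb⟩ : ∃ b, b = Nat.log p ⌊16 * e⌋₊ := ⟨_, rfl⟩
  have hlow : (p : ℝ) ^ b ≤ 16 * e := by
    have := bracketP_le p (16 * e) (by linarith)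
    rwa [bracketP, ← hb] at this
  have hhigh : 16 * e < (p : ℝ) ^ (b + 1) := by
    have := lt_bracketP_mul p hp (16 * e)
    rwa [bracketP, ← hb, ← pow_succ] at this
  have hεp : 16 < ε * (p : ℝ) ^ (b + 1) := by
    have := mul_lt_mul_of_pos_left hhigh hε
    rwa [he, mul_left_comm, mul_inv_cancel₀ hε.ne', mul_one] at this
  have hidx := index_le p t b hp ht H ψ hψ ε hε hεp hcount
  have hidx' : (H.index : ℝ) ≤ ((p : ℝ) ^ b) ^ 224 := by exact_mod_cast hidx
  rcases Nat.eq_zero_or_pos b with hb0 | hb0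
  · have h1 : (H.index : ℝ) ≤ 1 := by simpa [hb0] using hidx'
    have h2 : 1 ≤ bracketP p (2 ^ 1722 * e ^ 702) :=
      one_le_pow₀ (by exact_mod_cast hp.one_lt.le)
    have h3 : (1 : ℝ) ≤ 2 ^ 13 * e ^ 2 := by nlinarith
    exact h1.trans (one_le_mul_of_one_le_of_one_le h3 h2)
  · have hpb : (p : ℝ) ≤ 16 * e :=
      (le_self_pow₀ (by exact_mod_cast hp.one_lt.le) hb0.ne').trans hlow
    have hbr := lt_bracketP_mul p hp (2 ^ 1722 * e ^ 702)
    refine le_of_mul_le_mul_right ?_ hp0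
    calc (H.index : ℝ) * p ≤ (16 * e) ^ 224 * (16 * e) := by
          refine mul_le_mul (hidx'.trans ?_) hpb hp0.le (by positivity)
          exact pow_le_pow_left₀ (by positivity) hlow _
      _ = 2 ^ 900 * e ^ 225 := by
          rw [← pow_succ, mul_pow, show (16 : ℝ) = 2 ^ 4 by norm_num, ← pow_mul]
      _ ≤ 2 ^ 1735 * e ^ 704 := by
          refine mul_le_mul (pow_le_pow_right₀ (by norm_num) (by norm_num))
            (pow_le_pow_right₀ he1 (by norm_num)) (by positivity) (by positivity)
      _ = 2 ^ 13 * e ^ 2 * (2 ^ 1722 * e ^ 702) := by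
          rw [show (1735 : ℕ) = 13 + 1722 from rfl, show (704 : ℕ) = 2 + 702 from rfl,
            pow_add, pow_add, mul_mul_mul_comm]
      _ ≤ 2 ^ 13 * e ^ 2 * (bracketP p (2 ^ 1722 * e ^ 702) * p) := by
          exact mul_le_mul_of_nonneg_left hbr.le (by positivity)
      _ = 2 ^ 13 * e ^ 2 * bracketP p (2 ^ 1722 * e ^ 702) * p := by
          rw [mul_assoc, mul_assoc, mul_assoc]
end

section
/- Let A ∈ Sp(4, ℤ) satisfy A ≡ I₄ (mod 2), A ≠ I₄, A ≠ −I₄, and suppose A^k ∈ {I₄, −I₄} for some positive integer k (i.e., the image of A in Sp(4,ℤ)/{±I₄} is a nonidentity element of finite order). Then there exists g ∈ Sp(4, ℤ) such that g·A·g⁻¹ equals D or −D, where D = diag(1, −1, 1, −1). -/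
/-!
Since `A ≡ 1 (mod 2)`, an odd power of `A` that equals `1` forces `A = 1`, and `A ^ 2 ≡ 1 (mod 4)`
excludes nontrivial `2`-power torsion for `A ^ 2`; hence finite order of `A` gives `A ^ 2 = 1`
(`sq_eq_one_of_pow_eq_one`).  Thus `A = 1 - 2 P` with `P` an integral idempotent, and the symplectic
condition makes `P` self-adjoint for the symplectic form, so that `ℤ⁴` is the orthogonal sum of the
images of `P` and `1 - P`.

If `Q` is a nonzero self-adjoint idempotent, its image contains a hyperbolic pair
(`exists_hyperbolic_pair`): take `u` primitive in the image, choose `x` with `ω(u, x) = 1`, and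
replace `x` by `Q x`, which does not change the pairing with `u = Q u`.  Hyperbolic pairs for
`1 - P` and for `P` together form a symplectic basis of `ℤ⁴` in which `A` is `diag(1, -1, 1, -1)`.
-/

open Matrix

/-- `Sp(4, ℤ)`, with 2×2 block indexing: `Sum.inl 0, Sum.inl 1, Sum.inr 0, Sum.inr 1`
correspond to the coordinates `1, 2, 3, 4`. -/
abbrev Sp4Z := Matrix.symplecticGroup (Fin 2) ℤ

/-- `D = diag(1, −1, 1, −1)`. -/
def Dmat : Matrix (Fin 2 ⊕ Fin 2) (Fin 2 ⊕ Fin 2) ℤ :=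
  Matrix.fromBlocks !![1, 0; 0, -1] 0 0 !![1, 0; 0, -1]

/-- Integral matrices in the coordinates of `Sp4Z`. -/
abbrev Mat4 := Matrix (Fin 2 ⊕ Fin 2) (Fin 2 ⊕ Fin 2) ℤ

/-- Entrywise reduction modulo `2`. -/
abbrev red2 : Mat4 →+* Matrix (Fin 2 ⊕ Fin 2) (Fin 2 ⊕ Fin 2) (ZMod 2) :=
  (Int.castRingHom (ZMod 2)).mapMatrix

lemma red2_two : red2 2 = 0 := by
  rw [map_ofNat]
  exact CharP.cast_eq_zero (Matrix (Fin 2 ⊕ Fin 2) (Fin 2 ⊕ Fin 2) (ZMod 2)) 2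

/-- A matrix congruent to `1` modulo `2` has odd determinant, so it can be cancelled. -/
lemma eq_zero_of_mul_eq_zero_of_red2 {N S : Mat4} (hS : red2 S = 1) (h : N * S = 0) : N = 0 := by
  have hdet : S.det ≠ 0 := by
    intro h0
    have := (Int.castRingHom (ZMod 2)).map_det S
    rw [hS, h0, Matrix.det_one, map_zero] at this
    exact zero_ne_one this
  have h2 : S.det • N = 0 := by
    have h3 : N * S * S.adjugate = 0 := by rw [h, zero_mul]
    rwa [mul_assoc, Matrix.mul_adjugate, mul_smul_comm, mul_one] at h3
  exact (smul_eq_zero.mp h2).resolve_left hdet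

lemma eq_one_of_odd_pow {X : Mat4} (hX : red2 X = 1) {m : ℕ} (hm : Odd m) (h : X ^ m = 1) :
    X = 1 := by
  have h1 := mul_geom_sum X m
  rw [h, sub_self] at h1
  refine sub_eq_zero.mp (eq_zero_of_mul_eq_zero_of_red2 ?_ h1)
  obtain ⟨r, rfl⟩ := hm
  have h2 : (2 : Matrix (Fin 2 ⊕ Fin 2) (Fin 2 ⊕ Fin 2) (ZMod 2)) = 0 := by
    rw [← red2_two, map_ofNat]
  simp only [map_sum, map_pow, hX, one_pow, Finset.sum_const, Finset.card_range, nsmul_eq_mul]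
  push_cast
  rw [h2]; simp

lemma eq_one_of_two_pow (s : ℕ) : ∀ C : Mat4, (1 + 4 * C) ^ 2 ^ s = 1 → 1 + 4 * C = 1 := by
  induction s with
  | zero => intro C h; simpa using h
  | succ s ih =>
    intro C h
    have e : (1 + 4 * C) ^ 2 = 1 + 4 * (2 * C + 4 * (C * C)) := by noncomm_ring
    rw [pow_succ', pow_mul, e] at h
    have h1 := ih _ h
    have h2 : (8 : ℤ) • (C * (1 + 2 * C)) = 0 := by
      rw [← sub_eq_zero] at h1
      rw [← h1]; noncomm_ring
    have h3 := (smul_eq_zero.mp h2).resolve_left (by norm_num)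
    have h4 : C = 0 := eq_zero_of_mul_eq_zero_of_red2
      (by rw [map_add, map_mul, red2_two, zero_mul, add_zero, map_one]) h3
    rw [h4]; simp

lemma sq_eq_one_of_pow_eq_one {B : Mat4} {n : ℕ} (hn : n ≠ 0) (h : (1 + 2 * B) ^ n = 1) :
    (1 + 2 * B) ^ 2 = 1 := by
  obtain ⟨s, m, hm, rfl⟩ := Nat.exists_eq_two_pow_mul_odd hn
  have hr : red2 (1 + 2 * B) = 1 := by
    rw [map_add, map_mul, red2_two, zero_mul, add_zero, map_one]
  have h1 : (1 + 2 * B) ^ 2 ^ s = 1 := by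
    rw [pow_mul] at h
    exact eq_one_of_odd_pow (by rw [map_pow, hr, one_pow]) hm h
  have e : (1 + 2 * B) ^ 2 = 1 + 4 * (B + B * B) := by noncomm_ring
  rw [e]
  apply eq_one_of_two_pow s
  rw [← e, ← pow_mul, mul_comm, pow_mul, h1, one_pow]

/-- A nonzero integral vector is a multiple of a unimodular one. -/
lemma exists_primitive {w : Fin 2 ⊕ Fin 2 → ℤ} (hw : w ≠ 0) :
    ∃ (c : ℤ) (u x : Fin 2 ⊕ Fin 2 → ℤ), c ≠ 0 ∧ w = c • u ∧ u ⬝ᵥ x = 1 := by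
  obtain ⟨c, hc⟩ := (IsPrincipalIdealRing.principal (Ideal.span (Set.range w))).principal
  have hd : ∀ i, ∃ a, w i = c * a := fun i => by
    have : w i ∈ Ideal.span (Set.range w) := Ideal.subset_span ⟨i, rfl⟩
    rw [hc] at this
    exact Ideal.mem_span_singleton.mp this
  choose u hu using hd
  have hm : c ∈ Ideal.span (Set.range w) := by
    rw [hc]; exact Ideal.mem_span_singleton_self c
  obtain ⟨x, hx⟩ := (Ideal.mem_span_range_iff_exists_fun).mp hm
  have hwu : w = c • u := funext hu
  have hc0 : c ≠ 0 := by
    rintro rfl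
    exact hw (by rw [hwu, zero_smul])
  refine ⟨c, u, x, hc0, hwu, ?_⟩
  apply mul_left_cancel₀ hc0
  rw [mul_one, dotProduct, Finset.mul_sum]
  refine Eq.trans ?_ hx
  refine Finset.sum_congr rfl fun i _ => ?_
  rw [hu i]; ring

local notation "ℐ" => Matrix.J (Fin 2) ℤ

/-- The symplectic form `ω(u, v) = uᵀ J v`.  With Mathlib's sign convention for `J` one has
`ω(e₁, f₁) = -1` on the standard basis. -/
def omega (u v : Fin 2 ⊕ Fin 2 → ℤ) : ℤ := u ⬝ᵥ ℐ *ᵥ v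

lemma omega_neg_swap (u v : Fin 2 ⊕ Fin 2 → ℤ) : omega u v = -omega v u := by
  rw [omega, omega, dotProduct_mulVec, ← mulVec_transpose, Matrix.J_transpose, neg_mulVec,
    neg_dotProduct, dotProduct_comm]

lemma omega_self (u : Fin 2 ⊕ Fin 2 → ℤ) : omega u u = 0 := by
  have := omega_neg_swap u u
  omega

lemma omega_adjoint {Q : Mat4} (hJ : ℐ * Q = Qᵀ * ℐ) (u v : Fin 2 ⊕ Fin 2 → ℤ) :
    omega u (Q *ᵥ v) = omega (Q *ᵥ u) v := by
  rw [omega, omega, mulVec_mulVec, hJ, ← mulVec_mulVec, dotProduct_mulVec, vecMul_transpose]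

/-- The image of a nonzero self-adjoint idempotent contains a hyperbolic pair. -/
lemma exists_hyperbolic_pair {Q : Mat4} (hQ : Q * Q = Q) (hJ : ℐ * Q = Qᵀ * ℐ) (h0 : Q ≠ 0) :
    ∃ u v, Q *ᵥ u = u ∧ Q *ᵥ v = v ∧ omega u v = -1 := by
  obtain ⟨y, hy⟩ : ∃ y, Q *ᵥ y ≠ 0 := by
    by_contra! h
    exact h0 (Matrix.ext_of_mulVec_single fun i => by rw [h, zero_mulVec])
  obtain ⟨c, u, x, hc, hw, hux⟩ := exists_primitive hy
  have hu : Q *ᵥ u = u := by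
    have h1 : Q *ᵥ (Q *ᵥ y) = Q *ᵥ y := by rw [mulVec_mulVec, hQ]
    rw [hw, mulVec_smul] at h1
    exact smul_right_injective _ hc h1
  -- `J (J x) = -x`, so `J x` pairs to `-1` with `u`.
  refine ⟨u, Q *ᵥ (ℐ *ᵥ x), hu, by rw [mulVec_mulVec, hQ], ?_⟩
  rw [omega_adjoint hJ, hu, omega, mulVec_mulVec, Matrix.J_squared, neg_mulVec, one_mulVec,
    dotProduct_neg, hux]

theorem statement4 (A : ↥Sp4Z)
    (hmod2 : ∀ i j, (2 : ℤ) ∣ ((A : Matrix (Fin 2 ⊕ Fin 2) (Fin 2 ⊕ Fin 2) ℤ) i j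
      - (1 : Matrix (Fin 2 ⊕ Fin 2) (Fin 2 ⊕ Fin 2) ℤ) i j))
    (hA1 : (A : Matrix (Fin 2 ⊕ Fin 2) (Fin 2 ⊕ Fin 2) ℤ) ≠ 1)
    (hA2 : (A : Matrix (Fin 2 ⊕ Fin 2) (Fin 2 ⊕ Fin 2) ℤ) ≠ -1)
    (hfin : ∃ k : ℕ, 0 < k ∧
      (((A ^ k : ↥Sp4Z) : Matrix (Fin 2 ⊕ Fin 2) (Fin 2 ⊕ Fin 2) ℤ) = 1 ∨
        ((A ^ k : ↥Sp4Z) : Matrix (Fin 2 ⊕ Fin 2) (Fin 2 ⊕ Fin 2) ℤ) = -1)) :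
    ∃ g : ↥Sp4Z,
      ((g * A * g⁻¹ : ↥Sp4Z) : Matrix (Fin 2 ⊕ Fin 2) (Fin 2 ⊕ Fin 2) ℤ) = Dmat ∨
      ((g * A * g⁻¹ : ↥Sp4Z) : Matrix (Fin 2 ⊕ Fin 2) (Fin 2 ⊕ Fin 2) ℤ) = -Dmat := by
  choose B0 hB0 using hmod2
  obtain ⟨P, hAP⟩ : ∃ P : Mat4, (A : Mat4) = 1 + 2 * (-P) := by
    refine ⟨-Matrix.of B0, ?_⟩
    have e : (2 : Mat4) * Matrix.of B0 = (2 : ℤ) • Matrix.of B0 := by noncomm_ring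
    rw [neg_neg, e]
    ext i j
    have := hB0 i j
    simp only [Matrix.add_apply, Matrix.smul_apply, Matrix.of_apply, smul_eq_mul]
    linarith
  have hsq : (1 + 2 * (-P)) ^ 2 = 1 := by
    obtain ⟨k, hk, h⟩ := hfin
    refine sq_eq_one_of_pow_eq_one (n := k * 2) (by omega) ?_
    rw [← hAP, pow_mul]
    rw [SubmonoidClass.coe_pow] at h
    rcases h with h | h <;> rw [h] <;> simp
  have hPP : P * P = P := by
    have h4 : (4 : ℤ) • (P * P - P) = 0 := by
      rw [← sub_eq_zero] at hsq
      rw [← hsq]; noncomm_ring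
    exact sub_eq_zero.mp ((smul_eq_zero.mp h4).resolve_left (by norm_num))
  have hJP : ℐ * P = Pᵀ * ℐ := by
    have h1 : (A : Mat4)ᵀ * ℐ * (A : Mat4) = ℐ := SymplecticGroup.mem_iff'.mp A.2
    have h2 : (A : Mat4)ᵀ * ℐ = ℐ * (A : Mat4) := by
      have h3 : (A : Mat4)ᵀ * ℐ * (A : Mat4) * (A : Mat4) = ℐ * (A : Mat4) := by rw [h1]
      rwa [mul_assoc, ← pow_two, hAP, hsq, mul_one, ← hAP] at h3
    have h5 : (A : Mat4) = 1 - (2 : ℤ) • P := by rw [hAP]; noncomm_ring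
    rw [h5, transpose_sub, transpose_one, transpose_smul, sub_mul, mul_sub, one_mul, mul_one,
      sub_right_inj, smul_mul_assoc, mul_smul_comm] at h2
    exact (smul_right_injective _ (by norm_num : (2 : ℤ) ≠ 0) h2).symm
  have hP0 : P ≠ 0 := by
    rintro rfl
    exact hA1 (by rw [hAP]; simp)
  have hP1 : 1 - P ≠ 0 := by
    intro h
    rw [sub_eq_zero] at h
    apply hA2
    rw [hAP, ← h]; noncomm_ring
  have hQQ : (1 - P) * (1 - P) = 1 - P := by
    rw [sub_mul, mul_sub, mul_sub, hPP]; simp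
  have hJQ : ℐ * (1 - P) = (1 - P)ᵀ * ℐ := by
    rw [transpose_sub, transpose_one, mul_sub, sub_mul, hJP, one_mul, mul_one]
  obtain ⟨e₁, f₁, he₁, hf₁, h₁⟩ := exists_hyperbolic_pair hQQ hJQ hP1
  obtain ⟨e₂, f₂, he₂, hf₂, h₂⟩ := exists_hyperbolic_pair hPP hJP hP0
  have hker : ∀ u, (1 - P) *ᵥ u = u → P *ᵥ u = 0 := fun u hu => by
    rw [← hu, mulVec_mulVec, mul_sub, mul_one, hPP, sub_self, zero_mulVec]
  have hort : ∀ u v, (1 - P) *ᵥ u = u → P *ᵥ v = v → omega u v = 0 := fun u v hu hv => by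
    rw [← hv, omega_adjoint hJP, hker u hu, omega, zero_dotProduct]
  have hort' : ∀ u v, (1 - P) *ᵥ u = u → P *ᵥ v = v → omega v u = 0 := fun u v hu hv => by
    rw [omega_neg_swap, hort u v hu hv, neg_zero]
  -- The columns of `M` are the symplectic basis `e₁, e₂, f₁, f₂`.
  let b : Fin 2 ⊕ Fin 2 → Fin 2 ⊕ Fin 2 → ℤ := Sum.elim ![e₁, e₂] ![f₁, f₂]
  let M : Mat4 := (Matrix.of b)ᵀ
  have hM : M ∈ Sp4Z := by
    rw [SymplecticGroup.mem_iff']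
    ext i j
    have hω : (Mᵀ * ℐ * M) i j = omega (b i) (b j) := by
      rw [mul_assoc]
      rfl
    rw [hω]
    have h₁' : omega f₁ e₁ = 1 := by rw [omega_neg_swap, h₁, neg_neg]
    have h₂' : omega f₂ e₂ = 1 := by rw [omega_neg_swap, h₂, neg_neg]
    rcases i with i | i <;> rcases j with j | j <;> fin_cases i <;> fin_cases j <;>
      simp [b, Matrix.J, omega_self, h₁, h₂, h₁', h₂', hort e₁ e₂ he₁ he₂, hort e₁ f₂ he₁ hf₂,
        hort f₁ e₂ hf₁ he₂, hort f₁ f₂ hf₁ hf₂, hort' e₁ e₂ he₁ he₂, hort' e₁ f₂ he₁ hf₂,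
        hort' f₁ e₂ hf₁ he₂, hort' f₁ f₂ hf₁ hf₂]
  have hfix : ∀ u, (1 - P) *ᵥ u = u → (A : Mat4) *ᵥ u = u := fun u hu => by
    rw [hAP, add_mulVec, ← mulVec_mulVec, neg_mulVec, hker u hu, one_mulVec]; simp
  have hneg : ∀ u, P *ᵥ u = u → (A : Mat4) *ᵥ u = -u := fun u hu => by
    have : (1 + 2 * (-P)) = 1 - P - P := by noncomm_ring
    rw [hAP, this, sub_mulVec, sub_mulVec, one_mulVec, hu]; simp
  have hAM : (A : Mat4) * M = M * Dmat := by
    ext i j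
    have hl : ((A : Mat4) * M) i j = ((A : Mat4) *ᵥ b j) i := rfl
    rw [hl]
    rcases j with j | j <;> fin_cases j <;>
      simp [b, M, Dmat, Matrix.mul_apply, hfix e₁ he₁, hfix f₁ hf₁, hneg e₂ he₂, hneg f₂ hf₂]
  refine ⟨(⟨M, hM⟩ : ↥Sp4Z)⁻¹, Or.inl ?_⟩
  have hMM : (((⟨M, hM⟩ : ↥Sp4Z)⁻¹ : ↥Sp4Z) : Mat4) * M = 1 :=
    congrArg Subtype.val (inv_mul_cancel (⟨M, hM⟩ : ↥Sp4Z))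
  rw [inv_inv, mul_assoc]
  change (((⟨M, hM⟩ : ↥Sp4Z)⁻¹ : ↥Sp4Z) : Mat4) * ((A : Mat4) * M) = Dmat
  rw [hAM, ← mul_assoc, hMM, one_mul]
end

section
/- Let p ≥ 5 be a prime and α ≥ 1. If S is a subgroup of Sp(4, ℤ/p^αℤ) whose image under the reduction homomorphism Sp(4, ℤ/p^αℤ) → Sp(4, ℤ/pℤ) is all of Sp(4, ℤ/pℤ), then S = Sp(4, ℤ/p^αℤ). -/
/-!
Write `R = ℤ/p^α`. By induction on `k ≥ 1`, every element of `Sp(4, R)` is congruent modulo `p^k`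
to an element of `S`; the case `k = α` is the theorem.

For the induction step, call `B` *liftable* if `1 + p^k B` is congruent to an element of `S`
modulo `p^(k+1)`. Liftable matrices are closed under addition, since `2k ≥ k + 1`. If
`X = c u uᵀ J`, then `X² = 0` and `1 + p^(k-1) X` is a symplectic transvection, so by
the induction hypothesis it is congruent modulo `p^k` to some `s ∈ S`; the binomial theorem gives
`s^p ≡ 1 + p^k X` modulo `p^(k+1)` (`pow_prime_congr`, where `p ≥ 5` enters), so `X` is liftable.
Finally, if `1 + p^k B` is symplectic then `B J` is symmetric up to an error that does not matter,
and symmetric matrices are sums of matrices `c u uᵀ` because `2` is invertible. Hence `B` is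
liftable, which is what the step requires.
-/

open Matrix

lemma map_J' {R S : Type*} [CommRing R] [CommRing S] (f : R →+* S) :
    (Matrix.J (Fin 2) R).map f = Matrix.J (Fin 2) S := by
  ext i j
  rcases i with i | i <;> rcases j with j | j <;>
    simp [Matrix.J, Matrix.fromBlocks, Matrix.map_apply, Matrix.one_apply, apply_ite (⇑f)]

lemma map_mem_sp' {R S : Type*} [CommRing R] [CommRing S] (f : R →+* S)
    {A : Matrix (Fin 2 ⊕ Fin 2) (Fin 2 ⊕ Fin 2) R}
    (hA : A ∈ Matrix.symplecticGroup (Fin 2) R) :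
    A.map f ∈ Matrix.symplecticGroup (Fin 2) S := by
  rw [SymplecticGroup.mem_iff] at hA ⊢
  have := congrArg (Matrix.map · f) hA
  simp only [Matrix.map_mul, map_J', ← Matrix.transpose_map] at this
  simpa [Matrix.transpose_map] using this

/-- Entrywise application of a ring homomorphism, as a group homomorphism between
symplectic groups. -/
def spMap {R S : Type*} [CommRing R] [CommRing S] (f : R →+* S) :
    ↥(Matrix.symplecticGroup (Fin 2) R) →* ↥(Matrix.symplecticGroup (Fin 2) S) where
  toFun A := ⟨(A : Matrix (Fin 2 ⊕ Fin 2) (Fin 2 ⊕ Fin 2) R).map f, map_mem_sp' f A.2⟩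
  map_one' := by
    apply Subtype.ext
    ext i j
    simp [Matrix.map_apply, Matrix.one_apply, apply_ite (⇑f)]
  map_mul' A B := Subtype.ext Matrix.map_mul

/-- If `s = 1 + p^j X + p^(j+1) Y` with `X² = 0`, then `s^p ≡ 1 + p^(j+1) X` modulo `p^(j+2)`.
Indeed `U = s - 1` has `U²` divisible by `p^(2j+1)`: the middle binomial terms gain a further
factor `p` from the binomial coefficient, and the last term `U^p` is a multiple of `U⁴`. -/
lemma pow_prime_congr {M : Type*} [Ring M] {p : ℕ} (hp : p.Prime) (hp5 : 5 ≤ p) (j : ℕ)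
    (X Y : M) (hX : X * X = 0) :
    (p : M) ^ (j + 2) ∣
      (1 + (p : M) ^ j * X + (p : M) ^ (j + 1) * Y) ^ p - (1 + (p : M) ^ (j + 1) * X) := by
  have hc (i : ℕ) (Z : M) : Z * (p : M) ^ i = (p : M) ^ i * Z :=
    ((Nat.cast_commute p Z).pow_left i).eq.symm
  set U : M := (p : M) ^ j * X + (p : M) ^ (j + 1) * Y with hU
  have hU2 : ∃ W, U * U = (p : M) ^ (2 * j + 1) * W := by
    refine ⟨X * Y + Y * X + (p : M) * (Y * Y), ?_⟩
    have h1 : U = (p : M) ^ j * (X + (p : M) * Y) := by rw [hU, pow_succ]; noncomm_ring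
    have hc1 := hc 1
    simp only [pow_one] at hc1
    have h2 : (X + (p : M) * Y) * (X + (p : M) * Y)
        = (p : M) * (X * Y + Y * X + (p : M) * (Y * Y)) := by
      calc _ = X * X + (X * p) * Y + (p : M) * (Y * X) + p * ((Y * p) * Y) := by noncomm_ring
        _ = _ := by rw [hX, hc1 X, hc1 Y]; noncomm_ring
    calc U * U = (p : M) ^ j * ((X + (p : M) * Y) * (p : M) ^ j) * (X + (p : M) * Y) := by
          rw [h1]; noncomm_ring
      _ = (p : M) ^ j * (p : M) ^ j * ((X + (p : M) * Y) * (X + (p : M) * Y)) := by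
          rw [hc]; noncomm_ring
      _ = _ := by rw [h2, two_mul, pow_succ, pow_add]; noncomm_ring
  obtain ⟨W, hW⟩ := hU2
  have hUi (i : ℕ) : (p : M) ^ (2 * j + 1) ∣ U ^ (i + 2) := by
    rw [add_comm i 2, pow_add U, pow_two, hW, mul_assoc]
    exact dvd_mul_right _ _
  have hUp : (p : M) ^ (j + 2) ∣ U ^ p := by
    obtain ⟨q, rfl⟩ : ∃ q, p = 4 + q := ⟨p - 4, by omega⟩
    rw [pow_add U, show U ^ 4 = (U * U) * (U * U) by noncomm_ring]
    have : (U * U) * (U * U) = ((4 + q : ℕ) : M) ^ (j + 2)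
        * (((4 + q : ℕ) : M) ^ (3 * j) * (W * W)) := by
      calc _ = ((4 + q : ℕ) : M) ^ (2 * j + 1) * (W * ((4 + q : ℕ) : M) ^ (2 * j + 1)) * W := by
            rw [hW]; noncomm_ring
        _ = (((4 + q : ℕ) : M) ^ (2 * j + 1) * ((4 + q : ℕ) : M) ^ (2 * j + 1)) * (W * W) := by
            rw [hc]; simp only [mul_assoc]
        _ = _ := by rw [← pow_add, ← mul_assoc (_ ^ (j + 2)), ← pow_add]; congr 2; ring
    rw [this, mul_assoc]
    exact dvd_mul_right _ _
  rw [add_assoc, ← hU, add_comm (1 : M) U, (Commute.one_right U).add_pow]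
  obtain ⟨q, hq⟩ : ∃ q, p = q + 2 := ⟨p - 2, by omega⟩
  have hmid : (p : M) ^ (j + 2) ∣
      ∑ i ∈ Finset.range q, U ^ (i + 1 + 1) * (p.choose (i + 1 + 1) : M) := by
    refine Finset.dvd_sum fun i hi => ?_
    have hi' := Finset.mem_range.mp hi
    obtain ⟨c, hcc⟩ := hp.dvd_choose_self (k := i + 1 + 1) (by omega) (by omega)
    obtain ⟨V, hV⟩ := hUi i
    rw [hcc, Nat.cast_mul, show i + 1 + 1 = i + 2 from rfl, hV]
    refine ⟨(p : M) ^ j * (V * c), ?_⟩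
    have := hc 1 V
    rw [pow_one] at this
    calc _ = (p : M) ^ (2 * j + 1) * (V * p) * c := by noncomm_ring
      _ = (p : M) ^ (2 * j + 1 + 1) * (V * c) := by rw [this, pow_succ _ (2 * j + 1)]; noncomm_ring
      _ = _ := by rw [← mul_assoc (_ ^ (j + 2)), ← pow_add]; congr 2; ring
  rw [Finset.sum_range_succ]
  have hsplit : ∑ x ∈ Finset.range p, U ^ x * 1 ^ (p - x) * (p.choose x : M)
      = ∑ i ∈ Finset.range q, U ^ (i + 1 + 1) * (p.choose (i + 1 + 1) : M) + U * p + 1 := by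
    conv_lhs => rw [hq, Finset.sum_range_succ', Finset.sum_range_succ']
    simp [← hq]
  have hUp1 : U * (p : M) = (p : M) ^ (j + 1) * X + (p : M) ^ (j + 2) * Y := by
    rw [← Nat.cast_commute p U, hU, mul_add, ← mul_assoc, ← mul_assoc, ← pow_succ', ← pow_succ']
  rw [hsplit, hUp1]
  have : (p : M) ^ (j + 2) ∣ (p : M) ^ (j + 2) * Y := dvd_mul_right _ _
  convert dvd_add (dvd_add hmid this) hUp using 1
  simp
  abel

/-- Shorthand for the index type of the `4 × 4` matrices. -/
abbrev Idx4 := Fin 2 ⊕ Fin 2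

/-- The nilpotent matrix `u uᵀ J`; `1 + c u uᵀ J` is a symplectic transvection for every scalar `c`. -/
def nilp {R : Type*} [CommRing R] (u : Idx4 → R) : Matrix Idx4 Idx4 R :=
  vecMulVec u u * J (Fin 2) R

lemma dot_J_self {R : Type*} [CommRing R] (u : Idx4 → R) :
    u ᵥ* J (Fin 2) R ⬝ᵥ u = 0 := by
  simp [J, dotProduct, vecMul, Fintype.sum_sum_type, fromBlocks, Fin.sum_univ_two, Matrix.one_apply]
  ring

lemma vecMulVec_J_vecMulVec {R : Type*} [CommRing R] (u : Idx4 → R) :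
    vecMulVec u u * J (Fin 2) R * vecMulVec u u = 0 := by
  rw [vecMulVec_mul, vecMulVec_mul_vecMulVec, dot_J_self]
  simp

lemma nilp_mul_nilp {R : Type*} [CommRing R] (u : Idx4 → R) : nilp u * nilp u = 0 := by
  rw [nilp, ← Matrix.mul_assoc, vecMulVec_J_vecMulVec, Matrix.zero_mul]

lemma one_add_nilp_mem {R : Type*} [CommRing R] (c : R) (u : Idx4 → R) :
    1 + c • nilp u ∈ symplecticGroup (Fin 2) R := by
  have h0 := vecMulVec_J_vecMulVec u
  have hJ := J_squared (Fin 2) R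
  rw [SymplecticGroup.mem_iff, nilp]
  set V := vecMulVec u u with hV
  have hVt : Vᵀ = V := by rw [hV, transpose_vecMulVec]
  set Q := J (Fin 2) R with hQ
  have hQt : Qᵀ = -Q := J_transpose _ _
  rw [transpose_add, transpose_smul, transpose_mul, transpose_one, hVt, hQt]
  simp only [add_mul, mul_add, one_mul, mul_one, smul_mul_assoc, mul_smul_comm, neg_mul, mul_neg]
  rw [show V * Q * Q = -V by rw [mul_assoc, hJ]; simp,
    show Q * (Q * V) = -V by rw [← mul_assoc, hJ]; simp,
    show -V * (Q * V) = 0 by rw [neg_mul, ← mul_assoc, h0, neg_zero]]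
  simp

/-- Polarization: `M + Mᵀ` is a sum of matrices `c u uᵀ`, via
`E_ij + E_ji = (e_i + e_j)(e_i + e_j)ᵀ - e_i e_iᵀ - e_j e_jᵀ`. -/
lemma add_transpose_eq_sum {R : Type*} [CommRing R] (M : Matrix Idx4 Idx4 R) :
    M + Mᵀ = ∑ i, ∑ j,
      (M i j • vecMulVec (Pi.single i 1 + Pi.single j 1) (Pi.single i 1 + Pi.single j 1)
        + ((-M i j) • vecMulVec (Pi.single i (1 : R)) (Pi.single i 1)
        + (-M i j) • vecMulVec (Pi.single j (1 : R)) (Pi.single j 1))) := by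
  have h (i j : Idx4) :
      (M i j • vecMulVec (Pi.single i 1 + Pi.single j 1) (Pi.single i 1 + Pi.single j 1)
        + ((-M i j) • vecMulVec (Pi.single i (1 : R)) (Pi.single i 1)
        + (-M i j) • vecMulVec (Pi.single j (1 : R)) (Pi.single j 1)))
      = single i j (M i j) + (single i j (M i j))ᵀ := by
    rw [add_vecMulVec, vecMulVec_add, vecMulVec_add, transpose_single]
    simp only [← single_eq_single_vecMulVec_single]
    rw [show single i j (M i j) = M i j • single i j (1 : R) by simp [smul_single],
      show single j i (M i j) = M i j • single j i (1 : R) by simp [smul_single]]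
    module
  simp only [h, Finset.sum_add_distrib, ← transpose_sum]
  rw [← matrix_eq_sum_single]

/-- A matrix all of whose entries are divisible by `p` is divisible by `p`. -/
lemma cast_dvd_matrix {R : Type*} [CommRing R] (p : ℕ) (A : Matrix Idx4 Idx4 R)
    (h : ∀ i j, (p : R) ∣ A i j) : (p : Matrix Idx4 Idx4 R) ∣ A := by
  choose C hC using h
  refine ⟨Matrix.of C, ?_⟩
  rw [← nsmul_eq_mul]
  ext i j
  simp [hC i j]

/-- The induction step, from approximation modulo `p^(j+1)` to approximation modulo `p^(j+2)`. -/
lemma approx_step {R : Type*} [CommRing R] {p : ℕ} (hp : p.Prime) (hp5 : 5 ≤ p)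
    (h2 : IsUnit (2 : R)) (S : Subgroup (symplecticGroup (Fin 2) R)) (j : ℕ)
    (ih : ∀ A : symplecticGroup (Fin 2) R, ∃ s ∈ S,
      (p : Matrix Idx4 Idx4 R) ^ (j + 1) ∣ (s : Matrix Idx4 Idx4 R) - A)
    (A : symplecticGroup (Fin 2) R) : ∃ s ∈ S,
      (p : Matrix Idx4 Idx4 R) ^ (j + 2) ∣ (s : Matrix Idx4 Idx4 R) - A := by
  have hc (i : ℕ) (Z : Matrix Idx4 Idx4 R) :
      Z * (p : Matrix Idx4 Idx4 R) ^ i = (p : Matrix Idx4 Idx4 R) ^ i * Z :=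
    ((Nat.cast_commute p Z).pow_left i).eq.symm
  have hsm (i : ℕ) (Z : Matrix Idx4 Idx4 R) :
      (p : Matrix Idx4 Idx4 R) ^ i * Z = ((p : R) ^ i) • Z := by
    rw [← Nat.cast_pow, ← nsmul_eq_mul, ← Nat.cast_pow, Nat.cast_smul_eq_nsmul]
  have htr (i : ℕ) (Z : Matrix Idx4 Idx4 R) :
      ((p : Matrix Idx4 Idx4 R) ^ i * Z)ᵀ = (p : Matrix Idx4 Idx4 R) ^ i * Zᵀ := by
    rw [hsm, hsm, transpose_smul]
  set P : Matrix Idx4 Idx4 R := (p : Matrix Idx4 Idx4 R) with hP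
  -- The liftable matrices, for the exponent `j + 1`.
  let L : AddSubmonoid (Matrix Idx4 Idx4 R) :=
    { carrier := {B | ∃ s ∈ S, P ^ (j + 2) ∣ (s : Matrix Idx4 Idx4 R) - (1 + P ^ (j + 1) * B)}
      zero_mem' := ⟨1, S.one_mem, by simp⟩
      add_mem' := by
        rintro B C ⟨s, hs, E, hE⟩ ⟨t, ht, F, hF⟩
        refine ⟨s * t, S.mul_mem hs ht,
          E * t + (1 + P ^ (j + 1) * B) * F + P ^ j * (B * C), ?_⟩
        have hs' : (s : Matrix Idx4 Idx4 R) = 1 + P ^ (j + 1) * B + P ^ (j + 2) * E := by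
          rw [← hE]; abel
        have ht' : (t : Matrix Idx4 Idx4 R) = 1 + P ^ (j + 1) * C + P ^ (j + 2) * F := by
          rw [← hF]; abel
        rw [Submonoid.coe_mul]
        have e1 : (1 + P ^ (j + 1) * B) * (P ^ (j + 2) * F)
            = P ^ (j + 2) * ((1 + P ^ (j + 1) * B) * F) := by
          rw [← mul_assoc, hc, mul_assoc]
        have e2 : (P ^ (j + 1) * B) * (P ^ (j + 1) * C) = P ^ (j + 2) * (P ^ j * (B * C)) := by
          calc _ = P ^ (j + 1) * (B * P ^ (j + 1)) * C := by simp only [mul_assoc]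
            _ = (P ^ (j + 1) * P ^ (j + 1)) * (B * C) := by rw [hc]; simp only [mul_assoc]
            _ = _ := by rw [← pow_add, ← mul_assoc (_ ^ (j + 2)), ← pow_add]; congr 2; ring
        calc (s * t : Matrix Idx4 Idx4 R) - (1 + P ^ (j + 1) * (B + C))
            = P ^ (j + 2) * E * t + (1 + P ^ (j + 1) * B) * t
                - (1 + P ^ (j + 1) * (B + C)) := by
              conv_lhs => rw [hs']
              rw [add_mul _ (P ^ (j + 2) * E)]; abel
          _ = P ^ (j + 2) * E * t + (1 + P ^ (j + 1) * B) * (P ^ (j + 2) * F)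
                + (P ^ (j + 1) * B) * (P ^ (j + 1) * C) := by
              rw [show (1 + P ^ (j + 1) * B) * (t : Matrix Idx4 Idx4 R)
                = (1 + P ^ (j + 1) * B) * (1 + P ^ (j + 1) * C + P ^ (j + 2) * F) by rw [ht']]
              simp only [mul_add, add_mul, one_mul, mul_one]; abel
          _ = _ := by rw [e1, e2]; simp only [mul_add, mul_assoc] }
  have hnilp (c : R) (u : Idx4 → R) : c • nilp u ∈ L := by
    have hmem : 1 + P ^ j * (c • nilp u) ∈ symplecticGroup (Fin 2) R := by
      rw [hsm, smul_smul]; exact one_add_nilp_mem _ _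
    obtain ⟨s, hs, Y, hY⟩ := ih ⟨_, hmem⟩
    refine ⟨s ^ p, S.pow_mem hs p, ?_⟩
    have hs' : (s : Matrix Idx4 Idx4 R) = 1 + P ^ j * (c • nilp u) + P ^ (j + 1) * Y := by
      rw [← hY, add_sub_cancel]
    rw [SubmonoidClass.coe_pow, hs']
    refine pow_prime_congr hp hp5 j _ Y ?_
    rw [smul_mul_smul_comm, nilp_mul_nilp, smul_zero]
  have hsym (M : Matrix Idx4 Idx4 R) : (M + Mᵀ) * J (Fin 2) R ∈ L := by
    rw [add_transpose_eq_sum, Finset.sum_mul]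
    refine sum_mem fun a _ => ?_
    rw [Finset.sum_mul]
    refine sum_mem fun b _ => ?_
    simp only [add_mul, smul_mul_assoc]
    exact add_mem (hnilp _ _) (add_mem (hnilp _ _) (hnilp _ _))
  obtain ⟨s, hs, C, hC⟩ := ih A
  -- It remains to lift `A s⁻¹`, which has the form `1 + p^(j+1) B`.
  have hss : (s : Matrix Idx4 Idx4 R) * ((s⁻¹ : symplecticGroup (Fin 2) R) :
      Matrix Idx4 Idx4 R) = 1 := by
    rw [← Submonoid.coe_mul, mul_inv_cancel, Submonoid.coe_one]
  set B : Matrix Idx4 Idx4 R := -(C * ((s⁻¹ : symplecticGroup (Fin 2) R) :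
      Matrix Idx4 Idx4 R)) with hB
  have hg : ((A * s⁻¹ : symplecticGroup (Fin 2) R) : Matrix Idx4 Idx4 R)
      = 1 + P ^ (j + 1) * B := by
    have hA : (A : Matrix Idx4 Idx4 R) = s - P ^ (j + 1) * C := by rw [← hC]; abel
    rw [Submonoid.coe_mul, hA, sub_mul, hss, hB, mul_neg, mul_assoc, sub_eq_add_neg]
  clear_value B
  have hgm := SymplecticGroup.mem_iff.mp (A * s⁻¹).2
  rw [hg] at hgm
  have hJ := J_squared (Fin 2) R
  have hJt := J_transpose (Fin 2) R
  set Q := J (Fin 2) R with hQ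
  -- `B J` is symmetric after multiplication by `p^(j+1)`, modulo `p^(j+2)`.
  have hBJ : P ^ (j + 1) * (B * Q - (B * Q)ᵀ) = P ^ (j + 2) * (-(P ^ j * (B * Q * Bᵀ))) := by
    rw [transpose_add, transpose_one, htr] at hgm
    have e3 : P ^ (j + 1) * B * Q * (P ^ (j + 1) * Bᵀ) = P ^ (j + 2) * (P ^ j * (B * Q * Bᵀ)) := by
      calc _ = P ^ (j + 1) * (B * Q * P ^ (j + 1)) * Bᵀ := by simp only [mul_assoc]
        _ = (P ^ (j + 1) * P ^ (j + 1)) * (B * Q * Bᵀ) := by rw [hc]; simp only [mul_assoc]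
        _ = _ := by rw [← pow_add, ← mul_assoc (_ ^ (j + 2)), ← pow_add]; congr 2; ring
    rw [transpose_mul, hJt, mul_neg, ← e3, neg_mul, sub_neg_eq_add, mul_add]
    have e4 : Q * (P ^ (j + 1) * Bᵀ) = P ^ (j + 1) * (Q * Bᵀ) := by
      rw [← mul_assoc, hc, mul_assoc]
    simp only [add_mul, mul_add, one_mul, mul_one, e4] at hgm
    rw [eq_neg_iff_add_eq_zero, ← sub_eq_zero.mpr hgm]
    simp only [mul_assoc]
    abel
  obtain ⟨h, hh⟩ := h2.exists_right_inv
  have hBL : B ∈ L := by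
    obtain ⟨t, ht, D, hD⟩ := hsym ((-h) • (B * Q))
    refine ⟨t, ht, D + h • (-(P ^ j * (B * Q * Bᵀ))) * Q, ?_⟩
    have e5 : (((-h) • (B * Q)) + ((-h) • (B * Q))ᵀ) * Q
        = B + h • ((B * Q - (B * Q)ᵀ) * Q) := by
      have e6 : B * Q * Q = -B := by rw [mul_assoc, hJ, mul_neg, mul_one]
      rw [transpose_smul, add_mul, smul_mul_assoc, smul_mul_assoc, sub_mul, e6]
      have e7 : B = (2 * h) • B := by rw [hh, one_smul]
      rw [show B + h • (-B - (B * Q)ᵀ * Q) = (2 * h) • B + h • (-B - (B * Q)ᵀ * Q) by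
        rw [← e7]]
      module
    rw [e5] at hD
    rw [mul_add, ← hD, smul_mul_assoc, mul_smul_comm, ← mul_assoc, ← hBJ]
    rw [mul_add, mul_smul_comm, ← mul_assoc]
    abel
  obtain ⟨t, ht, D, hD⟩ := hBL
  refine ⟨t * s, S.mul_mem ht hs, D * s, ?_⟩
  rw [← mul_assoc, ← hD, ← hg, sub_mul, ← Submonoid.coe_mul, ← Submonoid.coe_mul,
    inv_mul_cancel_right]

theorem statement6 (p α : ℕ) (hp : p.Prime) (hp5 : 5 ≤ p) (hα : 1 ≤ α)
    (S : Subgroup ↥(Sp4 (p ^ α)))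
    (hsurj : S.map (spMap (ZMod.castHom (dvd_pow_self p (Nat.one_le_iff_ne_zero.mp hα))
      (ZMod p))) = ⊤) :
    S = ⊤ := by
  have h2 : IsUnit (2 : ZMod (p ^ α)) := by
    have : Nat.Coprime 2 (p ^ α) :=
      ((Nat.coprime_primes Nat.prime_two hp).mpr (by omega)).pow_right α
    exact_mod_cast (ZMod.isUnit_iff_coprime 2 (p ^ α)).mpr this
  have key (k : ℕ) : ∀ A : Sp4 (p ^ α), ∃ s ∈ S,
      (p : Matrix Idx4 Idx4 (ZMod (p ^ α))) ^ (k + 1) ∣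
        (s : Matrix Idx4 Idx4 (ZMod (p ^ α))) - A := by
    induction k with
    | zero =>
      intro A
      obtain ⟨s, hs, hsA⟩ : spMap (ZMod.castHom (dvd_pow_self p (Nat.one_le_iff_ne_zero.mp hα))
        (ZMod p)) A ∈ S.map (spMap (ZMod.castHom (dvd_pow_self p
          (Nat.one_le_iff_ne_zero.mp hα)) (ZMod p))) := by rw [hsurj]; trivial
      refine ⟨s, hs, ?_⟩
      rw [zero_add, pow_one]
      refine cast_dvd_matrix p _ fun i j => ?_
      have hij := congrFun (congrFun (congrArg Subtype.val hsA) i) j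
      simp only [spMap, MonoidHom.coe_mk, OneHom.coe_mk, Matrix.map_apply] at hij
      rw [← sub_eq_zero, ← map_sub] at hij
      rw [Matrix.sub_apply]
      have : NeZero (p ^ α) := ⟨pow_ne_zero _ hp.ne_zero⟩
      rw [← ZMod.natCast_zmod_val ((s : Matrix Idx4 Idx4 (ZMod (p ^ α))) i j - _), map_natCast,
        ZMod.natCast_eq_zero_iff] at hij
      rw [← ZMod.natCast_zmod_val ((s : Matrix Idx4 Idx4 (ZMod (p ^ α))) i j - _)]
      exact Nat.cast_dvd_cast hij
    | succ j ih => exact approx_step hp hp5 h2 S j ih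
  rw [eq_top_iff]
  intro A _
  obtain ⟨s, hs, hsA⟩ := key (α - 1) A
  have hP0 : (p : Matrix Idx4 Idx4 (ZMod (p ^ α))) ^ α = 0 := by
    rw [← Nat.cast_pow, ← nsmul_one, ← Nat.cast_smul_eq_nsmul (ZMod (p ^ α)), ZMod.natCast_self,
      zero_smul]
  rw [Nat.sub_add_cancel hα, hP0, zero_dvd_iff, sub_eq_zero] at hsA
  rwa [← Subtype.ext hsA]
end

section
/- Let p be a prime, s a positive integer, and ε > 0. For a triple (u, v, w) of elements of ℤ/p^sℤ, define δ(u, v, w) = p^{−s} · min{α + β + γ : (α, β, γ) ∈ ℕ³, (α, β, γ) ≠ (0,0,0), and α·u + β·v + γ·w = 0 in ℤ/p^sℤ}. Then the number of triples (u, v, w) ∈ (ℤ/p^sℤ)³, counted up to simultaneous multiplication of all three entries by a unit of ℤ/p^sℤ, that satisfy δ(u, v, w) ≥ ε, is at most 2²·ε⁻⁸·[4·ε⁻⁵]_p. -/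
/-!
Scaling by a unit, every triple becomes `p ^ k * (1, v, w)` up to the position of the entry of
minimal `p`-adic valuation, with `v, w` defined modulo `N = p ^ (s - k)`. A relation
`a + b * v ≡ 0 (mod N)` gives a relation of the triple, so `δ ≥ ε` forces each of `v`, `w`
separately to satisfy `δ(1, v) ≥ 1 / M` modulo `N`, where `M = ε⁻¹ / p ^ k`; call such residues
far. Hence the number of classes is at most `∑ k, 3 * G_k ^ 2`, where `G_k` counts the far residues
(`card_classes_le`), and `G_k = 0` when `M < 1`.

The estimate `G ^ 2 ≤ (5 / 4) * M ^ 8 * [4 * M ^ 5]_p` (`card_farSet_sq_le`) is proved by cases. If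
`N ≤ 4 * M ^ 5` then `N ≤ [4 * M ^ 5]_p`, because `N` is a power of `p`, and `G ≤ N` suffices up to
small cases. For larger `N`, dividing `N` by `v` shows that `v = 1` is the only far residue when
`M < 1.9` (`IsFar.two_mul_le`). Otherwise Dirichlet approximation shows that a far `v` is a fraction
`c / b` modulo `N / p ^ j` with `p ^ j * b < 2 * M` and `c < 2 * M` (`IsFar.exists_fraction`), whence
`G ≤ 4 * M ^ 2 * n` with `n` the number of `j` such that `p ^ j < 2 * M`, and `n ^ 2` is at most
the bracket.

Summing the geometric series over `k` gives the constant `3 * (5 / 4) * (256 / 255) < 4`.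
-/

/-- Triples of elements of `ℤ/p^sℤ`. -/
abbrev T (p s : ℕ) := ZMod (p ^ s) × ZMod (p ^ s) × ZMod (p ^ s)

/-- Simultaneous multiplication of all three entries by a unit of `ℤ/p^sℤ`. -/
def unitSetoid (p s : ℕ) : Setoid (T p s) where
  r a b := ∃ c : (ZMod (p ^ s))ˣ, b.1 = c * a.1 ∧ b.2.1 = c * a.2.1 ∧ b.2.2 = c * a.2.2
  iseqv := by
    refine ⟨fun a => ⟨1, by simp⟩, ?_, ?_⟩
    · rintro a b ⟨c, h1, h2, h3⟩
      exact ⟨c⁻¹, by simp [h1, h2, h3]⟩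
    · rintro a b c ⟨u, h1, h2, h3⟩ ⟨v, g1, g2, g3⟩
      exact ⟨v * u, by simp [g1, g2, g3, h1, h2, h3, mul_assoc]⟩

/-- `δ(u,v,w) = p^{−s}·min{α+β+γ : (α,β,γ) ≠ (0,0,0), α·u + β·v + γ·w = 0 in ℤ/p^sℤ}`. -/
noncomputable def deltaT (p s : ℕ) (u v w : ZMod (p ^ s)) : ℝ :=
  ((sInf {m : ℕ | ∃ a b c : ℕ, ¬(a = 0 ∧ b = 0 ∧ c = 0) ∧
    (a : ZMod (p ^ s)) * u + (b : ZMod (p ^ s)) * v + (c : ZMod (p ^ s)) * w = 0 ∧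
    m = a + b + c} : ℕ) : ℝ) / (p ^ s : ℝ)

/-! ### Far residues -/

/-- `v` is a residue `v < N` such that every nontrivial relation `a + b * v ≡ 0 (mod N)` with
`a, b ≥ 0` has cost `a + b ≥ N / M`, i.e. `δ(1, v) ≥ 1 / M` modulo `N`. -/
def IsFar (N : ℕ) (M : ℝ) (v : ℕ) : Prop :=
  v < N ∧ ∀ a b : ℕ, ¬(a = 0 ∧ b = 0) → N ∣ a + b * v → (N : ℝ) ≤ M * ((a + b : ℕ) : ℝ)

open Classical in
/-- The finite set of the residues satisfying `IsFar`. -/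
noncomputable def farSet (N : ℕ) (M : ℝ) : Finset ℕ := (Finset.range N).filter (IsFar N M)

lemma mem_farSet {N : ℕ} {M : ℝ} {v : ℕ} : v ∈ farSet N M ↔ IsFar N M v := by
  simp only [farSet, Finset.mem_filter, Finset.mem_range, and_iff_right_iff_imp]
  exact fun h => h.1

lemma card_farSet_le (N : ℕ) (M : ℝ) : (farSet N M).card ≤ N := by
  classical
  exact (Finset.card_filter_le _ _).trans (Finset.card_range N).le

/-! ### The bracket -/

lemma pow_le_bracketP {p i : ℕ} (hp : p.Prime) {x : ℝ} (h : (p : ℝ) ^ i ≤ x) :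
    (p : ℝ) ^ i ≤ bracketP p x := by
  have h1 : p ^ i ≤ ⌊x⌋₊ := Nat.le_floor (by exact_mod_cast h)
  have h2 : i ≤ Nat.log p ⌊x⌋₊ := by
    refine (Nat.le_log_iff_pow_le hp.one_lt ?_).2 h1
    have := pow_pos hp.pos i
    omega
  exact pow_le_pow_right₀ (by exact_mod_cast hp.one_lt.le) h2

lemma bracketP_mono {p : ℕ} (hp : p.Prime) {x y : ℝ} (h : x ≤ y) :
    bracketP p x ≤ bracketP p y :=
  pow_le_pow_right₀ (by exact_mod_cast hp.one_lt.le) (Nat.log_mono_right (Nat.floor_mono h))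

lemma one_le_bracketP {p : ℕ} (hp : p.Prime) (x : ℝ) : 1 ≤ bracketP p x :=
  one_le_pow₀ (by exact_mod_cast hp.one_lt.le)

/-! ### Counting far residues -/

/-- Unless `v = 1`, division of `N` by `v` gives a relation of cost at most `N / 2 + 1`. -/
lemma IsFar.two_mul_le {N v : ℕ} {M : ℝ} (hM : 0 ≤ M) (h : IsFar N M v)
    (hv : v ≠ 1) : 2 * (N : ℝ) ≤ M * (N + 2) := by
  obtain ⟨hvN, h⟩ := h
  suffices H : ∃ a b : ℕ, ¬(a = 0 ∧ b = 0) ∧ N ∣ a + b * v ∧ 2 * (a + b) ≤ N + 2 by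
    obtain ⟨a, b, h0, hd, hle⟩ := H
    have h1 := h a b h0 hd
    have h2 : 2 * ((a + b : ℕ) : ℝ) ≤ N + 2 := by exact_mod_cast hle
    nlinarith
  rcases Nat.eq_zero_or_pos v with rfl | hv0
  · exact ⟨0, 1, by simp, by simp, by omega⟩
  rcases le_total N (2 * v) with h2 | h2
  · exact ⟨N - v, 1, by simp, by simp [Nat.sub_add_cancel hvN.le], by omega⟩
  · have hdm := Nat.mod_add_div N v
    have hlt := Nat.mod_lt N hv0
    have hk : 2 ≤ N / v := (Nat.le_div_iff_mul_le hv0).2 h2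
    refine ⟨N % v, N / v, by omega, by rw [mul_comm, hdm], ?_⟩
    have hv2 : 2 ≤ v := by omega
    obtain ⟨x, rfl⟩ := Nat.exists_eq_add_of_le hv2
    obtain ⟨k, hk'⟩ := Nat.exists_eq_add_of_le hk
    rw [hk'] at hdm ⊢
    nlinarith

lemma exists_small_combination {b c n : ℕ} (hc : 0 < c) (hbc : Nat.Coprime b c)
    (hn : c * b ≤ n) : ∃ x y : ℕ, x < c ∧ x * b + y * c = n := by
  obtain ⟨x, hx, hxm⟩ : ∃ x : ℕ, x < c ∧ x * b ≡ n [MOD c] := by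
    have : NeZero c := ⟨hc.ne'⟩
    refine ⟨((n : ZMod c) * (b : ZMod c)⁻¹).val, ZMod.val_lt _, ?_⟩
    rw [← ZMod.natCast_eq_natCast_iff]
    have hu := ZMod.coe_mul_inv_eq_one b hbc
    push_cast
    rw [ZMod.natCast_zmod_val, mul_assoc, mul_comm _ (b : ZMod c), hu, mul_one]
  have hle : x * b ≤ n := (Nat.mul_le_mul_right b hx.le).trans hn
  obtain ⟨y, hy⟩ := (Nat.modEq_iff_dvd' hle).1 hxm
  exact ⟨x, y, hx, by rw [mul_comm y c, ← hy]; omega⟩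

/-- A far residue is, modulo a large divisor `p ^ (t - j)` of `p ^ t`, a quotient `c / b` of two
integers less than `2 * M`. Dirichlet approximation supplies `β * v ≡ r` with `β < 2 * M` and
`|r| ≤ N / (2 * M)`; farness forces `r > 0`. Cancelling the common factors of `β` and `r` leaves
coprime `b` and `c`, and writing `N / p ^ j` as `x * b + y * c` gives a relation of cost less than
`N / (2 * M) + N / c`, which bounds `c`. -/
lemma IsFar.exists_fraction {p t v : ℕ} (hp : p.Prime) {M : ℝ} (hM : 1 ≤ M)
    (h : IsFar (p ^ t) M v) (hN : 4 * M ^ 2 < (p : ℝ) ^ t) :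
    ∃ j b c : ℕ, j ≤ t ∧ 1 ≤ b ∧ 1 ≤ c ∧ (p : ℝ) ^ j * b < 2 * M ∧ (c : ℝ) < 2 * M ∧
      Nat.Coprime b p ∧ b * v ≡ c [MOD p ^ (t - j)] := by
  obtain ⟨hvN, h⟩ := h
  have hM0 : 0 < M := by linarith
  set N := p ^ t with hNdef
  have hNpos : 0 < N := pow_pos hp.pos t
  have hNR : (0 : ℝ) < N := by exact_mod_cast hNpos
  have hN' : 4 * M ^ 2 < (N : ℝ) := by rw [hNdef]; push_cast; exact hN
  obtain ⟨X, hX1, hX2, hX0⟩ : ∃ X : ℕ, (X : ℝ) < 2 * M ∧ 2 * M ≤ X + 1 ∧ 0 < X := by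
    have h1 : 1 < ⌈2 * M⌉₊ := by rw [Nat.lt_ceil]; push_cast; linarith
    refine ⟨⌈2 * M⌉₊ - 1, ?_, ?_, by omega⟩
    · rw [← Nat.lt_ceil]; omega
    · have := Nat.le_ceil (2 * M)
      rw [Nat.cast_sub h1.le]; push_cast; linarith
  obtain ⟨z, β', hβ0', hβX', happ⟩ := Real.exists_int_int_abs_mul_sub_le ((v : ℝ) / N) hX0
  obtain ⟨β, rfl⟩ := Int.eq_ofNat_of_zero_le hβ0'.le
  have hβ0 : 0 < β := by exact_mod_cast hβ0'
  have hβX : β ≤ X := by exact_mod_cast hβX'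
  have hβM : (β : ℝ) < 2 * M := lt_of_le_of_lt (by exact_mod_cast hβX) hX1
  obtain ⟨r, hr⟩ : ∃ r : ℤ, r = β * v - N * z := ⟨_, rfl⟩
  have hrR : (r : ℝ) = β * v - N * z := by rw [hr]; push_cast; ring
  have hrabs : |(r : ℝ)| * (2 * M) ≤ N := by
    have e : (r : ℝ) = N * (((β : ℕ) : ℤ) * ((v : ℝ) / N) - z) := by
      rw [hrR]; push_cast; field_simp
    rw [e, abs_mul, abs_of_pos hNR]
    have h3 : |((β : ℕ) : ℤ) * ((v : ℝ) / N) - z| * (X + 1) ≤ 1 := by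
      rwa [le_div_iff₀ (by positivity)] at happ
    have h4 : |((β : ℕ) : ℤ) * ((v : ℝ) / N) - z| * (2 * M) ≤ 1 :=
      (mul_le_mul_of_nonneg_left hX2 (abs_nonneg _)).trans h3
    calc _ = (N : ℝ) * (|((β : ℕ) : ℤ) * ((v : ℝ) / N) - z| * (2 * M)) := by ring
      _ ≤ N * 1 := mul_le_mul_of_nonneg_left h4 hNR.le
      _ = N := mul_one _
  have hrpos : 0 < r := by
    by_contra hneg
    push Not at hneg
    obtain ⟨m, hm⟩ := Int.eq_ofNat_of_zero_le (neg_nonneg.2 hneg)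
    have hd : N ∣ m + β * v := by
      have : (N : ℤ) ∣ ((m + β * v : ℕ) : ℤ) := ⟨z, by push_cast; rw [← hm, hr]; ring⟩
      exact_mod_cast this
    have h1 := h m β (by omega) hd
    have hm' : (m : ℝ) = -r := by exact_mod_cast hm.symm
    have h2 : (m : ℝ) * (2 * M) ≤ N := by
      rw [hm', ← abs_of_nonpos (by exact_mod_cast hneg : (r : ℝ) ≤ 0)]; exact hrabs
    push_cast at h1
    nlinarith
  obtain ⟨r, rfl⟩ := Int.eq_ofNat_of_zero_le hrpos.le
  have hr0 : 0 < r := by exact_mod_cast hrpos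
  have hrM : (r : ℝ) * (2 * M) ≤ N := by simpa using hrabs
  obtain ⟨j, b₀, hb₀p, hβe⟩ := Nat.exists_eq_pow_mul_and_not_dvd hβ0.ne' p hp.ne_one
  have hβN : β < N := by
    have : (β : ℝ) < N := by nlinarith
    exact_mod_cast this
  have hjt : j ≤ t := by
    by_contra hlt
    have h1 : p ^ t ≤ p ^ j := Nat.pow_le_pow_right hp.pos (by omega)
    have h2 : p ^ j ≤ β := Nat.le_of_dvd hβ0 ⟨b₀, hβe⟩
    omega
  set N' := p ^ (t - j) with hN'def
  have hNN' : N = p ^ j * N' := by rw [hNdef, hN'def, ← pow_add]; congr 1; omega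
  have hpj : 0 < p ^ j := pow_pos hp.pos j
  have hpr : p ^ j ∣ r := by
    have : ((p ^ j : ℕ) : ℤ) ∣ (r : ℤ) := by
      have e : (r : ℤ) = ((p ^ j : ℕ) : ℤ) * (b₀ * v - N' * z) := by
        have h1 : (r : ℤ) = β * v - N * z := hr
        rw [hβe, hNN'] at h1
        rw [h1]; push_cast; ring
      exact ⟨_, e⟩
    exact_mod_cast this
  obtain ⟨c₀, hc₀⟩ := hpr
  have hc₀0 : 0 < c₀ := by
    rcases Nat.eq_zero_or_pos c₀ with h0 | h0
    · subst h0; omega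
    · exact h0
  have hb₀0 : 0 < b₀ := by
    rcases Nat.eq_zero_or_pos b₀ with h0 | h0
    · subst h0; omega
    · exact h0
  obtain ⟨d, hdd⟩ : ∃ d, d = Nat.gcd b₀ c₀ := ⟨_, rfl⟩
  have hd0 : 0 < d := hdd ▸ Nat.gcd_pos_of_pos_left _ hb₀0
  obtain ⟨b, hb⟩ : d ∣ b₀ := hdd ▸ Nat.gcd_dvd_left _ _
  obtain ⟨c, hc⟩ : d ∣ c₀ := hdd ▸ Nat.gcd_dvd_right _ _
  have hbc : Nat.Coprime b c := by
    have : d * Nat.gcd b c = d * 1 := by rw [← Nat.gcd_mul_left, ← hb, ← hc, ← hdd, mul_one]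
    exact Nat.eq_of_mul_eq_mul_left hd0 this
  have hb0 : 0 < b := by
    rcases Nat.eq_zero_or_pos b with h0 | h0
    · subst h0; omega
    · exact h0
  have hc0 : 0 < c := by
    rcases Nat.eq_zero_or_pos c with h0 | h0
    · subst h0; omega
    · exact h0
  have hb₀cop : Nat.Coprime b₀ p := ((Nat.Prime.coprime_iff_not_dvd hp).2 hb₀p).symm
  have hdp : Nat.Coprime d p := hb₀cop.coprime_dvd_left ⟨b, hb⟩
  have hbp : Nat.Coprime b p := hb₀cop.coprime_dvd_left ⟨d, by rw [hb, mul_comm]⟩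
  have hcong : b * v ≡ c [MOD N'] := by
    have h1 : (N' : ℤ) ∣ (d : ℤ) * (b * v - c) := by
      refine ⟨z, ?_⟩
      have h2 : ((p ^ j : ℕ) : ℤ) * ((d : ℤ) * (b * v - c)) = ((p ^ j : ℕ) : ℤ) * (N' * z) := by
        have h3 : (r : ℤ) = β * v - N * z := hr
        rw [hβe, hNN', hc₀, hb, hc] at h3
        push_cast at h3 ⊢
        linarith
      exact mul_left_cancel₀ (by exact_mod_cast hpj.ne') h2
    have hcop : IsCoprime (N' : ℤ) (d : ℤ) :=
      Nat.isCoprime_iff_coprime.2 (hdp.symm.pow_left _)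
    have h2 := hcop.dvd_of_dvd_mul_left h1
    refine ((Nat.modEq_iff_dvd (a := c) (b := b * v)).2 ?_).symm
    push_cast; exact h2
  have hbβ : p ^ j * b ≤ β := by
    rw [hβe, hb]; exact Nat.mul_le_mul_left _ (Nat.le_mul_of_pos_left _ hd0)
  have hcr : p ^ j * c ≤ r := by
    rw [hc₀, hc]; exact Nat.mul_le_mul_left _ (Nat.le_mul_of_pos_left _ hd0)
  have hbM : (p : ℝ) ^ j * b < 2 * M := lt_of_le_of_lt (by exact_mod_cast hbβ) hβM
  refine ⟨j, b, c, hjt, hb0, hc0, hbM, ?_, hbp, hcong⟩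
  have hcb : c * b ≤ N' := by
    have h1 : r * b ≤ N := by
      have h2 : (r : ℝ) * b ≤ N := by
        refine le_trans (mul_le_mul_of_nonneg_left ?_ (Nat.cast_nonneg r)) hrM
        refine le_trans ?_ hbM.le
        exact_mod_cast Nat.le_mul_of_pos_left _ hpj
      exact_mod_cast h2
    have h3 : p ^ j * (c * b) ≤ p ^ j * N' := by
      rw [← hNN', ← mul_assoc]; exact (Nat.mul_le_mul_right _ hcr).trans h1
    exact Nat.le_of_mul_le_mul_left h3 hpj
  obtain ⟨x, y, hxc, hxy⟩ := exists_small_combination hc0 hbc hcb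
  have hN'0 : 0 < N' := pow_pos hp.pos _
  have hrel : N ∣ p ^ j * x + p ^ j * y * v := by
    have h1 : N' ∣ b * (x + y * v) := by
      have h2 : b * (x + y * v) ≡ 0 [MOD N'] := by
        calc b * (x + y * v) = x * b + y * (b * v) := by ring
          _ ≡ x * b + y * c [MOD N'] := (hcong.mul_left y).add_left _
          _ = N' := hxy
          _ ≡ 0 [MOD N'] := by simp [Nat.ModEq]
      exact (Nat.modEq_zero_iff_dvd).1 h2
    have h3 : N' ∣ x + y * v := Nat.Coprime.dvd_of_dvd_mul_left (hbp.symm.pow_left _) h1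
    rw [hNN', mul_assoc, ← mul_add]
    exact Nat.mul_dvd_mul_left _ h3
  have hcost := h (p ^ j * x) (p ^ j * y) (by
    rintro ⟨h1, h2⟩
    have hx0 : x = 0 := by rcases Nat.mul_eq_zero.1 h1 with h | h <;> omega
    have hy0 : y = 0 := by rcases Nat.mul_eq_zero.1 h2 with h | h <;> omega
    subst hx0 hy0; simp at hxy; omega) hrel
  have hx1 : p ^ j * x < r :=
    lt_of_lt_of_le (Nat.mul_lt_mul_of_pos_left hxc hpj) hcr
  have hy1 : p ^ j * y * c ≤ N := by
    rw [hNN', mul_assoc]; exact Nat.mul_le_mul_left _ (by omega)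
  have hx1' : ((p ^ j * x : ℕ) : ℝ) < r := by exact_mod_cast hx1
  have hy1' : ((p ^ j * y : ℕ) : ℝ) * c ≤ N := by exact_mod_cast hy1
  have hcR : (0 : ℝ) < c := by exact_mod_cast hc0
  rw [Nat.cast_add] at hcost
  generalize ((p ^ j * x : ℕ) : ℝ) = A at *
  generalize ((p ^ j * y : ℕ) : ℝ) = B at *
  have h5 : M * A < N / 2 := by nlinarith
  have h6 : (N : ℝ) / 2 < M * B := by nlinarith
  have h7 : (N : ℝ) / 2 * c < M * N := by nlinarith
  nlinarith

open Classical in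
lemma card_solutions_le {p t j b c : ℕ} :
    ((Finset.range (p ^ t)).filter fun v =>
      j ≤ t ∧ Nat.Coprime b p ∧ b * v ≡ c [MOD p ^ (t - j)]).card ≤ p ^ j := by
  rw [← Finset.card_range (p ^ j)]
  refine Finset.card_le_card_of_injOn (fun v => v / p ^ (t - j)) ?_ ?_
  · intro v hv
    simp only [Finset.coe_filter, Finset.mem_range, Set.mem_ofPred_eq] at hv
    simp only [Finset.coe_range, Set.mem_Iio]
    apply Nat.div_lt_of_lt_mul
    rw [← pow_add, Nat.sub_add_cancel hv.2.1]
    exact hv.1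
  · intro v hv w hw hvw
    simp only [Finset.coe_filter, Finset.mem_range, Set.mem_ofPred_eq] at hv hw
    have h1 : b * v ≡ b * w [MOD p ^ (t - j)] := hv.2.2.2.trans hw.2.2.2.symm
    have h2 : v % p ^ (t - j) = w % p ^ (t - j) :=
      Nat.ModEq.cancel_left_of_coprime (hv.2.2.1.symm.pow_left _) h1
    simp only at hvw
    rw [← Nat.mod_add_div v (p ^ (t - j)), ← Nat.mod_add_div w (p ^ (t - j)), h2, hvw]

/-- Counting far residues by the fractions of `IsFar.exists_fraction`: the pairs `(b, c)` at
level `j` number at most `(2 * M / p ^ j) * (2 * M)`, and each accounts for at most `p ^ j`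
residues. -/
lemma card_farSet_le_of_large {p t n : ℕ} (hp : p.Prime) {M : ℝ} (hM : 1 ≤ M)
    (hN : 4 * M ^ 2 < (p : ℝ) ^ t) (hn : 2 * M ≤ (p : ℝ) ^ n) :
    ((farSet (p ^ t) M).card : ℝ) ≤ 4 * M ^ 2 * n := by
  classical
  set S : ℕ → ℕ × ℕ → Finset ℕ := fun j q => (Finset.range (p ^ t)).filter fun v =>
      j ≤ t ∧ Nat.Coprime q.1 p ∧ q.1 * v ≡ q.2 [MOD p ^ (t - j)] with hS
  set I : ℕ → Finset (ℕ × ℕ) := fun j =>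
    Finset.Icc 1 ⌊2 * M / (p : ℝ) ^ j⌋₊ ×ˢ Finset.Icc 1 ⌊2 * M⌋₊ with hI
  have hp1 : (1 : ℝ) < p := by exact_mod_cast hp.one_lt
  have hsub : farSet (p ^ t) M ⊆ (Finset.range n).biUnion fun j => (I j).biUnion (S j) := by
    intro v hv
    rw [mem_farSet] at hv
    obtain ⟨j, b, c, hjt, hb, hc, hbM, hcM, hbp, hcong⟩ := hv.exists_fraction hp hM hN
    have hpj : (0 : ℝ) < (p : ℝ) ^ j := by positivity
    have hjn : j < n := by
      have h1 : (p : ℝ) ^ j < (p : ℝ) ^ n := by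
        refine lt_of_lt_of_le ?_ hn
        refine lt_of_le_of_lt ?_ hbM
        have : (1 : ℝ) ≤ b := by exact_mod_cast hb
        nlinarith
      exact (pow_lt_pow_iff_right₀ hp1).1 h1
    simp only [Finset.mem_biUnion, Finset.mem_range]
    refine ⟨j, hjn, (b, c), ?_, ?_⟩
    · simp only [hI, Finset.mem_product, Finset.mem_Icc]
      refine ⟨⟨hb, Nat.le_floor ?_⟩, hc, Nat.le_floor hcM.le⟩
      rw [le_div_iff₀ hpj]; linarith
    · simp only [hS, Finset.mem_filter, Finset.mem_range]
      exact ⟨hv.1, hjt, hbp, hcong⟩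
  have h1 : (farSet (p ^ t) M).card ≤ ∑ j ∈ Finset.range n, (I j).card * p ^ j := by
    refine (Finset.card_le_card hsub).trans (Finset.card_biUnion_le.trans ?_)
    refine Finset.sum_le_sum fun j _ => ?_
    exact Finset.card_biUnion_le_card_mul _ _ _ fun q _ => card_solutions_le
  have h2 : ((farSet (p ^ t) M).card : ℝ) ≤ ∑ j ∈ Finset.range n, ((I j).card : ℝ) * (p : ℝ) ^ j := by
    exact_mod_cast h1
  refine h2.trans ?_
  have h3 : ∀ j ∈ Finset.range n, ((I j).card : ℝ) * (p : ℝ) ^ j ≤ 4 * M ^ 2 := by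
    intro j _
    have hpj : (0 : ℝ) < (p : ℝ) ^ j := by positivity
    simp only [hI, Finset.card_product, Nat.card_Icc, Nat.add_sub_cancel, Nat.cast_mul]
    calc (⌊2 * M / (p : ℝ) ^ j⌋₊ : ℝ) * (⌊2 * M⌋₊ : ℝ) * (p : ℝ) ^ j
        ≤ (2 * M / (p : ℝ) ^ j) * (2 * M) * (p : ℝ) ^ j := by
          gcongr
          · exact Nat.floor_le (by positivity)
          · exact Nat.floor_le (by positivity)
      _ = 4 * M ^ 2 := by field_simp; ring
  refine (Finset.sum_le_sum h3).trans ?_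
  simp [mul_comm]

/-- The bound for far residues. If `N ≤ 4 * M ^ 5`, then `N` itself is at most the bracket and the
trivial bound `N` suffices; otherwise either `M < 1.9` and only `v = 1` is far, or the count by
fractions applies. -/
lemma card_farSet_sq_le {p t : ℕ} (hp : p.Prime) {M : ℝ} (hM : 1 ≤ M) :
    ((farSet (p ^ t) M).card : ℝ) ^ 2 ≤ 5 / 4 * M ^ 8 * bracketP p (4 * M ^ 5) := by
  set B := bracketP p (4 * M ^ 5) with hB
  have hB1 : 1 ≤ B := one_le_bracketP hp _
  have hM8 : 1 ≤ M ^ 8 := one_le_pow₀ hM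
  have hp2 : (2 : ℝ) ≤ p := by exact_mod_cast hp.two_le
  set V := farSet (p ^ t) M with hV
  by_cases hone : V.card ≤ 1
  · have h1 : (V.card : ℝ) ≤ 1 := by exact_mod_cast hone
    have h2 : (V.card : ℝ) ^ 2 ≤ 1 := pow_le_one₀ (by positivity) h1
    nlinarith
  have hcard : (V.card : ℝ) ≤ (p : ℝ) ^ t := by exact_mod_cast card_farSet_le (p ^ t) M
  have hN2 : (2 : ℝ) ≤ (p : ℝ) ^ t := by
    refine le_trans ?_ hcard
    exact_mod_cast (not_le.1 hone)
  have hfar : 2 * (p : ℝ) ^ t ≤ M * ((p : ℝ) ^ t + 2) := by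
    push Not at hone
    obtain ⟨v, hv, hv1⟩ := Finset.exists_mem_ne hone 1
    have := (mem_farSet.1 hv).two_mul_le (by linarith) hv1
    exact_mod_cast this
  by_cases hsmall : (p : ℝ) ^ t ≤ 4 * M ^ 5
  · have hBN : (p : ℝ) ^ t ≤ B := pow_le_bracketP hp hsmall
    have hsq : (V.card : ℝ) ^ 2 ≤ ((p : ℝ) ^ t) ^ 2 := by gcongr
    refine hsq.trans ?_
    by_cases h2 : p ^ t = 2
    · -- here `p = 2`, and the bracket is at least `4`
      have hp' : p = 2 := by
        have ht : t ≠ 0 := by rintro rfl; simp at h2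
        exact (Nat.prime_dvd_prime_iff_eq hp Nat.prime_two).1 (h2 ▸ dvd_pow_self p ht)
      have h2' : (p : ℝ) ^ t = 2 := by exact_mod_cast h2
      have h4 : (p : ℝ) ^ 2 ≤ B := by
        apply pow_le_bracketP hp
        have : 1 ≤ M ^ 5 := one_le_pow₀ hM
        rw [hp']; push_cast; linarith
      rw [hp'] at h4
      push_cast at h4
      rw [h2']
      nlinarith
    · have h3 : (3 : ℝ) ≤ (p : ℝ) ^ t := by
        have h2' : 2 ≤ p ^ t := by exact_mod_cast hN2
        have : 3 ≤ p ^ t := by omega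
        exact_mod_cast this
      have hM65 : 6 / 5 ≤ M := by nlinarith
      have key : (p : ℝ) ^ t ≤ 5 / 4 * M ^ 8 := by
        by_cases h6 : (6 : ℝ) ≤ (p : ℝ) ^ t
        · have hM32 : 3 / 2 ≤ M := by nlinarith
          have hM3 : (3 / 2 : ℝ) ^ 3 ≤ M ^ 3 := by gcongr
          have hM5 : 0 < M ^ 5 := by positivity
          calc (p : ℝ) ^ t ≤ 4 * M ^ 5 := hsmall
            _ ≤ 5 / 4 * (M ^ 3 * M ^ 5) := by nlinarith
            _ = 5 / 4 * M ^ 8 := by ring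
        · have h5 : (p : ℝ) ^ t ≤ 5 := by
            have : p ^ t < 6 := by exact_mod_cast (not_le.1 h6)
            have : p ^ t ≤ 5 := by omega
            exact_mod_cast this
          have : (6 / 5 : ℝ) ^ 8 ≤ M ^ 8 := by gcongr
          norm_num at this
          linarith
      calc ((p : ℝ) ^ t) ^ 2 = (p : ℝ) ^ t * (p : ℝ) ^ t := sq _
        _ ≤ (5 / 4 * M ^ 8) * B := by gcongr
  · push Not at hsmall
    have hM19 : 19 / 10 ≤ M := by
      by_contra hlt
      push Not at hlt
      have h1 : (p : ℝ) ^ t * (2 - M) ≤ 2 * M := by linarith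
      have h2 : 4 * M ^ 5 * (2 - M) < 2 * M := by
        refine lt_of_lt_of_le ?_ h1
        have : 0 < 2 - M := by linarith
        gcongr
      have h3 : 2 * M ^ 4 * (2 - M) < 1 := by
        by_contra h4
        push Not at h4
        nlinarith
      rcases le_total M (3 / 2) with h | h
      · have : 1 ≤ M ^ 4 := one_le_pow₀ hM
        nlinarith
      · have : (3 / 2 : ℝ) ^ 4 ≤ M ^ 4 := by gcongr
        nlinarith
    have hM4 : (19 / 10 : ℝ) ^ 4 ≤ M ^ 4 := by gcongr
    have hMN : 4 * M ^ 2 < (p : ℝ) ^ t := by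
      refine lt_of_le_of_lt ?_ hsmall
      have : M ^ 2 ≤ M ^ 5 := pow_le_pow_right₀ hM (by norm_num)
      linarith
    have hex : ∃ n : ℕ, 2 * M ≤ (p : ℝ) ^ n := by
      obtain ⟨n, hn⟩ := pow_unbounded_of_one_lt (2 * M) (by linarith : (1 : ℝ) < p)
      exact ⟨n, hn.le⟩
    classical
    obtain ⟨n, hn, hnB⟩ : ∃ n : ℕ, 2 * M ≤ (p : ℝ) ^ n ∧ ((n : ℝ)) ^ 2 ≤ B := by
      refine ⟨Nat.find hex, Nat.find_spec hex, ?_⟩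
      obtain ⟨m, hm⟩ : ∃ m, Nat.find hex = m + 1 := by
        refine Nat.exists_eq_succ_of_ne_zero fun h0 => ?_
        have := Nat.find_spec hex
        rw [h0, pow_zero] at this
        linarith
      rw [hm]
      have hmin : (p : ℝ) ^ m < 2 * M := by
        have := Nat.find_min hex (m := m) (by omega)
        exact not_le.1 this
      have h1 : (p : ℝ) ^ (2 * m) ≤ B := by
        apply pow_le_bracketP hp
        have h2 : (p : ℝ) ^ (2 * m) = ((p : ℝ) ^ m) ^ 2 := by rw [mul_comm, pow_mul]
        have h3 : ((p : ℝ) ^ m) ^ 2 ≤ (2 * M) ^ 2 := by gcongr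
        have : M ^ 2 ≤ M ^ 5 := pow_le_pow_right₀ hM (by norm_num)
        rw [h2]; nlinarith
      refine le_trans ?_ h1
      have h4 : m + 1 ≤ 2 ^ m := Nat.lt_two_pow_self
      have h5 : ((m + 1 : ℕ) : ℝ) ≤ (p : ℝ) ^ m :=
        le_trans (by exact_mod_cast h4) (pow_le_pow_left₀ (by norm_num) hp2 m)
      rw [mul_comm 2 m, pow_mul]
      gcongr
    have hmain := card_farSet_le_of_large hp hM hMN hn
    calc (V.card : ℝ) ^ 2 ≤ (4 * M ^ 2 * n) ^ 2 := by gcongr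
      _ = 16 * M ^ 4 * n ^ 2 := by ring
      _ ≤ 16 * M ^ 4 * B := by gcongr
      _ ≤ 5 / 4 * M ^ 4 * M ^ 4 * B := by
          have : (0 : ℝ) < M ^ 4 := by positivity
          gcongr
          nlinarith
      _ = 5 / 4 * M ^ 8 * B := by ring

lemma farSet_eq_empty {N : ℕ} {M : ℝ} (hN : 0 < N) (hM : M < 1) : farSet N M = ∅ := by
  refine Finset.eq_empty_of_forall_notMem fun v hv => ?_
  have h := (mem_farSet.1 hv).2 N 0 (by omega) (by simp)
  have hNR : (0 : ℝ) < N := by exact_mod_cast hN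
  simp only [add_zero] at h
  nlinarith

/-! ### Normal forms of triples -/

/-- The triple with entry `p ^ k` in position `i` and entries `p ^ k * v`, `p ^ k * w` in the
other two positions. -/
def normalTriple (p s k : ℕ) (i : Fin 3) (v w : ℕ) : T p s :=
  match i with
  | 0 => ((p : ZMod (p ^ s)) ^ k, (p : ZMod (p ^ s)) ^ k * v, (p : ZMod (p ^ s)) ^ k * w)
  | 1 => ((p : ZMod (p ^ s)) ^ k * v, (p : ZMod (p ^ s)) ^ k, (p : ZMod (p ^ s)) ^ k * w)
  | 2 => ((p : ZMod (p ^ s)) ^ k * v, (p : ZMod (p ^ s)) ^ k * w, (p : ZMod (p ^ s)) ^ k)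

lemma exists_eq_unit_mul_pow {p s : ℕ} (hp : p.Prime) (x : ZMod (p ^ s)) :
    ∃ (k : ℕ) (c : (ZMod (p ^ s))ˣ), k ≤ s ∧ x = c * (p : ZMod (p ^ s)) ^ k := by
  have : NeZero (p ^ s) := ⟨(pow_pos hp.pos s).ne'⟩
  by_cases h0 : x.val = 0
  · refine ⟨s, 1, le_rfl, ?_⟩
    have h1 : (p : ZMod (p ^ s)) ^ s = 0 := by exact_mod_cast ZMod.natCast_self (p ^ s)
    rw [h1, mul_zero]
    exact (ZMod.val_eq_zero x).1 h0
  · obtain ⟨k, m, hm, hx⟩ := Nat.exists_eq_pow_mul_and_not_dvd h0 p hp.ne_one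
    have hcop : Nat.Coprime m (p ^ s) :=
      (((Nat.Prime.coprime_iff_not_dvd hp).2 hm).symm).pow_right s
    refine ⟨k, ZMod.unitOfCoprime m hcop, ?_, ?_⟩
    · have h1 : p ^ k ≤ x.val := Nat.le_of_dvd (Nat.pos_of_ne_zero h0) ⟨m, hx⟩
      have h2 : p ^ k < p ^ s := lt_of_le_of_lt h1 (ZMod.val_lt x)
      exact ((Nat.pow_lt_pow_iff_right hp.one_lt).1 h2).le
    · rw [ZMod.coe_unitOfCoprime, ← ZMod.natCast_zmod_val x, hx]
      push_cast; ring

lemma pow_mul_eq_zero {p s k a : ℕ} (hk : k ≤ s) (h : p ^ (s - k) ∣ a) :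
    (p : ZMod (p ^ s)) ^ k * a = 0 := by
  obtain ⟨m, rfl⟩ := h
  have h1 : ((p ^ k * (p ^ (s - k) * m) : ℕ) : ZMod (p ^ s)) = 0 := by
    rw [ZMod.natCast_eq_zero_iff, ← mul_assoc, ← pow_add, Nat.add_sub_cancel' hk]
    exact dvd_mul_right _ _
  exact_mod_cast h1

/-- After multiplication by the unit that turns `x` into `p ^ k`, an entry `y` of at least the same
valuation becomes `p ^ k * v` with `v` far modulo `p ^ (s - k)`. -/
lemma exists_far_entry {p s k l : ℕ} (hp : p.Prime) {ε : ℝ} (hε : 0 < ε) {x y : ZMod (p ^ s)}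
    {c d : (ZMod (p ^ s))ˣ} (hk : k ≤ s) (hx : x = c * (p : ZMod (p ^ s)) ^ k)
    (hy : y = d * (p : ZMod (p ^ s)) ^ l) (hkl : k ≤ l)
    (H : ∀ a b : ℕ, ¬(a = 0 ∧ b = 0) → (a : ZMod (p ^ s)) * x + b * y = 0 →
      ε * (p : ℝ) ^ s ≤ ((a + b : ℕ) : ℝ)) :
    ∃ v ∈ farSet (p ^ (s - k)) (ε⁻¹ / (p : ℝ) ^ k), y = c * ((p : ZMod (p ^ s)) ^ k * v) := by
  have : NeZero (p ^ s) := ⟨(pow_pos hp.pos s).ne'⟩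
  obtain ⟨z, hz⟩ : ∃ z : ℕ, (z : ZMod (p ^ s)) =
      (c⁻¹ : (ZMod (p ^ s))ˣ) * d * (p : ZMod (p ^ s)) ^ (l - k) :=
    ⟨_, ZMod.natCast_zmod_val _⟩
  have hyz : y = c * ((p : ZMod (p ^ s)) ^ k * z) := by
    rw [hz, hy, ← Nat.sub_add_cancel hkl, pow_add, Nat.add_sub_cancel]
    calc (d : ZMod (p ^ s)) * ((p : ZMod (p ^ s)) ^ (l - k) * (p : ZMod (p ^ s)) ^ k)
        = (c * (c⁻¹ : (ZMod (p ^ s))ˣ) : ZMod (p ^ s)) *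
          (d * ((p : ZMod (p ^ s)) ^ (l - k) * (p : ZMod (p ^ s)) ^ k)) := by
            rw [Units.mul_inv, one_mul]
      _ = _ := by ring
  have hyv : y = c * ((p : ZMod (p ^ s)) ^ k * (z % p ^ (s - k) : ℕ)) := by
    rw [hyz]
    congr 1
    conv_lhs => rw [← Nat.mod_add_div z (p ^ (s - k))]
    rw [Nat.cast_add, mul_add, pow_mul_eq_zero hk (dvd_mul_right _ _), add_zero]
  refine ⟨z % p ^ (s - k), ?_, hyv⟩
  rw [mem_farSet]
  refine ⟨Nat.mod_lt _ (pow_pos hp.pos _), fun a b hab hdvd => ?_⟩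
  have hrel : (a : ZMod (p ^ s)) * x + b * y = 0 := by
    have h1 := pow_mul_eq_zero hk hdvd
    rw [hyv, hx]
    push_cast at h1 ⊢
    linear_combination (c : ZMod (p ^ s)) * h1
  have h2 := H a b hab hrel
  have hpk : (0 : ℝ) < (p : ℝ) ^ k := pow_pos (by exact_mod_cast hp.pos) k
  rw [← Nat.sub_add_cancel hk, pow_add] at h2
  rw [Nat.cast_pow, div_mul_eq_mul_div, le_div_iff₀ hpk, inv_mul_eq_div, le_div_iff₀ hε]
  linarith

lemma le_of_relation {p s : ℕ} (hp : p.Prime) {ε : ℝ} {u v w : ZMod (p ^ s)}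
    (h : ε ≤ deltaT p s u v w) (a b c : ℕ) (habc : ¬(a = 0 ∧ b = 0 ∧ c = 0))
    (hrel : (a : ZMod (p ^ s)) * u + b * v + c * w = 0) :
    ε * (p : ℝ) ^ s ≤ ((a + b + c : ℕ) : ℝ) := by
  have hps : (0 : ℝ) < (p : ℝ) ^ s := pow_pos (by exact_mod_cast hp.pos) s
  rw [deltaT, le_div_iff₀ hps] at h
  refine h.trans (Nat.cast_le.2 (Nat.sInf_le ?_))
  exact ⟨a, b, c, habc, hrel, rfl⟩

/-- Scaling an entry of minimal valuation to a power of `p` puts every triple with `δ ≥ ε` into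
normal form with far parameters. -/
lemma exists_normalTriple {p s : ℕ} (hp : p.Prime) {ε : ℝ} (hε : 0 < ε) {u v w : ZMod (p ^ s)}
    (h : ε ≤ deltaT p s u v w) :
    ∃ k ≤ s, ∃ i : Fin 3, ∃ x ∈ farSet (p ^ (s - k)) (ε⁻¹ / (p : ℝ) ^ k),
      ∃ y ∈ farSet (p ^ (s - k)) (ε⁻¹ / (p : ℝ) ^ k),
        (unitSetoid p s).r (normalTriple p s k i x y) (u, v, w) := by
  have R := le_of_relation hp h
  obtain ⟨k, c, hks, hu⟩ := exists_eq_unit_mul_pow hp u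
  obtain ⟨l, d, hls, hv⟩ := exists_eq_unit_mul_pow hp v
  obtain ⟨m, e, hms, hw⟩ := exists_eq_unit_mul_pow hp w
  have huv : ∀ a b : ℕ, ¬(a = 0 ∧ b = 0) → (a : ZMod (p ^ s)) * u + b * v = 0 →
      ε * (p : ℝ) ^ s ≤ ((a + b : ℕ) : ℝ) := fun a b hab hr => by
    simpa using R a b 0 (by tauto) (by simpa using hr)
  have huw : ∀ a b : ℕ, ¬(a = 0 ∧ b = 0) → (a : ZMod (p ^ s)) * u + b * w = 0 →
      ε * (p : ℝ) ^ s ≤ ((a + b : ℕ) : ℝ) := fun a b hab hr => by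
    simpa using R a 0 b (by tauto) (by simpa using hr)
  have hvw : ∀ a b : ℕ, ¬(a = 0 ∧ b = 0) → (a : ZMod (p ^ s)) * v + b * w = 0 →
      ε * (p : ℝ) ^ s ≤ ((a + b : ℕ) : ℝ) := fun a b hab hr => by
    simpa using R 0 a b (by tauto) (by simpa using hr)
  have hswap : ∀ {x y : ZMod (p ^ s)},
      (∀ a b : ℕ, ¬(a = 0 ∧ b = 0) → (a : ZMod (p ^ s)) * x + b * y = 0 →
        ε * (p : ℝ) ^ s ≤ ((a + b : ℕ) : ℝ)) →
      ∀ a b : ℕ, ¬(a = 0 ∧ b = 0) → (a : ZMod (p ^ s)) * y + b * x = 0 →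
        ε * (p : ℝ) ^ s ≤ ((a + b : ℕ) : ℝ) := fun H a b hab hr => by
    rw [add_comm a b]
    exact H b a (by tauto) (by rw [add_comm]; exact hr)
  have hmin : (k ≤ l ∧ k ≤ m) ∨ (l ≤ k ∧ l ≤ m) ∨ (m ≤ k ∧ m ≤ l) := by omega
  rcases hmin with ⟨h1, h2⟩ | ⟨h1, h2⟩ | ⟨h1, h2⟩
  · obtain ⟨x, hx, hx'⟩ := exists_far_entry hp hε hks hu hv h1 huv
    obtain ⟨y, hy, hy'⟩ := exists_far_entry hp hε hks hu hw h2 huw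
    exact ⟨k, hks, 0, x, hx, y, hy, c, hu, hx', hy'⟩
  · obtain ⟨x, hx, hx'⟩ := exists_far_entry hp hε hls hv hu h1 (hswap huv)
    obtain ⟨y, hy, hy'⟩ := exists_far_entry hp hε hls hv hw h2 hvw
    exact ⟨l, hls, 1, x, hx, y, hy, d, hx', hv, hy'⟩
  · obtain ⟨x, hx, hx'⟩ := exists_far_entry hp hε hms hw hu h1 (hswap huw)
    obtain ⟨y, hy, hy'⟩ := exists_far_entry hp hε hms hw hv h2 (hswap hvw)
    exact ⟨m, hms, 2, x, hx, y, hy, e, hx', hy', hw⟩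

lemma card_classes_le {p s : ℕ} (hp : p.Prime) {ε : ℝ} (hε : 0 < ε) :
    Nat.card {q : Quotient (unitSetoid p s) //
        ∃ u v w : ZMod (p ^ s), q = Quotient.mk (unitSetoid p s) (u, v, w) ∧
          ε ≤ deltaT p s u v w} ≤
      ∑ k ∈ Finset.range (s + 1), 3 * (farSet (p ^ (s - k)) (ε⁻¹ / (p : ℝ) ^ k)).card ^ 2 := by
  classical
  set F : ℕ → Finset ℕ := fun k => farSet (p ^ (s - k)) (ε⁻¹ / (p : ℝ) ^ k) with hF
  set J : Finset (Σ _ : ℕ, Fin 3 × ℕ × ℕ) :=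
    (Finset.range (s + 1)).sigma fun k => Finset.univ ×ˢ (F k ×ˢ F k) with hJ
  set f : (Σ _ : ℕ, Fin 3 × ℕ × ℕ) → Quotient (unitSetoid p s) := fun t =>
    Quotient.mk (unitSetoid p s) (normalTriple p s t.1 t.2.1 t.2.2.1 t.2.2.2) with hf
  have hJcard : J.card = ∑ k ∈ Finset.range (s + 1), 3 * (F k).card ^ 2 := by
    rw [hJ, Finset.card_sigma]
    refine Finset.sum_congr rfl fun k _ => ?_
    simp [sq]
  rw [← hJcard]
  refine le_trans ?_ (Finset.card_image_le (s := J) (f := f))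
  rw [← Nat.card_eq_finsetCard]
  refine Nat.card_le_card_of_injective (β := ↥(J.image f)) (fun q => ⟨q.1, ?_⟩) ?_
  · obtain ⟨q, u, v, w, rfl, h⟩ := q
    obtain ⟨k, hk, i, x, hx, y, hy, hr⟩ := exists_normalTriple hp hε h
    simp only [Finset.mem_image]
    refine ⟨⟨k, i, x, y⟩, ?_, Quotient.sound hr⟩
    simp only [hJ, Finset.mem_sigma, Finset.mem_range, Finset.mem_product, Finset.mem_univ,
      true_and]
    exact ⟨by omega, hx, hy⟩
  · intro q q' h
    exact Subtype.ext (Subtype.mk.inj h)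

theorem statement8 (p s : ℕ) (hp : p.Prime) (hs : 0 < s) (ε : ℝ) (hε : 0 < ε) :
    (Nat.card {q : Quotient (unitSetoid p s) //
        ∃ u v w : ZMod (p ^ s), q = Quotient.mk (unitSetoid p s) (u, v, w) ∧
          ε ≤ deltaT p s u v w} : ℝ) ≤
      2 ^ 2 * ε⁻¹ ^ 8 * bracketP p (4 * ε⁻¹ ^ 5) := by
  set M := ε⁻¹ with hM
  have hM0 : 0 < M := inv_pos.2 hε
  set B := bracketP p (4 * M ^ 5) with hB
  have hB0 : 0 < B := lt_of_lt_of_le one_pos (one_le_bracketP hp _)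
  have hp2 : (2 : ℝ) ≤ p := by exact_mod_cast hp.two_le
  have h1 : (Nat.card {q : Quotient (unitSetoid p s) //
        ∃ u v w : ZMod (p ^ s), q = Quotient.mk (unitSetoid p s) (u, v, w) ∧
          ε ≤ deltaT p s u v w} : ℝ) ≤
      ∑ k ∈ Finset.range (s + 1),
        3 * ((farSet (p ^ (s - k)) (M / (p : ℝ) ^ k)).card : ℝ) ^ 2 := by
    exact_mod_cast card_classes_le hp hε
  have h2 : ∀ k ∈ Finset.range (s + 1),
      3 * ((farSet (p ^ (s - k)) (M / (p : ℝ) ^ k)).card : ℝ) ^ 2 ≤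
        15 / 4 * M ^ 8 * B * (1 / 256 : ℝ) ^ k := by
    intro k _
    have hpk : (1 : ℝ) ≤ (p : ℝ) ^ k := one_le_pow₀ (by linarith)
    rcases lt_or_ge (M / (p : ℝ) ^ k) 1 with hlt | hge
    · rw [farSet_eq_empty (pow_pos hp.pos _) hlt]
      have : 0 ≤ 15 / 4 * M ^ 8 * B * (1 / 256 : ℝ) ^ k := by positivity
      simpa using this
    · have h3 := card_farSet_sq_le (t := s - k) hp hge
      have hle : M / (p : ℝ) ^ k ≤ M := div_le_self hM0.le hpk
      have h4 : bracketP p (4 * (M / (p : ℝ) ^ k) ^ 5) ≤ B := bracketP_mono hp (by gcongr)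
      have h5 : (M / (p : ℝ) ^ k) ^ 8 ≤ M ^ 8 * (1 / 256 : ℝ) ^ k := by
        calc (M / (p : ℝ) ^ k) ^ 8 ≤ (M / (2 : ℝ) ^ k) ^ 8 := by gcongr
          _ = M ^ 8 * (1 / 256 : ℝ) ^ k := by
            rw [div_pow, ← pow_mul, mul_comm k 8, pow_mul, div_eq_mul_inv, one_div, inv_pow (256 : ℝ) k,
              show (2 : ℝ) ^ 8 = 256 by norm_num]
      calc 3 * ((farSet (p ^ (s - k)) (M / (p : ℝ) ^ k)).card : ℝ) ^ 2
          ≤ 3 * (5 / 4 * (M / (p : ℝ) ^ k) ^ 8 * bracketP p (4 * (M / (p : ℝ) ^ k) ^ 5)) := by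
            gcongr
        _ ≤ 3 * (5 / 4 * (M ^ 8 * (1 / 256 : ℝ) ^ k) * B) := by
            have h7 := (one_le_bracketP hp (4 * (M / (p : ℝ) ^ k) ^ 5)).trans' zero_le_one
            gcongr
        _ = 15 / 4 * M ^ 8 * B * (1 / 256 : ℝ) ^ k := by ring
  have h6 : ∑ k ∈ Finset.range (s + 1), (1 / 256 : ℝ) ^ k ≤ 256 / 255 := by
    rw [geom_sum_eq (by norm_num)]
    have : (0 : ℝ) < (1 / 256 : ℝ) ^ (s + 1) := by positivity
    rw [div_le_iff_of_neg (by norm_num)]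
    linarith
  calc _ ≤ _ := h1
    _ ≤ ∑ k ∈ Finset.range (s + 1), 15 / 4 * M ^ 8 * B * (1 / 256 : ℝ) ^ k :=
        Finset.sum_le_sum h2
    _ = 15 / 4 * M ^ 8 * B * ∑ k ∈ Finset.range (s + 1), (1 / 256 : ℝ) ^ k := by
        rw [Finset.mul_sum]
    _ ≤ 15 / 4 * M ^ 8 * B * (256 / 255) := by gcongr
    _ ≤ 2 ^ 2 * M ^ 8 * B := by
        have : 0 < M ^ 8 * B := by positivity
        nlinarith
end

section
/- Let n be a positive integer and let u, v ∈ (ℤ/nℤ)⁴ be primitive vectors (each of additive order exactly n). Then there exists g ∈ Sp(4, ℤ/nℤ) with g·u = v. In particular, Sp(4, ℤ/nℤ) acts transitively on the set of primitive vectors of (ℤ/nℤ)⁴. -/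
/-!
A symplectic transvection `x ↦ x + c ω(w, x) w` with `w = v - u` and `c = ω(v, u)⁻¹` carries `u`
to `v` as soon as `ω(v, u)` is a unit (`exists_map_of_isUnit`). Hence it is enough to connect two
primitive vectors `u`, `v` through some `w` with `ω(w, u)` and `ω(v, w)` both units.

An element of `ℤ/nℤ` is a unit iff it is nonzero modulo every prime `p ∣ n`, and a primitive vector
stays nonzero modulo each such `p` (`exists_cast_ne_zero`). Over the field `ℤ/pℤ` the orthogonal
hyperplanes of `u` and `v` do not cover the space, since no vector space is the union of two proper
subspaces (`exists_form_ne_zero`), so a suitable `w` exists modulo each `p`; the Chinese remainder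
theorem (`exists_forall_cast_eq`) glues these choices to one `w` over `ℤ/nℤ`.
-/

open Matrix

/-- `V n = (ℤ/nℤ)⁴`, with coordinates indexed so that `Sum.inl 0, Sum.inl 1, Sum.inr 0, Sum.inr 1`
correspond to the coordinates `x₁, x₂, x₃, x₄`. -/
abbrev V (n : ℕ) : Type := (Fin 2 ⊕ Fin 2) → ZMod n

/-- The standard symplectic form, up to sign: `ω(x, y) = xᵀ J y`. -/
def form {R : Type*} [CommRing R] (x y : (Fin 2 ⊕ Fin 2) → R) : R :=
  x ⬝ᵥ (J (Fin 2) R *ᵥ y)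

lemma form_eq {R : Type*} [CommRing R] (x y : (Fin 2 ⊕ Fin 2) → R) :
    form x y = x (.inr 0) * y (.inl 0) + x (.inr 1) * y (.inl 1)
      - x (.inl 0) * y (.inr 0) - x (.inl 1) * y (.inr 1) := by
  simp [form, J, dotProduct, mulVec, Matrix.one_apply, fromBlocks]
  ring

/-- The transvection `x ↦ x + c ω(w, x) w`. -/
def transv {R : Type*} [CommRing R] (c : R) (w : (Fin 2 ⊕ Fin 2) → R) :
    Matrix (Fin 2 ⊕ Fin 2) (Fin 2 ⊕ Fin 2) R :=
  1 + c • (vecMulVec w w * J (Fin 2) R)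

lemma transv_mulVec {R : Type*} [CommRing R] (c : R) (w x : (Fin 2 ⊕ Fin 2) → R) :
    transv c w *ᵥ x = x + (c * form w x) • w := by
  ext i
  simp [transv, add_mulVec, smul_mulVec, ← mulVec_mulVec, vecMulVec_mulVec, form]
  ring

lemma transv_mem {R : Type*} [CommRing R] (c : R) (w : (Fin 2 ⊕ Fin 2) → R) :
    transv c w ∈ symplecticGroup (Fin 2) R := by
  rw [SymplecticGroup.mem_iff]
  -- `w` is isotropic, so the quadratic term in `c` vanishes.
  have hW : vecMulVec w w * J (Fin 2) R * vecMulVec w w = 0 := by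
    have h : form w w = 0 := by rw [form_eq]; ring
    rw [Matrix.mul_assoc, mul_vecMulVec, vecMulVec_mul_vecMulVec]
    ext i j
    simp [form] at h
    simp [vecMulVec_apply, h]
  have hT : (transv c w)ᵀ = 1 - c • (J (Fin 2) R * vecMulVec w w) := by
    simp [transv, transpose_add, transpose_mul, J_transpose, transpose_vecMulVec, sub_eq_add_neg]
  rw [hT, transv]
  set W := vecMulVec w w
  have h1 : W * J (Fin 2) R * J (Fin 2) R = -W := by rw [Matrix.mul_assoc, J_squared]; simp
  have h2 : J (Fin 2) R * (J (Fin 2) R * W) = -W := by rw [← Matrix.mul_assoc, J_squared]; simp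
  have h3 : W * (J (Fin 2) R * W) = 0 := by rw [← Matrix.mul_assoc, hW]
  simp [Matrix.add_mul, Matrix.mul_sub, h1, h2, h3]

lemma exists_map_of_isUnit {n : ℕ} (u v : V n) (h : IsUnit (form v u)) :
    ∃ g : ↥(Sp4 n), (g : Matrix (Fin 2 ⊕ Fin 2) (Fin 2 ⊕ Fin 2) (ZMod n)).mulVec u = v := by
  obtain ⟨c, hc⟩ := h.exists_left_inv
  refine ⟨⟨transv c (v - u), transv_mem _ _⟩, ?_⟩
  have h : form (v - u) u = form v u := by
    simp only [form_eq, Pi.sub_apply]; ring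
  rw [transv_mulVec, h, hc]
  simp

/-- The two hyperplanes orthogonal to nonzero vectors `u` and `v` do not cover the space. -/
lemma exists_form_ne_zero {F : Type*} [Field F] (u v : (Fin 2 ⊕ Fin 2) → F)
    (hu : ∃ i, u i ≠ 0) (hv : ∃ i, v i ≠ 0) :
    ∃ w, form w u ≠ 0 ∧ form v w ≠ 0 := by
  have key : ∀ x : (Fin 2 ⊕ Fin 2) → F, (∃ i, x i ≠ 0) → ∃ w, form w x ≠ 0 := by
    rintro x ⟨i, hi⟩
    by_contra! h
    apply hi
    have h1 := h (Pi.single (.inl 0) 1)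
    have h2 := h (Pi.single (.inl 1) 1)
    have h3 := h (Pi.single (.inr 0) 1)
    have h4 := h (Pi.single (.inr 1) 1)
    simp [form_eq] at h1 h2 h3 h4
    rcases i with i | i <;> fin_cases i <;> assumption
  have swap : ∀ x y : (Fin 2 ⊕ Fin 2) → F, form x y = - form y x := by
    intro x y; simp only [form_eq]; ring
  have form_add : ∀ x y z : (Fin 2 ⊕ Fin 2) → F, form (x + y) z = form x z + form y z := by
    intro x y z; simp only [form_eq, Pi.add_apply]; ring
  obtain ⟨a, ha⟩ := key u hu
  obtain ⟨b, hb⟩ := key v hv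
  simp only [swap v, neg_ne_zero]
  by_cases h1 : form a v = 0
  · by_cases h2 : form b u = 0
    · exact ⟨a + b, by simpa [form_add, h2] using ha, by simpa [form_add, h1] using hb⟩
    · exact ⟨b, h2, hb⟩
  · exact ⟨a, ha, h1⟩

lemma isUnit_of_forall_cast_ne_zero {n : ℕ} (hn : 0 < n) (x : ZMod n)
    (h : ∀ p (_ : p.Prime) (hp : p ∣ n), ZMod.castHom hp (ZMod p) x ≠ 0) : IsUnit x := by
  have : NeZero n := ⟨hn.ne'⟩
  obtain ⟨m, rfl⟩ := ZMod.natCast_zmod_surjective x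
  rw [ZMod.isUnit_iff_coprime]
  refine Nat.coprime_of_dvd fun p hp hpm hpn => h p hp hpn ?_
  rw [map_natCast]
  exact (ZMod.natCast_eq_zero_iff _ _).2 hpm

/-- A primitive vector is nonzero modulo every prime `p ∣ n`; otherwise `n / p` would kill it. -/
lemma exists_cast_ne_zero {n : ℕ} (hn : 0 < n) (u : V n) (hu : addOrderOf u = n) {p : ℕ}
    (hp : p.Prime) (hpn : p ∣ n) : ∃ i, ZMod.castHom hpn (ZMod p) (u i) ≠ 0 := by
  have : NeZero n := ⟨hn.ne'⟩
  by_contra! h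
  obtain ⟨k, rfl⟩ := hpn
  have hk : k • u = 0 := by
    ext i
    obtain ⟨m, hm⟩ := ZMod.natCast_zmod_surjective (u i)
    have hi := h i
    rw [← hm, map_natCast, ZMod.natCast_eq_zero_iff] at hi
    obtain ⟨l, rfl⟩ := hi
    rw [Pi.smul_apply, ← hm, nsmul_eq_mul, ← Nat.cast_mul, Pi.zero_apply,
      ZMod.natCast_eq_zero_iff]
    exact ⟨l, by ring⟩
  have hd := addOrderOf_dvd_of_nsmul_eq_zero hk
  rw [hu] at hd
  have hk0 : 0 < k := Nat.pos_of_mul_pos_left hn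
  have := Nat.le_of_dvd hk0 hd
  nlinarith [hp.two_le]

/-- The Chinese remainder theorem: residues modulo the primes `p ∣ n` lift to `ZMod n`. -/
lemma exists_forall_cast_eq {n : ℕ} (f : ∀ p : ℕ, ZMod p) :
    ∃ x : ZMod n, ∀ p (_ : p.Prime) (hp : p ∣ n), n ≠ 0 → ZMod.castHom hp (ZMod p) x = f p := by
  have hcop : Set.Pairwise (n.primeFactors : Set ℕ) (Function.onFun Nat.Coprime fun p : ℕ => p) := by
    intro p hp q hq hpq
    exact (Nat.coprime_primes (Nat.prime_of_mem_primeFactors hp)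
      (Nat.prime_of_mem_primeFactors hq)).2 hpq
  obtain ⟨m, hm⟩ := Nat.chineseRemainderOfFinset (fun p => (f p).val) (fun p => p) n.primeFactors
    (fun p hp => (Nat.prime_of_mem_primeFactors hp).ne_zero) hcop
  refine ⟨m, fun p hp hpn hn => ?_⟩
  have : NeZero p := ⟨hp.ne_zero⟩
  have h := (ZMod.natCast_eq_natCast_iff _ _ _).2 (hm p (Nat.mem_primeFactors.2 ⟨hp, hpn, hn⟩))
  rw [map_natCast, h, ZMod.natCast_zmod_val]

lemma map_form {R S : Type*} [CommRing R] [CommRing S] (φ : R →+* S)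
    (x y : (Fin 2 ⊕ Fin 2) → R) :
    φ (form x y) = form (fun i => φ (x i)) (fun i => φ (y i)) := by
  simp only [form_eq, map_sub, map_add, map_mul]

theorem statement10 (n : ℕ) (hn : 0 < n) (u v : V n)
    (hu : addOrderOf u = n) (hv : addOrderOf v = n) :
    ∃ g : ↥(Sp4 n), (g : Matrix (Fin 2 ⊕ Fin 2) (Fin 2 ⊕ Fin 2) (ZMod n)).mulVec u = v := by
  have loc : ∀ p : ℕ, ∃ w : V p, ∀ (_ : p.Prime) (hpn : p ∣ n),
      form w (fun i => ZMod.castHom hpn (ZMod p) (u i)) ≠ 0 ∧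
      form (fun i => ZMod.castHom hpn (ZMod p) (v i)) w ≠ 0 := by
    intro p
    by_cases hp : p.Prime ∧ p ∣ n
    · have : Fact p.Prime := ⟨hp.1⟩
      obtain ⟨w, hw⟩ := exists_form_ne_zero (F := ZMod p) _ _
        (exists_cast_ne_zero hn u hu hp.1 hp.2) (exists_cast_ne_zero hn v hv hp.1 hp.2)
      exact ⟨w, fun _ _ => hw⟩
    · exact ⟨0, fun h1 h2 => (hp ⟨h1, h2⟩).elim⟩
  choose w hw using loc
  choose W hW using fun i => exists_forall_cast_eq (n := n) fun p => w p i
  have hWp : ∀ p (_ : p.Prime) (hpn : p ∣ n), (fun i => ZMod.castHom hpn (ZMod p) (W i)) = w p :=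
    fun p hp hpn => funext fun i => hW i p hp hpn hn.ne'
  have h1 : IsUnit (form W u) := isUnit_of_forall_cast_ne_zero hn _ fun p hp hpn => by
    rw [map_form, hWp p hp hpn]
    exact (hw p hp hpn).1
  have h2 : IsUnit (form v W) := isUnit_of_forall_cast_ne_zero hn _ fun p hp hpn => by
    rw [map_form, hWp p hp hpn]
    exact (hw p hp hpn).2
  obtain ⟨g, hg⟩ := exists_map_of_isUnit u W h1
  obtain ⟨k, hk⟩ := exists_map_of_isUnit W v h2
  refine ⟨k * g, ?_⟩
  rw [Submonoid.coe_mul, ← mulVec_mulVec, hg, hk]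
end

section
/- Let n be a positive integer and V = (ℤ/nℤ)⁴. Let W be a subgroup of V isomorphic to (ℤ/nℤ)² on which the standard symplectic form vanishes identically, and let f : W × W → ℤ/nℤ be a biadditive alternating form that is nondegenerate in the sense that some value f(w, w′) is a unit of ℤ/nℤ. Let W₀ = {(a, b, 0, 0) : a, b ∈ ℤ/nℤ} with the alternating form f₀ determined by f₀(e₁, e₂) = 1, where e₁ = (1,0,0,0) and e₂ = (0,1,0,0). Then there exist g ∈ Sp(4, ℤ/nℤ) and a sign s ∈ {1, −1} such that g·W₀ = W and f(g·x, g·y) = s·f₀(x, y) for all x, y ∈ W₀. -/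
/-!
Choose an isomorphism `(ℤ/nℤ)² ≃ W` and let `c` be the value of `f` on the resulting basis. Every
value of `f` is a multiple of `c`, so `c` is a unit, and dividing the first basis vector by `c`
gives a basis `u, v` of `W` with `f(u, v) = 1`; the sign can thus always be taken to be `1`.

It remains to complete `u, v` to a symplectic basis. An element `d` of `ℤ/nℤ` killing all `2 × 2`
minors of `(u, v)` is zero: such a `d` satisfies `(d uᵢ) v = (d vᵢ) u`, so `d v = 0` by independence,
and independence again gives `d = 0`. The ideal of minors is principal, so its generator is a
non-zero-divisor, hence a unit because the ring is finite (`minors_span_top`). Writing `1` as a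
combination of minors yields vectors dual to `u, v` for the symplectic form
(`exists_dual`), and subtracting a multiple of `v` from the first makes them orthogonal.
-/

open Matrix

/-- The standard symplectic form `⟨x,y⟩ = x₁y₃ + x₂y₄ − x₃y₁ − x₄y₂`. -/
def sForm {n : ℕ} (x y : V n) : ZMod n :=
  x (Sum.inl 0) * y (Sum.inr 0) + x (Sum.inl 1) * y (Sum.inr 1)
    - x (Sum.inr 0) * y (Sum.inl 0) - x (Sum.inr 1) * y (Sum.inl 1)

/-- `W₀ = {(a, b, 0, 0)}`. -/
def W0 (n : ℕ) : AddSubgroup (V n) where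
  carrier := {x | x (Sum.inr 0) = 0 ∧ x (Sum.inr 1) = 0}
  add_mem' hx hy := by
    constructor <;> simp_all
  zero_mem' := ⟨rfl, rfl⟩
  neg_mem' hx := by
    constructor <;> simp_all

/-- `f₀(x, y) = x₁y₂ − x₂y₁`, the alternating form on `W₀` with `f₀(e₁, e₂) = 1`. -/
def f0 {n : ℕ} (x y : V n) : ZMod n :=
  x (Sum.inl 0) * y (Sum.inl 1) - x (Sum.inl 1) * y (Sum.inl 0)

/-- In a finite principal ideal ring, the `2 × 2` minors of two independent vectors generate the
unit ideal. -/
lemma minors_span_top {R ι : Type*} [CommRing R] [Finite R] [IsPrincipalIdealRing R]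
    (u v : ι → R) (hind : ∀ a b : R, a • u + b • v = 0 → a = 0 ∧ b = 0) :
    Ideal.span (Set.range fun p : ι × ι => u p.1 * v p.2 - u p.2 * v p.1) = ⊤ := by
  set I := Ideal.span (Set.range fun p : ι × ι => u p.1 * v p.2 - u p.2 * v p.1) with hI
  obtain ⟨k, hk⟩ := (IsPrincipalIdealRing.principal I).principal
  have hk' : I = Ideal.span {k} := hk
  rw [hk', Ideal.span_singleton_eq_top]
  rw [isUnit_iff_mem_nonZeroDivisors_of_finite, mem_nonZeroDivisors_iff_right]
  intro d hd
  have hmin : ∀ i j, d * (u i * v j - u j * v i) = 0 := by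
    intro i j
    have hm : u i * v j - u j * v i ∈ I := Ideal.subset_span ⟨(i, j), rfl⟩
    rw [hk', Ideal.mem_span_singleton] at hm
    obtain ⟨t, ht⟩ := hm
    rw [ht, ← mul_assoc, hd, zero_mul]
  have hv : ∀ i, d * v i = 0 := by
    intro i
    have h := (hind (d * v i) (-(d * u i)) (by
      ext j
      simp only [Pi.add_apply, Pi.smul_apply, smul_eq_mul, Pi.zero_apply]
      linear_combination -hmin i j)).1
    exact h
  refine (hind 0 d ?_).2
  ext j
  simp [hv j]

/-- If the minors of `(u, v)` generate the unit ideal, then the map `x ↦ (u ⬝ᵥ x, v ⬝ᵥ x)` has a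
section. By Cramer's rule, each minor `m` admits `p, q` mapped to `(m, 0)` and `(0, m)`, and the
ring elements with this property form an ideal. -/
lemma exists_dual {R ι : Type*} [CommRing R] [Fintype ι] [DecidableEq ι] (u v : ι → R)
    (h : Ideal.span (Set.range fun p : ι × ι => u p.1 * v p.2 - u p.2 * v p.1) = ⊤) :
    ∃ p q : ι → R, u ⬝ᵥ p = 1 ∧ v ⬝ᵥ p = 0 ∧ u ⬝ᵥ q = 0 ∧ v ⬝ᵥ q = 1 := by
  have h1 := (Ideal.eq_top_iff_one _).1 h
  generalize (1 : R) = m at h1 ⊢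
  clear h
  induction h1 using Submodule.span_induction with
  | mem m hm =>
    obtain ⟨⟨i, j⟩, rfl⟩ := hm
    refine ⟨Pi.single i (v j) - Pi.single j (v i), Pi.single j (u i) - Pi.single i (u j), ?_⟩
    simp only [dotProduct_sub, dotProduct_single]
    refine ⟨trivial, by ring, by ring, by ring⟩
  | zero => exact ⟨0, 0, by simp⟩
  | add a b _ _ ha hb =>
    obtain ⟨p, q, h1, h2, h3, h4⟩ := ha
    obtain ⟨p', q', h1', h2', h3', h4'⟩ := hb
    exact ⟨p + p', q + q', by simp [dotProduct_add, *]⟩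
  | smul t a _ ha =>
    obtain ⟨p, q, h1, h2, h3, h4⟩ := ha
    exact ⟨t • p, t • q, by simp [dotProduct_smul, *]⟩

/-- The vector whose symplectic pairing `sForm x ·` with any `x` equals `x ⬝ᵥ p`. -/
def dualVec {n : ℕ} (p : V n) : V n :=
  Sum.elim (fun i => -p (Sum.inr i)) (fun i => p (Sum.inl i))

lemma sForm_dualVec {n : ℕ} (x p : V n) : sForm x (dualVec p) = x ⬝ᵥ p := by
  simp [sForm, dualVec, dotProduct]
  ring

/-- The `4 × 4` matrix with columns `a, b, c, d`. -/
def colMatrix {n : ℕ} (a b c d : V n) : Matrix (Fin 2 ⊕ Fin 2) (Fin 2 ⊕ Fin 2) (ZMod n) :=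
  Matrix.of fun i => Sum.elim ![a i, b i] ![c i, d i]

lemma colMatrix_mem {n : ℕ} {a b c d : V n} (hab : sForm a b = 0) (hac : sForm a c = 1)
    (had : sForm a d = 0) (hbc : sForm b c = 0) (hbd : sForm b d = 1) (hcd : sForm c d = 0) :
    colMatrix a b c d ∈ Sp4 n := by
  rw [SymplecticGroup.mem_iff']
  simp only [sForm] at *
  ext i j
  rcases i with i | i <;> rcases j with j | j <;> fin_cases i <;> fin_cases j <;>
    simp [colMatrix, Matrix.mul_apply, Matrix.J, Matrix.fromBlocks, Matrix.one_apply] <;> grind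

lemma colMatrix_mulVec {n : ℕ} (a b c d x : V n) (hx : x ∈ W0 n) :
    (colMatrix a b c d).mulVec x = x (Sum.inl 0) • a + x (Sum.inl 1) • b := by
  obtain ⟨h0, h1⟩ := hx
  ext i
  simp [colMatrix, Matrix.mulVec, dotProduct, h0, h1]
  ring

/-- Two independent vectors spanning an isotropic subgroup are the first two columns of a symplectic
matrix. -/
lemma exists_symplectic {n : ℕ} [NeZero n] (u v : V n) (huv : sForm u v = 0)
    (hind : ∀ a b : ZMod n, a • u + b • v = 0 → a = 0 ∧ b = 0) :
    ∃ c d : V n, colMatrix u v c d ∈ Sp4 n := by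
  have : IsPrincipalIdealRing (ZMod n) :=
    IsPrincipalIdealRing.of_surjective (Int.castRingHom (ZMod n)) (ZMod.ringHom_surjective _)
  obtain ⟨p, q, hup, hvp, huq, hvq⟩ := exists_dual u v (minors_span_top u v hind)
  rw [← sForm_dualVec] at hup hvp huq hvq
  -- Subtracting this multiple of `v` makes the two dual vectors orthogonal, as `⟨v, q⟩ = 1`.
  refine ⟨dualVec p - sForm (dualVec p) (dualVec q) • v, dualVec q,
    colMatrix_mem huv ?_ huq ?_ hvq ?_⟩
  all_goals
    generalize dualVec p = p' at *
    generalize dualVec q = q' at *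
    generalize ht : sForm p' q' = t
    simp only [sForm, Pi.sub_apply, Pi.smul_apply, smul_eq_mul] at *
  · linear_combination hup - t * huv
  · linear_combination hvp
  · linear_combination ht - t * hvq

/-- A biadditive alternating form on `(ℤ/nℤ)²` is the determinant times its value on the standard
basis. -/
lemma alternating_eq_det {n : ℕ} (F : ZMod n × ZMod n → ZMod n × ZMod n → ZMod n)
    (hadd1 : ∀ x y z, F (x + y) z = F x z + F y z)
    (hadd2 : ∀ x y z, F x (y + z) = F x y + F x z)
    (halt : ∀ x, F x x = 0) (x y : ZMod n × ZMod n) :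
    F x y = (x.1 * y.2 - x.2 * y.1) * F (1, 0) (0, 1) := by
  have hs1 : ∀ (t : ZMod n) x z, F (t • x) z = t * F x z := fun t x z =>
    ZMod.map_smul (AddMonoidHom.mk' (fun x => F x z) fun x y => hadd1 x y z) t x
  have hs2 : ∀ (t : ZMod n) x z, F x (t • z) = t * F x z := fun t x z =>
    ZMod.map_smul (AddMonoidHom.mk' (fun z => F x z) fun y z => hadd2 x y z) t z
  have hdec : ∀ x : ZMod n × ZMod n, x = x.1 • ((1, 0) : ZMod n × ZMod n) + x.2 • (0, 1) := by
    intro x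
    ext <;> simp
  have hanti : F (0, 1) (1, 0) = -F (1, 0) (0, 1) := by
    have h := halt ((1, 0) + (0, 1))
    rw [hadd1, hadd2, hadd2, halt, halt] at h
    linear_combination h
  conv_lhs => rw [hdec x, hdec y]
  rw [hadd1, hadd2, hadd2, hs1, hs1, hs1, hs1, hs2, hs2, hs2, hs2, halt, halt, hanti]
  ring

theorem statement11 (n : ℕ) (hn : 0 < n) (W : AddSubgroup (V n))
    (hWiso : Nonempty (W ≃+ (ZMod n × ZMod n)))
    (hWisot : ∀ x ∈ W, ∀ y ∈ W, sForm x y = 0)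
    (f : W → W → ZMod n)
    (hadd1 : ∀ x y z : W, f (x + y) z = f x z + f y z)
    (hadd2 : ∀ x y z : W, f x (y + z) = f x y + f x z)
    (halt : ∀ x : W, f x x = 0)
    (hnd : ∃ x y : W, IsUnit (f x y)) :
    ∃ (g : ↥(Sp4 n)) (s : ZMod n), (s = 1 ∨ s = -1) ∧
      (fun x : V n => (g : Matrix (Fin 2 ⊕ Fin 2) (Fin 2 ⊕ Fin 2) (ZMod n)).mulVec x) ''
        (W0 n : Set (V n)) = (W : Set (V n)) ∧
      ∀ x y : V n, x ∈ W0 n → y ∈ W0 n →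
        ∀ (hgx : (g : Matrix (Fin 2 ⊕ Fin 2) (Fin 2 ⊕ Fin 2) (ZMod n)).mulVec x ∈ W)
          (hgy : (g : Matrix (Fin 2 ⊕ Fin 2) (Fin 2 ⊕ Fin 2) (ZMod n)).mulVec y ∈ W),
          f ⟨_, hgx⟩ ⟨_, hgy⟩ = s * f0 x y := by
  have : NeZero n := ⟨hn.ne'⟩
  obtain ⟨e⟩ := hWiso
  have hF := alternating_eq_det (fun p q => f (e.symm p) (e.symm q))
    (fun x y z => by simp only [map_add, hadd1]) (fun x y z => by simp only [map_add, hadd2])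
    (fun x => halt _)
  generalize hc : f (e.symm (1, 0)) (e.symm (0, 1)) = c at hF
  have hcu : IsUnit c := by
    obtain ⟨x, y, hxy⟩ := hnd
    have h := hF (e x) (e y)
    simp only [AddEquiv.symm_apply_apply] at h
    rw [h] at hxy
    exact isUnit_of_mul_isUnit_right hxy
  obtain ⟨c', hcc⟩ := hcu.exists_left_inv
  have hφ : ∀ a b : ZMod n, ((e.symm (c' * a, b) : W) : V n)
      = a • ((e.symm (c', 0) : W) : V n) + b • ((e.symm (0, 1) : W) : V n) := by
    intro a b
    have hs : ∀ (t : ZMod n) (x : ZMod n × ZMod n),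
        ((e.symm (t • x) : W) : V n) = t • ((e.symm x : W) : V n) := fun t x =>
      ZMod.map_smul (W.subtype.comp e.symm.toAddMonoidHom) t x
    rw [← hs, ← hs, ← AddSubgroup.coe_add, ← map_add]
    simp [mul_comm]
  obtain ⟨p, q, hg⟩ := exists_symplectic ((e.symm (c', 0) : W) : V n) ((e.symm (0, 1) : W) : V n)
    (hWisot _ (e.symm _).2 _ (e.symm _).2) (by
      intro a b hab
      rw [← hφ] at hab
      have h0 : e.symm (c' * a, b) = 0 := Subtype.ext hab
      rw [map_eq_zero_iff e.symm e.symm.injective, Prod.mk_eq_zero] at h0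
      refine ⟨?_, h0.2⟩
      linear_combination c * h0.1 - a * hcc)
  have hgφ : ∀ x ∈ W0 n, (colMatrix ((e.symm (c', 0) : W) : V n) (e.symm (0, 1) : W) p q).mulVec x
      = (e.symm (c' * x (Sum.inl 0), x (Sum.inl 1)) : W) := by
    intro x hx
    rw [colMatrix_mulVec _ _ _ _ _ hx, hφ]
  refine ⟨⟨_, hg⟩, 1, Or.inl rfl, ?_, ?_⟩
  · ext w
    constructor
    · rintro ⟨x, hx, rfl⟩
      show Matrix.mulVec _ x ∈ W
      rw [hgφ x hx]
      exact Subtype.property _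
    · intro hw
      refine ⟨Sum.elim ![c * (e ⟨w, hw⟩).1, (e ⟨w, hw⟩).2] 0, ⟨rfl, rfl⟩, ?_⟩
      show Matrix.mulVec _ _ = w
      rw [hgφ _ ⟨rfl, rfl⟩]
      simp [← mul_assoc, hcc]
  · intro x y hx hy hgx hgy
    have h := hF (c' * x (Sum.inl 0), x (Sum.inl 1)) (c' * y (Sum.inl 0), y (Sum.inl 1))
    have ex : (⟨_, hgx⟩ : W) = e.symm (c' * x (Sum.inl 0), x (Sum.inl 1)) :=
      Subtype.ext (hgφ x hx)
    have ey : (⟨_, hgy⟩ : W) = e.symm (c' * y (Sum.inl 0), y (Sum.inl 1)) :=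
      Subtype.ext (hgφ y hy)
    rw [ex, ey, f0]
    linear_combination h + (x (Sum.inl 0) * y (Sum.inl 1) - x (Sum.inl 1) * y (Sum.inl 0)) * hcc
end

section
/- Let n be a positive integer and V = (ℤ/nℤ)⁴. Let (W₁, W₂) be a pair of subgroups of V, each isomorphic to (ℤ/nℤ)², with ⟨w₁, w₂⟩ = 0 for all w₁ ∈ W₁, w₂ ∈ W₂, and W₁ + W₂ = V, and let φ ∈ Sp(4, ℤ/nℤ) be the involution equal to the identity on W₁ and to −1 on W₂. If the vector v₀ = (0,1,0,0) lies in W₂ (so that φ·v₀ = −v₀), then there exist x, z ∈ ℤ/nℤ such that φ has matrix rows (1, 0, 0, −2x), (−2z, −1, 2x, 0), (0, 0, 1, −2z), (0, 0, 0, −1). -/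
/-!
Write `e = v₀ = (0,1,0,0) ∈ W₂`. Decomposing `(0,0,0,1)` along `W₁ + W₂` and using that `W₁` is
orthogonal to `e`, the `W₂`-component `u` satisfies `⟨e, u⟩ = 1`, so `u = (x, t, z, 1)`. The pair
`(e, u)` is hyperbolic, hence linearly independent, and it spans `W₂` because `W₂` has exactly `n²`
elements (`exists_eq_smul_add_smul`). Since `W₁` is orthogonal to `W₂`, the projection of `v` to
`W₂` is `⟨e, v⟩ u - ⟨u, v⟩ e`, so `φ v = v - 2 (⟨e, v⟩ u - ⟨u, v⟩ e)` (`mulVec_eq_sub`). Evaluating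
this on the standard basis gives the matrix, with `x = u₁` and `z = u₃`.
-/

open Matrix

/-- If `W₂` has the size of `(ℤ/nℤ)²`, contains `v₀` and a vector `u` with `⟨v₀, u⟩ = u₄ = 1`, then
`v₀` and `u` span `W₂`: their combinations are pairwise distinct, so there are `n²` of them. -/
theorem exists_eq_smul_add_smul {n : ℕ} (hn : 0 < n) {W₂ : AddSubgroup (V n)}
    (h2 : Nonempty (W₂ ≃+ (ZMod n × ZMod n)))
    (hv0 : (Pi.single (Sum.inl 1) 1 : V n) ∈ W₂) {u : V n} (hu : u ∈ W₂)
    (hu4 : u (Sum.inr 1) = 1) {b : V n} (hb : b ∈ W₂) :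
    ∃ α β : ZMod n, b = α • (Pi.single (Sum.inl 1) 1 : V n) + β • u := by
  have : NeZero n := ⟨hn.ne'⟩
  obtain ⟨g⟩ := h2
  let f : ZMod n × ZMod n → W₂ := fun c =>
    ⟨c.1 • (Pi.single (Sum.inl 1) 1 : V n) + c.2 • u,
      W₂.add_mem (ZMod.smul_mem hv0 c.1) (ZMod.smul_mem hu c.2)⟩
  have hf : Function.Injective f := by
    rintro ⟨α, β⟩ ⟨α', β'⟩ h
    have h' := congrArg Subtype.val h
    have hβ : β = β' := by simpa [f, hu4] using congrFun h' (Sum.inr 1)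
    subst hβ
    have hα : α = α' := by simpa [f] using congrFun h' (Sum.inl 1)
    rw [hα]
  have hs : Function.Surjective (g ∘ f) :=
    Finite.surjective_of_injective (g.injective.comp hf)
  obtain ⟨⟨α, β⟩, h⟩ := hs (g ⟨b, hb⟩)
  exact ⟨α, β, (congrArg Subtype.val (g.injective h)).symm⟩

/-- The involution is determined by the hyperbolic pair `(v₀, u)` of `W₂`: it is the identity minus
twice the projection `v ↦ ⟨v₀, v⟩ u - ⟨u, v⟩ v₀`, where `⟨v₀, v⟩ = v₄`. -/
theorem mulVec_eq_sub {n : ℕ} (hn : 0 < n) {W₁ W₂ : AddSubgroup (V n)}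
    (h2 : Nonempty (W₂ ≃+ (ZMod n × ZMod n)))
    (horth : ∀ w₁ ∈ W₁, ∀ w₂ ∈ W₂, sForm w₁ w₂ = 0)
    (hsup : W₁ ⊔ W₂ = ⊤)
    {A : Matrix (Fin 2 ⊕ Fin 2) (Fin 2 ⊕ Fin 2) (ZMod n)}
    (hA1 : ∀ w ∈ W₁, A.mulVec w = w) (hA2 : ∀ w ∈ W₂, A.mulVec w = -w)
    (hv0 : (Pi.single (Sum.inl 1) 1 : V n) ∈ W₂) {u : V n} (hu : u ∈ W₂)
    (hu4 : u (Sum.inr 1) = 1) (v : V n) :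
    A.mulVec v = v - (2 : ZMod n) •
      (v (Sum.inr 1) • u - sForm u v • (Pi.single (Sum.inl 1) 1 : V n)) := by
  obtain ⟨a, ha, b, hb, rfl⟩ := AddSubgroup.mem_sup.1 (hsup ▸ AddSubgroup.mem_top v)
  obtain ⟨α, β, hαβ⟩ := exists_eq_smul_add_smul hn h2 hv0 hu hu4 hb
  have ha4 : a (Sum.inr 1) = 0 := by simpa [sForm] using horth a ha _ hv0
  have hau := horth a ha u hu
  have hbu : sForm u b = -α := by
    simp [hαβ, sForm, hu4]
    ring
  have hua : sForm u (a + b) = -α := by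
    simp only [sForm, Pi.add_apply] at hau hbu ⊢
    linear_combination hbu - hau
  have hb4 : (a + b) (Sum.inr 1) = β := by simp [ha4, hαβ, hu4]
  have hproj : (a + b) (Sum.inr 1) • u
      - sForm u (a + b) • (Pi.single (Sum.inl 1) 1 : V n) = b := by
    rw [hua, hb4, hαβ, neg_smul]
    abel
  rw [hproj, Matrix.mulVec_add, hA1 a ha, hA2 b hb, two_smul]
  abel

theorem statement13 (n : ℕ) (hn : 0 < n) (W₁ W₂ : AddSubgroup (V n))
    (h1 : Nonempty (W₁ ≃+ (ZMod n × ZMod n)))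
    (h2 : Nonempty (W₂ ≃+ (ZMod n × ZMod n)))
    (horth : ∀ w₁ ∈ W₁, ∀ w₂ ∈ W₂, sForm w₁ w₂ = 0)
    (hsup : W₁ ⊔ W₂ = ⊤)
    (φ : ↥(Sp4 n))
    (hφ1 : ∀ w ∈ W₁, (φ : Matrix (Fin 2 ⊕ Fin 2) (Fin 2 ⊕ Fin 2) (ZMod n)).mulVec w = w)
    (hφ2 : ∀ w ∈ W₂, (φ : Matrix (Fin 2 ⊕ Fin 2) (Fin 2 ⊕ Fin 2) (ZMod n)).mulVec w = -w)
    (hv0 : (Pi.single (Sum.inl 1) 1 : V n) ∈ W₂) :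
    ∃ x z : ZMod n,
      (φ : Matrix (Fin 2 ⊕ Fin 2) (Fin 2 ⊕ Fin 2) (ZMod n)) =
        Matrix.fromBlocks !![1, 0; -2 * z, -1] !![0, -2 * x; 2 * x, 0] 0
          !![1, -2 * z; 0, -1] := by
  -- `u` is the `W₂`-component of the fourth basis vector.
  obtain ⟨a, ha, u, hu, hau⟩ := AddSubgroup.mem_sup.1
    (hsup ▸ AddSubgroup.mem_top (Pi.single (Sum.inr 1) 1 : V n))
  have ha4 : a (Sum.inr 1) = 0 := by simpa [sForm] using horth a ha _ hv0
  have hu4 : u (Sum.inr 1) = 1 := by simpa [ha4] using congrFun hau (Sum.inr 1)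
  have key := mulVec_eq_sub hn h2 horth hsup hφ1 hφ2 hv0 hu hu4
  refine ⟨u (Sum.inl 0), u (Sum.inr 0), ?_⟩
  ext i j
  have hij := congrFun (key (Pi.single j 1)) i
  rw [Matrix.mulVec_single_one, Matrix.col_apply] at hij
  rw [hij]
  rcases i with i | i <;> rcases j with j | j <;> fin_cases i <;> fin_cases j <;>
    simp [sForm, hu4] <;> ring
end

section
/- Let θ = exp(2πi/5). Let x = (x₁, …, x₆) ∈ ℂ⁶, x ≠ 0, satisfy x₁ + ⋯ + x₆ = 0 and (x₁² + ⋯ + x₆²)² = 4(x₁⁴ + ⋯ + x₆⁴). Suppose there exist a permutation σ of {1, …, 6} with σ ≠ id and a scalar λ ∈ ℂ such that x_{σ(i)} = λ·x_i for all i. Then at least one of the following holds: (a) x_i = x_j for some i ≠ j; (b) x_i + x_j + x_k = 0 for some pairwise distinct i, j, k; (c) there exist a permutation τ of {1, …, 6} and μ ∈ ℂ, μ ≠ 0, with (x_{τ(1)}, …, x_{τ(6)}) = μ·(0, θ, θ², θ³, θ⁴, 1). -/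
/-!
Assume that the coordinates of `x` are pairwise distinct, so at most one of them vanishes.
Comparing the product of the nonzero coordinates with its image under `σ` gives `λ ^ 6 = 1` if no
coordinate vanishes, and `λ ^ 5 = 1` if exactly one does; moreover `λ ≠ 1` because `σ ≠ 1`.

* If `λ ^ 5 = 1`, then `λ` is a primitive fifth root of unity, and so its powers run through the
  powers of `θ`: this is the third alternative (`fifth_root_case`).
* If `λ ^ 6 = 1` and `λ ≠ -1`, then `λ` or `λ ^ 2` is a primitive cube root of unity, and three
  coordinates in one orbit of `σ` sum to zero.
* If `λ = -1`, the coordinates are `±a, ±b, ±c`, and the quartic equation becomes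
  `(a² + b² + c²)² = 2 (a⁴ + b⁴ + c⁴)`, that is
  `(a + b + c) (a + b - c) (a - b + c) (a - b - c) = 0` (`neg_one_case`).
-/

theorem neg_one_case (x : Fin 6 → ℂ) (hx : Function.Injective x)
    (hquartic : (∑ i, x i ^ 2) ^ 2 = 4 * ∑ i, x i ^ 4)
    (σ : Equiv.Perm (Fin 6)) (hσ : ∀ i, x (σ i) = - x i) (h0 : ∀ i, x i ≠ 0) :
    ∃ i j k : Fin 6, i ≠ j ∧ j ≠ k ∧ i ≠ k ∧ x i + x j + x k = 0 := by
  have hfix : ∀ i, σ i ≠ i := fun i h => h0 i (self_eq_neg.mp (by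
    simpa only [h] using hσ i))
  have hinv : ∀ i, σ (σ i) = i := fun i => hx (by rw [hσ, hσ, neg_neg])
  -- Representatives `0`, `k`, `m` of the three orbits of the fixed-point-free involution `σ`.
  obtain ⟨k, hk⟩ : ∃ k, k ∉ ({0, σ 0} : Finset (Fin 6)) := by
    by_contra! h
    have := Finset.card_le_card (fun i _ => h i : Finset.univ ⊆ ({0, σ 0} : Finset (Fin 6)))
    have h2 : ({0, σ 0} : Finset (Fin 6)).card ≤ 2 := Finset.card_le_two
    simp only [Finset.card_univ, Fintype.card_fin] at this
    omega
  obtain ⟨m, hm⟩ : ∃ m, m ∉ ({0, σ 0, k, σ k} : Finset (Fin 6)) := by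
    by_contra! h
    have := Finset.card_le_card
      (fun i _ => h i : Finset.univ ⊆ ({0, σ 0, k, σ k} : Finset (Fin 6)))
    have h2 : ({0, σ 0, k, σ k} : Finset (Fin 6)).card ≤ 4 := Finset.card_le_four
    simp only [Finset.card_univ, Fintype.card_fin] at this
    omega
  simp only [Finset.mem_insert, Finset.mem_singleton, not_or] at hk hm
  obtain ⟨hk1, hk2⟩ := hk
  obtain ⟨hm1, hm2, hm3, hm4⟩ := hm
  have sep : ∀ {i j}, i ≠ j → i ≠ σ j → σ i ≠ j ∧ σ i ≠ σ j := fun {i j} h1 h2 =>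
    ⟨fun h => h2 (by rw [← h, hinv]), fun h => h1 (σ.injective h)⟩
  obtain ⟨hk3, hk4⟩ := sep hk1 hk2
  obtain ⟨hm5, hm6⟩ := sep hm1 hm2
  obtain ⟨hm7, hm8⟩ := sep hm3 hm4
  have e : Function.Bijective ![0, σ 0, k, σ k, m, σ m] := by
    rw [← Finite.injective_iff_bijective]
    have f0 := hfix 0
    have fk := hfix k
    have fm := hfix m
    intro a b hab
    fin_cases a <;> fin_cases b <;> simp at hab ⊢ <;> first
      | exact absurd hab (by assumption)
      | exact absurd hab.symm (by assumption)
  rw [← e.sum_comp (fun i => x i ^ 2), ← e.sum_comp (fun i => x i ^ 4)] at hquartic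
  simp [Fin.sum_univ_succ, hσ] at hquartic
  have key : (x 0 + x k + x m) * (x 0 + x k + x (σ m)) *
      ((x 0 + x (σ k) + x m) * (x 0 + x (σ k) + x (σ m))) = 0 := by
    simp only [hσ]
    linear_combination (-1 / 4) * hquartic
  rcases mul_eq_zero.mp key with h | h <;> rcases mul_eq_zero.mp h with h | h
  · exact ⟨0, k, m, Ne.symm hk1, Ne.symm hm3, Ne.symm hm1, h⟩
  · exact ⟨0, k, σ m, Ne.symm hk1, Ne.symm hm7, Ne.symm hm5, h⟩
  · exact ⟨0, σ k, m, Ne.symm hk3, Ne.symm hm4, Ne.symm hm1, h⟩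
  · exact ⟨0, σ k, σ m, Ne.symm hk3, Ne.symm hm8, Ne.symm hm5, h⟩

theorem fifth_root_case (θ : ℂ) (hθ : IsPrimitiveRoot θ 5) (x : Fin 6 → ℂ)
    (hx : Function.Injective x) (σ : Equiv.Perm (Fin 6)) (lam : ℂ)
    (hlam : ∀ i, x (σ i) = lam * x i) (hl1 : lam ≠ 1) (hl5 : lam ^ 5 = 1)
    (z : Fin 6) (hz : x z = 0) :
    ∃ (τ : Equiv.Perm (Fin 6)) (μ : ℂ), μ ≠ 0 ∧
      ∀ i, x (τ i) = μ * ![0, θ, θ ^ 2, θ ^ 3, θ ^ 4, 1] i := by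
  have : Fact (Nat.Prime 5) := ⟨by norm_num⟩
  have hprim : IsPrimitiveRoot lam 5 := by
    rw [← orderOf_eq_prime hl5 hl1]
    exact IsPrimitiveRoot.orderOf lam
  obtain ⟨y, hy⟩ : ∃ y : Fin 6, y ≠ z := exists_ne z
  have hμ : x y ≠ 0 := fun h => hy (hx (h.trans hz.symm))
  have hpow : ∀ n : ℕ, x ((σ ^ n) y) = lam ^ n * x y := by
    intro n
    induction n with
    | zero => simp
    | succ n ih => rw [pow_succ', Equiv.Perm.mul_apply, hlam, ih]; ring
  have hreach : ∀ m : ℕ, ∃ i, x i = x y * θ ^ m := by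
    intro m
    obtain ⟨n, -, hn⟩ := hprim.eq_pow_of_pow_eq_one
      (show (θ ^ m) ^ 5 = 1 by rw [pow_right_comm, hθ.pow_eq_one, one_pow])
    exact ⟨(σ ^ n) y, by rw [hpow, hn, mul_comm]⟩
  have hall : ∀ i : Fin 6, ∃ j, x j = x y * ![0, θ, θ ^ 2, θ ^ 3, θ ^ 4, 1] i := by
    intro i
    fin_cases i
    · exact ⟨z, by simp [hz]⟩
    · simpa using hreach 1
    · simpa using hreach 2
    · simpa using hreach 3
    · simpa using hreach 4
    · exact ⟨y, by simp⟩
  choose τ hτ using hall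
  have hθ0 : θ ≠ 0 := hθ.ne_zero (by norm_num)
  have hne : ∀ a b : ℕ, a < 5 → b < 5 → a ≠ b → θ ^ a ≠ θ ^ b :=
    fun a b ha hb hab h => hab (hθ.pow_inj ha hb h)
  have hinj : Function.Injective ![0, θ, θ ^ 2, θ ^ 3, θ ^ 4, 1] := by
    have h01 := hne 0 1 (by norm_num) (by norm_num) (by norm_num)
    have h02 := hne 0 2 (by norm_num) (by norm_num) (by norm_num)
    have h03 := hne 0 3 (by norm_num) (by norm_num) (by norm_num)
    have h04 := hne 0 4 (by norm_num) (by norm_num) (by norm_num)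
    have h12 := hne 1 2 (by norm_num) (by norm_num) (by norm_num)
    have h13 := hne 1 3 (by norm_num) (by norm_num) (by norm_num)
    have h14 := hne 1 4 (by norm_num) (by norm_num) (by norm_num)
    have h23 := hne 2 3 (by norm_num) (by norm_num) (by norm_num)
    have h24 := hne 2 4 (by norm_num) (by norm_num) (by norm_num)
    have h34 := hne 3 4 (by norm_num) (by norm_num) (by norm_num)
    rw [pow_zero] at h01 h02 h03 h04
    rw [pow_one] at h01 h12 h13 h14
    have p2 := pow_ne_zero 2 hθ0
    have p3 := pow_ne_zero 3 hθ0
    have p4 := pow_ne_zero 4 hθ0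
    intro a b hab
    fin_cases a <;> fin_cases b <;> first
      | rfl
      | exact absurd hab (by assumption)
      | exact absurd hab.symm (by assumption)
      | exact absurd hab one_ne_zero
      | exact absurd hab.symm one_ne_zero
  have hτinj : Function.Injective τ := by
    intro a b hab
    apply hinj
    apply mul_left_cancel₀ hμ
    rw [← hτ, ← hτ, hab]
  exact ⟨Equiv.ofBijective τ (Finite.injective_iff_bijective.mp hτinj), x y, hμ, hτ⟩

theorem statement14 (θ : ℂ) (hθ : θ = Complex.exp (2 * Real.pi * Complex.I / 5))
    (x : Fin 6 → ℂ) (hx0 : x ≠ 0)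
    (hsum : ∑ i, x i = 0)
    (hquartic : (∑ i, x i ^ 2) ^ 2 = 4 * ∑ i, x i ^ 4)
    (σ : Equiv.Perm (Fin 6)) (hσ : σ ≠ 1)
    (lam : ℂ) (hlam : ∀ i, x (σ i) = lam * x i) :
    (∃ i j, i ≠ j ∧ x i = x j) ∨
    (∃ i j k : Fin 6, i ≠ j ∧ j ≠ k ∧ i ≠ k ∧ x i + x j + x k = 0) ∨
    (∃ (τ : Equiv.Perm (Fin 6)) (μ : ℂ), μ ≠ 0 ∧
      ∀ i, x (τ i) = μ * ![0, θ, θ ^ 2, θ ^ 3, θ ^ 4, 1] i) := by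
  by_cases hx : Function.Injective x
  swap
  · left
    simp only [Function.Injective, not_forall] at hx
    obtain ⟨a, b, hab, hne⟩ := hx
    exact ⟨a, b, hne, hab⟩
  right
  have hl1 : lam ≠ 1 := by
    rintro rfl
    exact hσ (Equiv.ext fun i => hx (by simpa using hlam i))
  by_cases h0 : ∀ i, x i ≠ 0
  · left
    have hl6 : lam ^ 6 = 1 := by
      have hprod := Equiv.prod_comp σ x
      simp only [hlam, Finset.prod_mul_distrib, Finset.prod_const, Finset.card_univ,
        Fintype.card_fin] at hprod
      exact mul_eq_right₀ (Finset.prod_ne_zero_iff.mpr fun i _ => h0 i) |>.mp hprod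
    by_cases hneg : lam = -1
    · exact neg_one_case x hx hquartic σ (fun i => by rw [hlam, hneg, neg_one_mul]) h0
    have hl2 : lam ^ 2 ≠ 1 := fun h => (eq_or_eq_neg_of_sq_eq_sq lam 1 (by rw [h, one_pow])).elim hl1 hneg
    have hc : 1 + lam ^ 2 + lam ^ 4 = 0 := by
      apply mul_left_cancel₀ (sub_ne_zero.mpr hl2)
      linear_combination hl6
    have hl4 : lam ^ 4 ≠ 1 := fun h => hl2 (by linear_combination hl6 - lam ^ 2 * h)
    have e2 : x (σ (σ 0)) = lam ^ 2 * x 0 := by rw [hlam, hlam]; ring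
    have e4 : x (σ (σ (σ (σ 0)))) = lam ^ 4 * x 0 := by rw [hlam, hlam, e2]; ring
    refine ⟨0, σ (σ 0), σ (σ (σ (σ 0))), ?_, ?_, ?_, ?_⟩
    · intro h
      rw [← h] at e2
      exact hl2 (mul_eq_right₀ (h0 0) |>.mp e2.symm)
    · intro h
      rw [← h, e2] at e4
      have := mul_right_cancel₀ (h0 0) e4
      exact hl4 (by linear_combination lam ^ 2 * this + hl6)
    · intro h
      rw [← h] at e4
      exact hl4 (mul_eq_right₀ (h0 0) |>.mp e4.symm)
    · rw [e2, e4]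
      linear_combination x 0 * hc
  · right
    push Not at h0
    obtain ⟨z, hz⟩ := h0
    have hne : ∀ i, i ≠ z → x i ≠ 0 := fun i hi h => hi (hx (h.trans hz.symm))
    have hσz : σ z = z := hx (by rw [hlam, hz, mul_zero])
    have hl5 : lam ^ 5 = 1 := by
      -- The coordinates of `x` with the vanishing one replaced by `1`.
      have hprod := Equiv.prod_comp σ (fun i => if i = z then 1 else x i)
      have hstep : ∀ i, (if σ i = z then 1 else x (σ i)) =
          (if i = z then 1 else lam) * (if i = z then 1 else x i) := by
        intro i
        by_cases hi : i = z
        · simp [hi, hσz]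
        · have : σ i ≠ z := fun h => hi (σ.injective (h.trans hσz.symm))
          simp [hi, this, hlam]
      simp only [hstep, Finset.prod_mul_distrib] at hprod
      have h1 := mul_eq_right₀ (Finset.prod_ne_zero_iff.mpr fun i _ => by
        by_cases hi : i = z
        · simp [hi]
        · simpa [hi] using hne i hi) |>.mp hprod
      rw [← h1, Finset.prod_ite]
      simp [Finset.filter_ne', Finset.card_erase_of_mem]
    refine fifth_root_case θ ?_ x hx σ lam hlam hl1 hl5 z hz
    rw [hθ]
    simpa using Complex.isPrimitiveRoot_exp 5 (by norm_num)
end
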